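/- arXiv:2206.11735 — 6 statements merged into one kernel-verified Lean document; each statement's English description precedes it below -/
import Mathlib

section
/- Suppose the Riccati equation Π'(t) = −A(t)ᵀΠ − ΠA(t) + ΠB(t)B(t)ᵀΠ − Q(t) has a symmetric solution Π on [0,1]. Then for all s, t ∈ [0,1], the state transition matrix of the closed-loop matrix A(t) − B(t)B(t)ᵀΠ(t) is given by Φ_{A−BBᵀΠ}(t,s) = Φ₁₁(t,s) + Φ₁₂(t,s)Π(s); that is, for each fixed s the map t ↦ Φ₁₁(t,s) + Φ₁₂(t,s)Π(s) solves X'(t) = (A(t) − B(t)B(t)ᵀΠ(t))X(t) with X(s) = Iₙ. -/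
/-!
Put `X = Φ₁₁(·,s) + Φ₁₂(·,s) P(s)` and `Y = Φ₂₁(·,s) + Φ₂₂(·,s) P(s)`. The pair `(X, Y)` solves the
Hamiltonian system `X' = A X - B Bᵀ Y`, `Y' = -Q X - Aᵀ Y` with `X(s) = 1`, `Y(s) = P(s)`. By the
Riccati equation, the defect `D = Y - P X` satisfies the linear homogeneous equation
`D' = (P B Bᵀ - Aᵀ) D` on `[0,1]`, and `D(s) = 0`; uniqueness of solutions
(`linear_ode_eq_zero`, applied to each column of `D`) gives `D = 0`, that is `Y = P X`. Substituting
this in the equation for `X` yields the closed-loop equation.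
-/

open Matrix

/-- `IsSTM F Φ`: `Φ` is the state transition matrix of `F`, i.e. for each fixed `s`,
`t ↦ Φ t s` solves `X' = F t * X`, `X s = 1` (derivatives taken entrywise). -/
def IsSTM {ι : Type*} [Fintype ι] [DecidableEq ι] (F : ℝ → Matrix ι ι ℝ)
    (Φ : ℝ → ℝ → Matrix ι ι ℝ) : Prop :=
  (∀ s : ℝ, Φ s s = 1) ∧
  ∀ (s t : ℝ) (i j : ι), HasDerivAt (fun t' : ℝ => Φ t' s i j) ((F t * Φ t s) i j) t

open scoped Matrix.Norms.Operator in
/-- A solution on `[0,1]` of a homogeneous linear equation with continuous coefficients that vanishes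
at one point `s` of `[0,1]`, possibly an endpoint, vanishes on all of `[0,1]`. -/
theorem linear_ode_eq_zero {n : ℕ} (K : ℝ → Matrix (Fin n) (Fin n) ℝ)
    (hK : ContinuousOn K (Set.Icc 0 1)) (d : ℝ → Fin n → ℝ)
    (hd : ∀ t ∈ Set.Icc (0:ℝ) 1, HasDerivWithinAt d (K t *ᵥ d t) (Set.Icc 0 1) t)
    (s : ℝ) (hs : s ∈ Set.Icc (0:ℝ) 1) (h0 : d s = 0) :
    ∀ t ∈ Set.Icc (0:ℝ) 1, d t = 0 := by
  obtain ⟨C, hC⟩ := isCompact_Icc.exists_bound_of_continuousOn hK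
  have hlip : ∀ t ∈ Set.Icc (0:ℝ) 1,
      LipschitzOnWith C.toNNReal (fun x : Fin n → ℝ => K t *ᵥ x) Set.univ := by
    intro t ht
    refine LipschitzOnWith.of_dist_le_mul fun x _ y _ => ?_
    rw [dist_eq_norm, dist_eq_norm, ← Matrix.mulVec_sub]
    refine (Matrix.linfty_opNorm_mulVec _ _).trans ?_
    gcongr
    exact (hC t ht).trans (Real.le_coe_toNNReal C)
  have hcont : ContinuousOn d (Set.Icc 0 1) := fun t ht => (hd t ht).continuousWithinAt
  have hzero : ∀ t (S : Set ℝ),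
      HasDerivWithinAt (fun _ : ℝ => (0 : Fin n → ℝ)) (K t *ᵥ 0) S t := by
    intro t S
    rw [Matrix.mulVec_zero]
    exact hasDerivWithinAt_const _ _ _
  intro t ht
  rcases le_total s t with hst | hts
  · refine ODE_solution_unique_of_mem_Icc_right (v := fun t x => K t *ᵥ x) (s := fun _ => Set.univ)
      (f := d) (g := fun _ => 0) (a := s) (b := 1) (fun t ht => hlip t ⟨hs.1.trans ht.1, ht.2.le⟩)
      (hcont.mono (Set.Icc_subset_Icc_left hs.1)) (fun t ht => ?_) (fun _ _ => trivial)
      continuousOn_const (fun t _ => hzero t _) (fun _ _ => trivial) h0 ⟨hst, ht.2⟩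
    have h1 := hs.1.trans ht.1
    exact (hd t ⟨h1, ht.2.le⟩).mono_of_mem_nhdsWithin
      (Filter.mem_of_superset (Icc_mem_nhdsGE ht.2) (Set.Icc_subset_Icc_left h1))
  · refine ODE_solution_unique_of_mem_Icc_left (v := fun t x => K t *ᵥ x) (s := fun _ => Set.univ)
      (f := d) (g := fun _ => 0) (a := 0) (b := s) (fun t ht => hlip t ⟨ht.1.le, ht.2.trans hs.2⟩)
      (hcont.mono (Set.Icc_subset_Icc_right hs.2)) (fun t ht => ?_) (fun _ _ => trivial)
      continuousOn_const (fun t _ => hzero t _) (fun _ _ => trivial) h0 ⟨ht.1, hts⟩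
    have h1 := ht.2.trans hs.2
    exact (hd t ⟨ht.1.le, h1⟩).mono_of_mem_nhdsWithin
      (Filter.mem_of_superset (Icc_mem_nhdsLE ht.1) (Set.Icc_subset_Icc_right h1))

/-- Entrywise product rule for matrix-valued functions. -/
theorem hasDerivWithinAt_matrix_mul_apply {l m n : ℕ} {S : Set ℝ} {t : ℝ}
    {F : ℝ → Matrix (Fin l) (Fin m) ℝ} {G : ℝ → Matrix (Fin m) (Fin n) ℝ}
    {F' : Matrix (Fin l) (Fin m) ℝ} {G' : Matrix (Fin m) (Fin n) ℝ}
    (hF : ∀ i j, HasDerivWithinAt (fun τ => F τ i j) (F' i j) S t)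
    (hG : ∀ i j, HasDerivWithinAt (fun τ => G τ i j) (G' i j) S t) (i : Fin l) (j : Fin n) :
    HasDerivWithinAt (fun τ => (F τ * G τ) i j) ((F' * G t + F t * G') i j) S t := by
  simp only [Matrix.add_apply, Matrix.mul_apply, ← Finset.sum_add_distrib]
  exact HasDerivWithinAt.fun_sum fun k _ => (hF i k).mul (hG k j)

theorem stmt_8 {n p : ℕ} (hn : 1 ≤ n) (hp : 1 ≤ p)
    (A Q : ℝ → Matrix (Fin n) (Fin n) ℝ) (B : ℝ → Matrix (Fin n) (Fin p) ℝ)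
    (hA : Continuous A) (hB : Continuous B) (hQ : Continuous Q)
    (hQpsd : ∀ t, (Q t).PosSemidef)
    (Φ : ℝ → ℝ → Matrix (Fin n ⊕ Fin n) (Fin n ⊕ Fin n) ℝ)
    (hΦ : IsSTM (fun t => fromBlocks (A t) (-(B t * (B t)ᵀ)) (-(Q t)) (-(A t)ᵀ)) Φ)
    (P : ℝ → Matrix (Fin n) (Fin n) ℝ)
    (hPsym : ∀ t ∈ Set.Icc (0:ℝ) 1, (P t)ᵀ = P t)
    (hPric : ∀ t ∈ Set.Icc (0:ℝ) 1, ∀ (i j : Fin n),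
      HasDerivWithinAt (fun τ : ℝ => P τ i j)
        ((-(A t)ᵀ * P t - P t * A t + P t * (B t * (B t)ᵀ) * P t - Q t) i j)
        (Set.Icc (0:ℝ) 1) t)
    (s : ℝ) (hs : s ∈ Set.Icc (0:ℝ) 1) :
    (Φ s s).toBlocks₁₁ + (Φ s s).toBlocks₁₂ * P s = 1 ∧
    ∀ t ∈ Set.Icc (0:ℝ) 1, ∀ (i j : Fin n),
      HasDerivWithinAt
        (fun τ : ℝ => ((Φ τ s).toBlocks₁₁ + (Φ τ s).toBlocks₁₂ * P s) i j)
        (((A t - B t * (B t)ᵀ * P t) *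
          ((Φ t s).toBlocks₁₁ + (Φ t s).toBlocks₁₂ * P s)) i j)
        (Set.Icc (0:ℝ) 1) t := by
  obtain ⟨hone, hder⟩ := hΦ
  have hss : (Φ s s).toBlocks₁₁ + (Φ s s).toBlocks₁₂ * P s = 1 := by
    rw [hone s, ← fromBlocks_one, toBlocks_fromBlocks₁₁, toBlocks_fromBlocks₁₂, zero_mul, add_zero]
  have hYs : (Φ s s).toBlocks₂₁ + (Φ s s).toBlocks₂₂ * P s = P s := by
    rw [hone s, ← fromBlocks_one, toBlocks_fromBlocks₂₁, toBlocks_fromBlocks₂₂, one_mul, zero_add]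
  refine ⟨hss, ?_⟩
  set X : ℝ → Matrix (Fin n) (Fin n) ℝ :=
    fun τ => (Φ τ s).toBlocks₁₁ + (Φ τ s).toBlocks₁₂ * P s with hX
  set Y : ℝ → Matrix (Fin n) (Fin n) ℝ :=
    fun τ => (Φ τ s).toBlocks₂₁ + (Φ τ s).toBlocks₂₂ * P s with hY
  have hMΦ : ∀ t, fromBlocks (A t) (-(B t * (B t)ᵀ)) (-(Q t)) (-(A t)ᵀ) * Φ t s =
      fromBlocks
        (A t * (Φ t s).toBlocks₁₁ + -(B t * (B t)ᵀ) * (Φ t s).toBlocks₂₁)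
        (A t * (Φ t s).toBlocks₁₂ + -(B t * (B t)ᵀ) * (Φ t s).toBlocks₂₂)
        (-(Q t) * (Φ t s).toBlocks₁₁ + -(A t)ᵀ * (Φ t s).toBlocks₂₁)
        (-(Q t) * (Φ t s).toBlocks₁₂ + -(A t)ᵀ * (Φ t s).toBlocks₂₂) := by
    intro t
    conv_lhs => rw [← fromBlocks_toBlocks (Φ t s)]
    rw [fromBlocks_multiply]
  have hconst : ∀ (t : ℝ) (S : Set ℝ) (i j : Fin n),
      HasDerivWithinAt (fun _ : ℝ => P s i j) ((0 : Matrix (Fin n) (Fin n) ℝ) i j) S t :=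
    fun t S i j => hasDerivWithinAt_const _ _ _
  have hX' : ∀ t (i j : Fin n), HasDerivWithinAt (fun τ => X τ i j)
      ((A t * X t - B t * (B t)ᵀ * Y t) i j) (Set.Icc 0 1) t := by
    intro t i j
    have h := fun a b => (hder s t a b).hasDerivWithinAt (s := Set.Icc (0:ℝ) 1)
    simp only [hMΦ] at h
    have h12 := hasDerivWithinAt_matrix_mul_apply (F := fun τ => (Φ τ s).toBlocks₁₂)
      (G := fun _ => P s) (fun a b => h (Sum.inl a) (Sum.inr b)) (hconst t _) i j
    refine ((h (Sum.inl i) (Sum.inl j)).add h12).congr_deriv ?_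
    change ((A t * (Φ t s).toBlocks₁₁ + -(B t * (B t)ᵀ) * (Φ t s).toBlocks₂₁) +
      ((A t * (Φ t s).toBlocks₁₂ + -(B t * (B t)ᵀ) * (Φ t s).toBlocks₂₂) * P s +
        (Φ t s).toBlocks₁₂ * 0) : Matrix (Fin n) (Fin n) ℝ) i j = _
    refine congrFun (congrFun ?_ i) j
    simp only [hX, hY]
    noncomm_ring
  have hY' : ∀ t (i j : Fin n), HasDerivWithinAt (fun τ => Y τ i j)
      ((-(Q t) * X t - (A t)ᵀ * Y t) i j) (Set.Icc 0 1) t := by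
    intro t i j
    have h := fun a b => (hder s t a b).hasDerivWithinAt (s := Set.Icc (0:ℝ) 1)
    simp only [hMΦ] at h
    have h22 := hasDerivWithinAt_matrix_mul_apply (F := fun τ => (Φ τ s).toBlocks₂₂)
      (G := fun _ => P s) (fun a b => h (Sum.inr a) (Sum.inr b)) (hconst t _) i j
    refine ((h (Sum.inr i) (Sum.inl j)).add h22).congr_deriv ?_
    change ((-(Q t) * (Φ t s).toBlocks₁₁ + -(A t)ᵀ * (Φ t s).toBlocks₂₁) +
      ((-(Q t) * (Φ t s).toBlocks₁₂ + -(A t)ᵀ * (Φ t s).toBlocks₂₂) * P s +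
        (Φ t s).toBlocks₂₂ * 0) : Matrix (Fin n) (Fin n) ℝ) i j = _
    refine congrFun (congrFun ?_ i) j
    simp only [hX, hY]
    noncomm_ring
  have hD' : ∀ t ∈ Set.Icc (0:ℝ) 1, ∀ i j : Fin n,
      HasDerivWithinAt (fun τ => (Y τ - P τ * X τ) i j)
        (((P t * (B t * (B t)ᵀ) - (A t)ᵀ) * (Y t - P t * X t)) i j) (Set.Icc 0 1) t := by
    intro t ht i j
    refine ((hY' t i j).sub (hasDerivWithinAt_matrix_mul_apply (hPric t ht) (hX' t) i j)).congr_deriv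
      ?_
    rw [← Matrix.sub_apply]
    refine congrFun (congrFun ?_ i) j
    generalize B t * (B t)ᵀ = R
    noncomm_ring
  have hPcont : ContinuousOn P (Set.Icc 0 1) :=
    continuousOn_pi.2 fun i => continuousOn_pi.2 fun j => fun t ht =>
      (hPric t ht i j).continuousWithinAt
  have hKcont : ContinuousOn (fun t => P t * (B t * (B t)ᵀ) - (A t)ᵀ) (Set.Icc 0 1) :=
    (hPcont.mul (hB.matrix_mul hB.matrix_transpose).continuousOn).sub
      hA.matrix_transpose.continuousOn
  have hYX : ∀ t ∈ Set.Icc (0:ℝ) 1, Y t = P t * X t := by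
    intro t ht
    ext i j
    have h := linear_ode_eq_zero _ hKcont (fun τ i => (Y τ - P τ * X τ) i j)
      (fun τ hτ => hasDerivWithinAt_pi.2 fun i => hD' τ hτ i j) s hs
      (by
        funext i
        have e : Y s - P s * X s = 0 := by
          change (Φ s s).toBlocks₂₁ + (Φ s s).toBlocks₂₂ * P s - P s *
            ((Φ s s).toBlocks₁₁ + (Φ s s).toBlocks₁₂ * P s) = 0
          rw [hYs, hss, mul_one, sub_self]
        simp only [e]
        rfl) t ht
    have hi := congrFun h i
    simp only [Matrix.sub_apply, Pi.zero_apply] at hi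
    exact sub_eq_zero.1 hi
  intro t ht i j
  refine (hX' t i j).congr_deriv ?_
  rw [hYX t ht]
  refine congrFun (congrFun ?_ i) j
  change A t * X t - B t * (B t)ᵀ * (P t * X t) = (A t - B t * (B t)ᵀ * P t) * X t
  rw [sub_mul, Matrix.mul_assoc (B t * (B t)ᵀ)]
end

section
/- Suppose the Riccati equation Π'(t) = −A(t)ᵀΠ − ΠA(t) + ΠB(t)R(t)⁻¹B(t)ᵀΠ − Q(t) has a symmetric solution Π on an interval I, and let Φ_Π(t,s) denote the state transition matrix of A(t) − B(t)R(t)⁻¹B(t)ᵀΠ(t). Then for all t, s ∈ I, ∫ₛᵗ Φ_Π(t,τ) B(τ)R(τ)⁻¹B(τ)ᵀ Φ_Π(t,τ)ᵀ dτ = −Φ₁₂(t,s)Φ_Π(t,s)ᵀ. -/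
/-!
Write `S = B R⁻¹ Bᵀ`, `G = A - S P`, and let `X`, `Y` be the blocks `Φ₁₂(·, s)`, `Φ₂₂(·, s)`,
so that `X' = A X - S Y`, `Y' = -Q X - Aᵀ Y`, `X(s) = 0`, `Y(s) = 1`.  By the Riccati equation,
`Z = Y - P X` satisfies the adjoint equation `Z' = -Gᵀ Z` with `Z(s) = 1`, and
`X' = G X - S Z`.  Hence `Zᵀ(σ) Φ_P(σ, τ)` does not depend on `σ`, which gives
`Zᵀ(t) Φ_P(t, s) = 1` and `Φ_P(t, τ) = Φ_P(t, s) Z(τ)ᵀ`.  The integrand is therefore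
`Φ_P(t, s) (Zᵀ S Z)(τ) Φ_P(t, s)ᵀ`, and `(Zᵀ X)' = -Zᵀ S Z`, so the fundamental theorem of
calculus yields `-Φ_P(t, s) Z(t)ᵀ X(t) Φ_P(t, s)ᵀ = -X(t) Φ_P(t, s)ᵀ`.

Only derivatives within `I` are available, so everything is done with entrywise
derivatives within `I` (`EntryDeriv`); `I` may be a single point.
-/

open Matrix

/-- The matrix function `X` has entrywise derivative `X'` at `t` within the set `I`. -/
def EntryDeriv {a b : Type*} (X : ℝ → Matrix a b ℝ) (X' : Matrix a b ℝ) (I : Set ℝ) (t : ℝ) :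
    Prop :=
  ∀ i j, HasDerivWithinAt (fun τ => X τ i j) (X' i j) I t

namespace EntryDeriv

variable {a b c : Type*} {I : Set ℝ} {t : ℝ}

lemma mul [Fintype b] {X : ℝ → Matrix a b ℝ} {Y : ℝ → Matrix b c ℝ}
    {X' : Matrix a b ℝ} {Y' : Matrix b c ℝ}
    (hX : EntryDeriv X X' I t) (hY : EntryDeriv Y Y' I t) :
    EntryDeriv (fun τ => X τ * Y τ) (X' * Y t + X t * Y') I t := by
  intro i j
  simp only [Matrix.mul_apply, Matrix.add_apply, ← Finset.sum_add_distrib]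
  exact HasDerivWithinAt.fun_sum fun k _ => (hX i k).mul (hY k j)

lemma sub {X Y : ℝ → Matrix a b ℝ} {X' Y' : Matrix a b ℝ}
    (hX : EntryDeriv X X' I t) (hY : EntryDeriv Y Y' I t) :
    EntryDeriv (fun τ => X τ - Y τ) (X' - Y') I t :=
  fun i j => (hX i j).sub (hY i j)

lemma transpose {X : ℝ → Matrix a b ℝ} {X' : Matrix a b ℝ} (hX : EntryDeriv X X' I t) :
    EntryDeriv (fun τ => (X τ)ᵀ) X'ᵀ I t :=
  fun i j => hX j i

lemma const (C : Matrix a b ℝ) : EntryDeriv (fun _ => C) 0 I t :=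
  fun i j => hasDerivWithinAt_const t I (C i j)

lemma continuousOn {X : ℝ → Matrix a b ℝ} {X' : ℝ → Matrix a b ℝ}
    (hX : ∀ t ∈ I, EntryDeriv X (X' t) I t) : ContinuousOn X I :=
  continuousOn_pi.2 fun i => continuousOn_pi.2 fun j t ht => (hX t ht i j).continuousWithinAt

lemma eq_of_zero (hI : I.OrdConnected) {X : ℝ → Matrix a b ℝ}
    (hX : ∀ t ∈ I, EntryDeriv X 0 I t) {u v : ℝ} (hu : u ∈ I) (hv : v ∈ I) : X v = X u := by
  ext i j
  have h := hI.convex.norm_image_sub_le_of_norm_hasDerivWithin_le (C := 0)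
    (fun t ht => hX t ht i j) (by simp) hu hv
  simpa [sub_eq_zero] using h

end EntryDeriv

/-- The fundamental theorem of calculus, entrywise. -/
lemma integral_entry {a b : Type*} {I : Set ℝ} (hI : I.OrdConnected) {X X' : ℝ → Matrix a b ℝ}
    (hX : ∀ t ∈ I, EntryDeriv X (X' t) I t) (hc : ContinuousOn X' I) {s t : ℝ}
    (hs : s ∈ I) (ht : t ∈ I) (i : a) (j : b) :
    ∫ τ in s..t, X' τ i j = X t i j - X s i j := by
  have hsub : Set.uIcc s t ⊆ I := hI.uIcc_subset hs ht
  refine intervalIntegral.integral_eq_sub_of_hasDeriv_right (f := fun τ => X τ i j) ?_ ?_ ?_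
  · exact fun τ hτ => ((hX τ (hsub hτ) i j).continuousWithinAt).mono hsub
  · intro τ hτ
    have hI' : I ∈ nhds τ :=
      Filter.mem_of_superset (Icc_mem_nhds hτ.1 hτ.2) hsub
    exact ((hX τ (mem_of_mem_nhds hI') i j).hasDerivAt hI').hasDerivWithinAt
  · exact ((continuousOn_pi.1 (continuousOn_pi.1 hc i) j).mono hsub).intervalIntegrable

lemma continuous_inv_posDef {p : ℕ} {R : ℝ → Matrix (Fin p) (Fin p) ℝ} (hR : Continuous R)
    (hRpd : ∀ t, (R t).PosDef) : Continuous fun t => (R t)⁻¹ := by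
  simp only [Matrix.inv_def, Ring.inverse_eq_inv']
  exact (hR.matrix_det.inv₀ fun t => (hRpd t).det_pos.ne').smul hR.matrix_adjugate

theorem stmt_9 {n p : ℕ} (hn : 1 ≤ n) (hp : 1 ≤ p)
    (A Q : ℝ → Matrix (Fin n) (Fin n) ℝ) (B : ℝ → Matrix (Fin n) (Fin p) ℝ)
    (R : ℝ → Matrix (Fin p) (Fin p) ℝ)
    (hA : Continuous A) (hB : Continuous B) (hQ : Continuous Q) (hR : Continuous R)
    (hQpsd : ∀ t, (Q t).PosSemidef) (hRpd : ∀ t, (R t).PosDef)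
    (Φ : ℝ → ℝ → Matrix (Fin n ⊕ Fin n) (Fin n ⊕ Fin n) ℝ)
    (hΦ : IsSTM (fun t => fromBlocks (A t) (-(B t * (R t)⁻¹ * (B t)ᵀ))
      (-(Q t)) (-(A t)ᵀ)) Φ)
    (I : Set ℝ) (hI : I.OrdConnected)
    (P : ℝ → Matrix (Fin n) (Fin n) ℝ)
    (hPsym : ∀ t ∈ I, (P t)ᵀ = P t)
    (hPric : ∀ t ∈ I, ∀ (i j : Fin n),
      HasDerivWithinAt (fun τ : ℝ => P τ i j)
        ((-(A t)ᵀ * P t - P t * A t + P t * (B t * (R t)⁻¹ * (B t)ᵀ) * P t - Q t) i j)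
        I t)
    (ΦP : ℝ → ℝ → Matrix (Fin n) (Fin n) ℝ)
    (hΦP : ∀ s ∈ I, ΦP s s = 1 ∧
      ∀ t ∈ I, ∀ (i j : Fin n),
        HasDerivWithinAt (fun τ : ℝ => ΦP τ s i j)
          (((A t - B t * (R t)⁻¹ * (B t)ᵀ * P t) * ΦP t s) i j) I t) :
    ∀ t ∈ I, ∀ s ∈ I, ∀ (i j : Fin n),
      (∫ τ in s..t, (ΦP t τ * (B τ * (R τ)⁻¹ * (B τ)ᵀ) * (ΦP t τ)ᵀ) i j) =
        (-((Φ t s).toBlocks₁₂ * (ΦP t s)ᵀ)) i j := by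
  intro t ht s hs i j
  obtain ⟨hΦ1, hΦd⟩ := hΦ
  set S : ℝ → Matrix (Fin n) (Fin n) ℝ := fun τ => B τ * (R τ)⁻¹ * (B τ)ᵀ with hS
  have hSc : Continuous S :=
    (hB.matrix_mul (continuous_inv_posDef hR hRpd)).matrix_mul hB.matrix_transpose
  have hSsym : ∀ τ, (S τ)ᵀ = S τ := fun τ => by
    have h : ((R τ)⁻¹)ᵀ = (R τ)⁻¹ := by
      have := (hRpd τ).isHermitian.inv
      rwa [Matrix.IsHermitian, Matrix.conjTranspose_eq_transpose_of_trivial] at this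
    simp [hS, Matrix.transpose_mul, h, Matrix.mul_assoc]
  let X : ℝ → Matrix (Fin n) (Fin n) ℝ := fun τ => (Φ τ s).toBlocks₁₂
  let Y : ℝ → Matrix (Fin n) (Fin n) ℝ := fun τ => (Φ τ s).toBlocks₂₂
  let Z : ℝ → Matrix (Fin n) (Fin n) ℝ := fun τ => Y τ - P τ * X τ
  let G : ℝ → Matrix (Fin n) (Fin n) ℝ := fun τ => A τ - S τ * P τ
  have hX : ∀ τ, EntryDeriv X (A τ * X τ - S τ * Y τ) I τ := by
    intro τ k l
    refine (hΦd s τ (Sum.inl k) (Sum.inr l)).hasDerivWithinAt.congr_deriv ?_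
    simp [X, Y, Matrix.mul_apply, Matrix.toBlocks₁₂, Matrix.toBlocks₂₂, sub_eq_add_neg, S]
  have hY : ∀ τ, EntryDeriv Y (-(Q τ) * X τ - (A τ)ᵀ * Y τ) I τ := by
    intro τ k l
    refine (hΦd s τ (Sum.inr k) (Sum.inr l)).hasDerivWithinAt.congr_deriv ?_
    simp [X, Y, Matrix.mul_apply, Matrix.toBlocks₁₂, Matrix.toBlocks₂₂, sub_eq_add_neg]
  have hXs : X s = 0 := by
    ext k l
    simp [X, hΦ1, Matrix.toBlocks₁₂]
  have hYs : Y s = 1 := by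
    ext k l
    simp [Y, hΦ1, Matrix.toBlocks₂₂, Matrix.one_apply]
  have hZs : Z s = 1 := by simp [Z, hXs, hYs]
  have hGt : ∀ τ ∈ I, (G τ)ᵀ = (A τ)ᵀ - P τ * S τ := fun τ hτ => by
    simp [G, Matrix.transpose_sub, Matrix.transpose_mul, hSsym, hPsym τ hτ]
  have hZ : ∀ τ ∈ I, EntryDeriv Z (-((G τ)ᵀ * Z τ)) I τ := by
    intro τ hτ
    have h := (hY τ).sub (EntryDeriv.mul (hPric τ hτ) (hX τ))
    convert h using 1
    rw [hGt τ hτ]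
    simp only [Z]
    noncomm_ring
  have hZt : ∀ τ ∈ I, EntryDeriv (fun σ => (Z σ)ᵀ) (-((Z τ)ᵀ * G τ)) I τ := by
    intro τ hτ
    simpa [Matrix.transpose_mul] using (hZ τ hτ).transpose
  -- `Zᵀ(σ) Φ_P(σ, τ)` is independent of `σ`.
  have hinv : ∀ τ ∈ I, (Z t)ᵀ * ΦP t τ = (Z τ)ᵀ := by
    intro τ hτ
    have h : ∀ σ ∈ I, EntryDeriv (fun σ => (Z σ)ᵀ * ΦP σ τ) 0 I σ := by
      intro σ hσ
      have h := EntryDeriv.mul (hZt σ hσ) ((hΦP τ hτ).2 σ hσ)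
      convert h using 1
      simp only [G, S]
      noncomm_ring
    have h' := EntryDeriv.eq_of_zero hI h hτ ht
    simpa [(hΦP τ hτ).1] using h'
  have hone : ΦP t s * (Z t)ᵀ = 1 := by
    have h := hinv s hs
    rw [hZs, Matrix.transpose_one] at h
    exact mul_eq_one_comm.1 h
  have hfac : ∀ τ ∈ I, ΦP t τ = ΦP t s * (Z τ)ᵀ := fun τ hτ => by
    rw [← hinv τ hτ, ← Matrix.mul_assoc, hone, Matrix.one_mul]
  have hZX : ∀ τ ∈ I, EntryDeriv (fun σ => (Z σ)ᵀ * X σ) (-((Z τ)ᵀ * S τ * Z τ)) I τ := by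
    intro τ hτ
    convert (hZt τ hτ).mul (hX τ) using 1
    have : Y τ = Z τ + P τ * X τ := by simp [Z]
    rw [this]
    simp only [G]
    noncomm_ring
  have hW : ∀ τ ∈ I, EntryDeriv (fun σ => -ΦP t s * ((Z σ)ᵀ * X σ) * (ΦP t s)ᵀ)
      (ΦP t s * ((Z τ)ᵀ * S τ * Z τ) * (ΦP t s)ᵀ) I τ := by
    intro τ hτ
    convert ((EntryDeriv.const (-ΦP t s)).mul (hZX τ hτ)).mul
      (EntryDeriv.const (ΦP t s)ᵀ) using 1
    noncomm_ring
  have hZc : ContinuousOn Z I := EntryDeriv.continuousOn hZ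
  have hWc : ContinuousOn
      (fun τ => ΦP t s * ((Z τ)ᵀ * S τ * Z τ) * (ΦP t s)ᵀ) I := by
    have hZtc : ContinuousOn (fun τ => (Z τ)ᵀ) I := EntryDeriv.continuousOn hZt
    have hSc' := hSc.continuousOn (s := I)
    exact (continuousOn_const.mul ((hZtc.mul hSc').mul hZc)).mul continuousOn_const
  have hint := integral_entry hI hW hWc hs ht i j
  rw [intervalIntegral.integral_congr (g := fun τ =>
    (ΦP t s * ((Z τ)ᵀ * S τ * Z τ) * (ΦP t s)ᵀ) i j), hint]
  · have h : -ΦP t s * ((Z t)ᵀ * X t) * (ΦP t s)ᵀ = -(X t * (ΦP t s)ᵀ) := by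
      rw [← Matrix.mul_assoc, Matrix.neg_mul, hone]
      simp
    rw [h, hXs]
    simp [X]
  · intro τ hτ
    have hτI := hI.uIcc_subset hs ht hτ
    simp only [hfac τ hτI, Matrix.transpose_mul, Matrix.transpose_transpose, Matrix.mul_assoc, S]
end

section
/- Suppose the Riccati equation Π'(t) = −A(t)ᵀΠ − ΠA(t) + ΠB(t)B(t)ᵀΠ − Q(t) has a symmetric solution Π on [0,1], and let Σ : [0,1] → ℝ^{n×n} solve the Lyapunov differential equation Σ'(t) = (A(t) − B(t)B(t)ᵀΠ(t))Σ(t) + Σ(t)(A(t) − B(t)B(t)ᵀΠ(t))ᵀ + C(t)D(t)C(t)ᵀ with Σ(0) = Σ₀, where Σ₀ is symmetric positive semidefinite. Then for all t ∈ [0,1], Σ(t) = Φ_cl(t,0)Σ₀Φ_cl(t,0)ᵀ + ∫₀ᵗ Φ_cl(t,s) C(s)D(s)C(s)ᵀ Φ_cl(t,s)ᵀ ds, where Φ_cl(t,s) = Φ₁₁(t,s) + Φ₁₂(t,s)Π(s). -/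
/-!
Fix `t`. Since the Hamiltonian matrix `M` satisfies `Mᵀ J + J M = 0` for the standard symplectic
form `J`, the matrix `Φ(τ,t)ᵀ J Φ(τ,s)` does not depend on `τ`; comparing `τ = s` with `τ = t`
gives `Φ(s,t)ᵀ J = J Φ(t,s)` (`stm_symplectic`). Hence `Φ₁₁(t,s) = Φ₂₂(s,t)ᵀ` and
`Φ₁₂(t,s) = -Φ₁₂(s,t)ᵀ`, so that `Ψ(s) = Φ_cl(t,s) = Φ₂₂(s,t)ᵀ - Φ₁₂(s,t)ᵀ Π(s)` can be
differentiated in `s` by means of the equations defining `Φ` and `Π` alone.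
The Riccati equation yields `Ψ' = -Ψ (A - B Bᵀ Π)`, and with the Lyapunov equation
`(Ψ Σ Ψᵀ)' = Ψ C D Cᵀ Ψᵀ`. Integrating over `[0,t]` and using `Ψ(t) = I` gives the formula.
-/

open Matrix

/-- Entrywise derivative of a matrix-valued function within a set; working with entries avoids
choosing a norm on matrices. -/
def HasMatDeriv {ι κ : Type*} (X : ℝ → Matrix ι κ ℝ) (X' : Matrix ι κ ℝ) (s : Set ℝ)
    (t : ℝ) : Prop :=
  ∀ i j, HasDerivWithinAt (fun τ => X τ i j) (X' i j) s t

namespace HasMatDeriv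

variable {ι κ l : Type*} {s : Set ℝ} {t : ℝ}

lemma mul [Fintype κ] {X : ℝ → Matrix ι κ ℝ} {Y : ℝ → Matrix κ l ℝ}
    {X' : Matrix ι κ ℝ} {Y' : Matrix κ l ℝ}
    (hX : HasMatDeriv X X' s t) (hY : HasMatDeriv Y Y' s t) :
    HasMatDeriv (fun τ => X τ * Y τ) (X' * Y t + X t * Y') s t := by
  intro i j
  simp only [Matrix.mul_apply, Matrix.add_apply, ← Finset.sum_add_distrib]
  exact HasDerivWithinAt.fun_sum fun k _ => (hX i k).mul (hY k j)

lemma transpose {X : ℝ → Matrix ι κ ℝ} {X' : Matrix ι κ ℝ} (hX : HasMatDeriv X X' s t) :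
    HasMatDeriv (fun τ => (X τ)ᵀ) X'ᵀ s t := fun i j => hX j i

lemma sub {X Y : ℝ → Matrix ι κ ℝ} {X' Y' : Matrix ι κ ℝ} (hX : HasMatDeriv X X' s t)
    (hY : HasMatDeriv Y Y' s t) : HasMatDeriv (fun τ => X τ - Y τ) (X' - Y') s t :=
  fun i j => (hX i j).sub (hY i j)

lemma const (X : Matrix ι κ ℝ) : HasMatDeriv (fun _ => X) 0 s t :=
  fun _ _ => hasDerivWithinAt_const _ _ _

lemma continuousWithinAt {X : ℝ → Matrix ι κ ℝ} {X' : Matrix ι κ ℝ}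
    (hX : HasMatDeriv X X' s t) : ContinuousWithinAt X s t :=
  continuousWithinAt_pi.2 fun i => continuousWithinAt_pi.2 fun j => (hX i j).continuousWithinAt

end HasMatDeriv

/-- If `Mᵀ J + J M = 0` then `Φ(τ,t)ᵀ J Φ(τ,s)` is independent of `τ`; this is the equality of
its values at `τ = s` and `τ = t`. -/
lemma stm_symplectic {ι : Type*} [Fintype ι] [DecidableEq ι] {M : ℝ → Matrix ι ι ℝ}
    {Φ : ℝ → ℝ → Matrix ι ι ℝ} (hΦ : IsSTM M Φ) (J : Matrix ι ι ℝ)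
    (hJ : ∀ τ, (M τ)ᵀ * J + J * M τ = 0) (t s : ℝ) :
    (Φ s t)ᵀ * J = J * Φ t s := by
  have hd : ∀ r τ, HasMatDeriv (fun x => Φ x r) (M τ * Φ τ r) Set.univ τ :=
    fun r τ i j => (hΦ.2 r τ i j).hasDerivWithinAt
  have hG : ∀ τ, HasMatDeriv (fun x => (Φ x t)ᵀ * J * Φ x s) 0 Set.univ τ := by
    intro τ
    have h := (((hd t τ).transpose.mul (HasMatDeriv.const J)).mul (hd s τ))
    convert h using 1
    have : (Φ τ t)ᵀ * ((M τ)ᵀ * J + J * M τ) * Φ τ s = 0 := by simp [hJ]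
    refine this.symm.trans ?_
    simp only [Matrix.transpose_mul]
    noncomm_ring
  have hc : (Φ s t)ᵀ * J * Φ s s = (Φ t t)ᵀ * J * Φ t s := by
    ext i j
    have h : ∀ τ, HasDerivAt (fun x => ((Φ x t)ᵀ * J * Φ x s) i j) 0 τ :=
      fun τ => hasDerivWithinAt_univ.1 (hG τ i j)
    exact is_const_of_deriv_eq_zero (fun τ => (h τ).differentiableAt) (fun τ => (h τ).deriv) s t
  simpa [hΦ.1] using hc

theorem stmt_10 {n p q : ℕ} (hn : 1 ≤ n) (hp : 1 ≤ p) (hq : 1 ≤ q)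
    (A Q : ℝ → Matrix (Fin n) (Fin n) ℝ) (B : ℝ → Matrix (Fin n) (Fin p) ℝ)
    (C : ℝ → Matrix (Fin n) (Fin q) ℝ) (D : ℝ → Matrix (Fin q) (Fin q) ℝ)
    (hA : Continuous A) (hB : Continuous B) (hQ : Continuous Q)
    (hC : Continuous C) (hD : Continuous D)
    (hQpsd : ∀ t, (Q t).PosSemidef) (hDpsd : ∀ t, (D t).PosSemidef)
    (Φ : ℝ → ℝ → Matrix (Fin n ⊕ Fin n) (Fin n ⊕ Fin n) ℝ)
    (hΦ : IsSTM (fun t => fromBlocks (A t) (-(B t * (B t)ᵀ)) (-(Q t)) (-(A t)ᵀ)) Φ)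
    (P : ℝ → Matrix (Fin n) (Fin n) ℝ)
    (hPsym : ∀ t ∈ Set.Icc (0:ℝ) 1, (P t)ᵀ = P t)
    (hPric : ∀ t ∈ Set.Icc (0:ℝ) 1, ∀ (i j : Fin n),
      HasDerivWithinAt (fun τ : ℝ => P τ i j)
        ((-(A t)ᵀ * P t - P t * A t + P t * (B t * (B t)ᵀ) * P t - Q t) i j)
        (Set.Icc (0:ℝ) 1) t)
    (Sig0 : Matrix (Fin n) (Fin n) ℝ) (hSig0 : Sig0.PosSemidef)
    (S : ℝ → Matrix (Fin n) (Fin n) ℝ) (hS0 : S 0 = Sig0)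
    (hSode : ∀ t ∈ Set.Icc (0:ℝ) 1, ∀ (i j : Fin n),
      HasDerivWithinAt (fun τ : ℝ => S τ i j)
        (((A t - B t * (B t)ᵀ * P t) * S t + S t * (A t - B t * (B t)ᵀ * P t)ᵀ +
          C t * D t * (C t)ᵀ) i j)
        (Set.Icc (0:ℝ) 1) t) :
    ∀ t ∈ Set.Icc (0:ℝ) 1, ∀ (i j : Fin n),
      S t i j =
        ((((Φ t 0).toBlocks₁₁ + (Φ t 0).toBlocks₁₂ * P 0) * Sig0 *
          ((Φ t 0).toBlocks₁₁ + (Φ t 0).toBlocks₁₂ * P 0)ᵀ) i j) +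
        ∫ s in (0:ℝ)..t,
          ((((Φ t s).toBlocks₁₁ + (Φ t s).toBlocks₁₂ * P s) * (C s * D s * (C s)ᵀ) *
            ((Φ t s).toBlocks₁₁ + (Φ t s).toBlocks₁₂ * P s)ᵀ) i j) := by
  intro t ht i j
  have hQs : ∀ τ, (Q τ)ᵀ = Q τ := fun τ => by simpa using (hQpsd τ).isHermitian.eq
  -- Here `J = [[0, 1], [-1, 0]]`.
  have hsymp : ∀ s, (Φ s t)ᵀ * fromBlocks 0 1 (-1) 0 = fromBlocks 0 1 (-1) 0 * Φ t s := by
    intro s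
    refine stm_symplectic hΦ _ (fun τ => ?_) t s
    simp [fromBlocks_transpose, fromBlocks_multiply, fromBlocks_add, hQs]
  have hblk : ∀ s, (Φ t s).toBlocks₁₁ = ((Φ s t).toBlocks₂₂)ᵀ ∧
      (Φ t s).toBlocks₁₂ = -((Φ s t).toBlocks₁₂)ᵀ := by
    intro s
    have h := hsymp s
    rw [← fromBlocks_toBlocks (Φ s t), ← fromBlocks_toBlocks (Φ t s)] at h
    simp only [fromBlocks_transpose, fromBlocks_multiply, fromBlocks_inj] at h
    obtain ⟨-, -, h21, h22⟩ := h
    simp at h21 h22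
    exact ⟨h21.symm, by rw [h22, neg_neg]⟩
  have hd : ∀ s, HasMatDeriv (fun x => (Φ x t).toBlocks₂₂)
      (-(Q s) * (Φ s t).toBlocks₁₂ - (A s)ᵀ * (Φ s t).toBlocks₂₂) (Set.Icc 0 1) s := by
    intro s i j
    refine (hΦ.2 t s (Sum.inr i) (Sum.inr j)).hasDerivWithinAt.congr_deriv ?_
    rw [Matrix.mul_apply]
    simp [Matrix.mul_apply, toBlocks₁₂, toBlocks₂₂, sub_eq_add_neg]
  have hb : ∀ s, HasMatDeriv (fun x => (Φ x t).toBlocks₁₂)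
      (A s * (Φ s t).toBlocks₁₂ - (B s * (B s)ᵀ) * (Φ s t).toBlocks₂₂) (Set.Icc 0 1) s := by
    intro s i j
    refine (hΦ.2 t s (Sum.inl i) (Sum.inr j)).hasDerivWithinAt.congr_deriv ?_
    rw [Matrix.mul_apply]
    simp [Matrix.mul_apply (M := A s), Matrix.mul_apply (M := B s * (B s)ᵀ), toBlocks₁₂,
      toBlocks₂₂, sub_eq_add_neg]
  set Ψ : ℝ → Matrix (Fin n) (Fin n) ℝ :=
    fun s => (Φ t s).toBlocks₁₁ + (Φ t s).toBlocks₁₂ * P s with hΨ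
  have hΨeq : Ψ = fun s => ((Φ s t).toBlocks₂₂)ᵀ - ((Φ s t).toBlocks₁₂)ᵀ * P s := by
    funext s
    simp [hΨ, (hblk s).1, (hblk s).2, sub_eq_add_neg]
  have hΨd : ∀ s ∈ Set.Icc (0:ℝ) 1,
      HasMatDeriv Ψ (-(Ψ s * (A s - B s * (B s)ᵀ * P s))) (Set.Icc 0 1) s := by
    intro s hs
    have h := (hd s).transpose.sub ((hb s).transpose.mul (hPric s hs))
    rw [hΨeq]
    convert h using 1
    simp only [transpose_sub, transpose_mul, transpose_neg, transpose_transpose, hQs]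
    noncomm_ring
  have hF : ∀ s ∈ Set.Icc (0:ℝ) 1, HasMatDeriv (fun x => Ψ x * S x * (Ψ x)ᵀ)
      (Ψ s * (C s * D s * (C s)ᵀ) * (Ψ s)ᵀ) (Set.Icc 0 1) s := by
    intro s hs
    have h := ((hΨd s hs).mul (hSode s hs)).mul (hΨd s hs).transpose
    convert h using 1
    generalize A s - B s * (B s)ᵀ * P s = K
    generalize C s * D s * (C s)ᵀ = W
    simp only [transpose_mul, transpose_neg]
    noncomm_ring
  have hΨt : Ψ t = 1 := by
    have h1 : (1 : Matrix (Fin n ⊕ Fin n) (Fin n ⊕ Fin n) ℝ).toBlocks₁₁ = 1 := by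
      rw [← fromBlocks_one, toBlocks_fromBlocks₁₁]
    have h2 : (1 : Matrix (Fin n ⊕ Fin n) (Fin n ⊕ Fin n) ℝ).toBlocks₁₂ = 0 := by
      rw [← fromBlocks_one, toBlocks_fromBlocks₁₂]
    simp [hΨ, hΦ.1, h1, h2]
  have hsub : Set.Icc 0 t ⊆ Set.Icc (0:ℝ) 1 := Set.Icc_subset_Icc_right ht.2
  have hΨc : ContinuousOn Ψ (Set.Icc 0 t) :=
    fun s hs => ((hΨd s (hsub hs)).continuousWithinAt).mono hsub
  have hcont : ContinuousOn (fun s => Ψ s * (C s * D s * (C s)ᵀ) * (Ψ s)ᵀ) (Set.Icc 0 t) := by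
    have hW : Continuous fun s => C s * D s * (C s)ᵀ :=
      (hC.matrix_mul hD).matrix_mul hC.matrix_transpose
    exact (hΨc.mul hW.continuousOn).mul (continuous_id.matrix_transpose.comp_continuousOn hΨc)
  have hint := intervalIntegral.integral_eq_sub_of_hasDerivAt_of_le ht.1
    (f := fun x => (Ψ x * S x * (Ψ x)ᵀ) i j)
    (f' := fun s => (Ψ s * (C s * D s * (C s)ᵀ) * (Ψ s)ᵀ) i j)
    (fun s hs => ((hF s (hsub hs) i j).continuousWithinAt).mono hsub)
    (fun s hs => (hF s (hsub ⟨hs.1.le, hs.2.le⟩) i j).hasDerivAt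
      (Icc_mem_nhds hs.1 (hs.2.trans_le ht.2)))
    (ContinuousOn.intervalIntegrable_of_Icc ht.1
      (continuousOn_pi.1 (continuousOn_pi.1 hcont i) j))
  simp only [hΨt, hS0, Matrix.one_mul, Matrix.transpose_one, Matrix.mul_one] at hint
  change S t i j = (Ψ 0 * Sig0 * (Ψ 0)ᵀ) i j +
    ∫ s in (0:ℝ)..t, (Ψ s * (C s * D s * (C s)ᵀ) * (Ψ s)ᵀ) i j
  rw [hint]
  ring
end

section
/- Assume (A(t), B(t)) is totally controllable on [0,1] and let Σ₀ be symmetric positive definite. On the domain 𝒟 = {Π₀ ∈ ℝ^{n×n} : Π₀ = Π₀ᵀ, Π₀ ≺ −Φ₁₂(1,0)⁻¹Φ₁₁(1,0)}, define f(Π₀) = Φ_{Π₀}(1,0)[Σ₀ + ∫₀¹ Φ_{Π₀}(s,0)⁻¹ C(s)D(s)C(s)ᵀ Φ_{Π₀}(s,0)⁻ᵀ ds]Φ_{Π₀}(1,0)ᵀ, where Φ_{Π₀}(t,0) := Φ₁₁(t,0) + Φ₁₂(t,0)Π₀ (which is invertible for all t ∈ [0,1] when Π₀ ∈ 𝒟).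 Then f is a homeomorphism from 𝒟 onto the set {Σ₁ ∈ ℝ^{n×n} : Σ₁ = Σ₁ᵀ ≻ 0} of symmetric positive definite matrices; in particular, for every symmetric Σ₁ ≻ 0 there exists a unique Π₀ ∈ 𝒟 with f(Π₀) = Σ₁. -/
/-!
The idea is to turn `f` into the gradient of a strictly concave, coercive potential on the cone of
positive definite matrices.

Write `a, b, c, d` for the blocks of `Φ_M(t,0)`. Constancy of the symplectic pairing gives the
symplectic relations (`HamBlocks.symplectic`), and with them a symmetric `P₀` for which
`X = a + b P₀` is invertible on `(-∞, 1]` (`HamBlocks.exists_ref`): one takes the solution equal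
to `(I, I)` at time `1`, for which `Xᵀ Y` is nonincreasing. Then `L = -X⁻¹ b` is a controllability
Gramian, `L' = X⁻¹ B Bᵀ X⁻ᵀ`, strictly increasing in the Loewner order by total controllability
(`gramian_strictMono`). Put `E = L(1)` and `K = -b(1)⁻¹ a(1) = E⁻¹ + P₀`.

The domain `Π ≺ K` is parametrised by positive definite `Y = E⁻¹ (K - Π)⁻¹ E⁻¹`
(`exists_homeo_param`). In this chart
`a + b Π = X · (I + (E - L)(Y - E⁻¹)) · E (K - Π)` (`closed_loop_factor`), the middle factor `J` is
invertible because `0 ⪯ L ⪯ E` (`Jmat_isUnit`), and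
`f(Π) = X(1) F(Y) X(1)ᵀ` with `F(Y) = J₀⁻¹ Σ₀ J₀⁻ᵀ + ∫ J⁻¹ W J⁻ᵀ`, where `J₀ = E Y` and
`W = X⁻¹ C D Cᵀ X⁻ᵀ`. Each summand is the gradient of `tr ((Y - E⁻¹) J⁻¹ W)`, whose concavity is an
explicit identity (`pot_identity`); the first one is strictly concave.

So `F` is strictly monotone, hence injective with continuous inverse (`inverse_continuous`). For
surjectivity, `Y ↦ h(Y) - tr (S Y)` is coercive on the cone (`SteerData.coercive`): the term of
`Σ₀` tends to `-∞` at the boundary, and the slope of the noise term becomes arbitrarily small far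
out, since `E - L(s)` is positive definite for `s < 1`. A maximiser solves `F(Y) = S`.
-/

open Matrix

/-- `IsCtrbMatSeq A B Γ`: `Γ 0 = B` and `Γ k = -A Γ (k-1) + Γ' (k-1)` for `1 ≤ k ≤ n`,
i.e. the derivative of each entry of `Γ k` is the corresponding entry of `Γ (k+1) + A * Γ k`,
for `k < n`. -/
def IsCtrbMatSeq {n p : ℕ} (A : ℝ → Matrix (Fin n) (Fin n) ℝ)
    (B : ℝ → Matrix (Fin n) (Fin p) ℝ) (Γ : ℕ → ℝ → Matrix (Fin n) (Fin p) ℝ) : Prop :=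
  Γ 0 = B ∧
  ∀ k < n, ∀ (t : ℝ) (i : Fin n) (j : Fin p),
    HasDerivAt (fun τ : ℝ => Γ k τ i j) ((Γ (k + 1) t + A t * Γ k t) i j) t

/-- The controllability matrix `Θₙ(t) = [Γ₀(t) Γ₁(t) ⋯ Γ_{n−1}(t)]`. -/
def ctrbMat {n p : ℕ} (Γ : ℕ → ℝ → Matrix (Fin n) (Fin p) ℝ) (t : ℝ) :
    Matrix (Fin n) (Fin n × Fin p) ℝ :=
  Matrix.of fun i kj => Γ (kj.1 : ℕ) t i kj.2

/-- Total controllability of `(A(t), B(t))` on `[0,1]`. -/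
def TotallyControllable {n p : ℕ} (Γ : ℕ → ℝ → Matrix (Fin n) (Fin p) ℝ) : Prop :=
  ∀ t₀ t₁ : ℝ, 0 ≤ t₀ → t₀ < t₁ → t₁ ≤ 1 →
    ∃ t ∈ Set.Ioo t₀ t₁, (ctrbMat Γ t).rank = n


/-- The map `f` from `Π₀` to the terminal covariance `Σ₁ = f(Π₀)`. -/
noncomputable def steerMap {n q : ℕ}
    (Φ : ℝ → ℝ → Matrix (Fin n ⊕ Fin n) (Fin n ⊕ Fin n) ℝ)
    (C : ℝ → Matrix (Fin n) (Fin q) ℝ) (D : ℝ → Matrix (Fin q) (Fin q) ℝ)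
    (Sig0 : Matrix (Fin n) (Fin n) ℝ) (P : Matrix (Fin n) (Fin n) ℝ) :
    Matrix (Fin n) (Fin n) ℝ :=
  ((Φ 1 0).toBlocks₁₁ + (Φ 1 0).toBlocks₁₂ * P) *
    (Sig0 + Matrix.of fun i j => ∫ s in (0:ℝ)..1,
      ((((Φ s 0).toBlocks₁₁ + (Φ s 0).toBlocks₁₂ * P)⁻¹ * (C s * D s * (C s)ᵀ) *
        ((((Φ s 0).toBlocks₁₁ + (Φ s 0).toBlocks₁₂ * P)⁻¹)ᵀ)) i j)) *
  ((Φ 1 0).toBlocks₁₁ + (Φ 1 0).toBlocks₁₂ * P)ᵀ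

open Filter Topology

set_option linter.unusedSectionVars false

/-! ### Positive semidefinite matrices -/

section MatrixFacts
variable {ι : Type*} [Fintype ι] [DecidableEq ι]

theorem psd_symm {A : Matrix ι ι ℝ} (hA : A.PosSemidef) : Aᵀ = A := by
  have := hA.isHermitian
  rwa [IsHermitian, conjTranspose_eq_transpose_of_trivial] at this

theorem pd_symm {A : Matrix ι ι ℝ} (hA : A.PosDef) : Aᵀ = A := psd_symm hA.posSemidef

theorem pd_of {A : Matrix ι ι ℝ} (hs : Aᵀ = A) (h : ∀ x ≠ 0, 0 < x ⬝ᵥ A *ᵥ x) : A.PosDef := by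
  refine PosDef.of_dotProduct_mulVec_pos ?_ ?_
  · rw [IsHermitian, conjTranspose_eq_transpose_of_trivial, hs]
  · intro x hx; simpa using h x hx

theorem psd_of {A : Matrix ι ι ℝ} (hs : Aᵀ = A) (h : ∀ x, 0 ≤ x ⬝ᵥ A *ᵥ x) : A.PosSemidef := by
  refine PosSemidef.of_dotProduct_mulVec_nonneg ?_ ?_
  · rw [IsHermitian, conjTranspose_eq_transpose_of_trivial, hs]
  · intro x; simpa using h x

theorem pd_quad {A : Matrix ι ι ℝ} (hA : A.PosDef) {x : ι → ℝ} (hx : x ≠ 0) :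
    0 < x ⬝ᵥ A *ᵥ x := by simpa using hA.dotProduct_mulVec_pos hx

theorem psd_quad {A : Matrix ι ι ℝ} (hA : A.PosSemidef) (x : ι → ℝ) :
    0 ≤ x ⬝ᵥ A *ᵥ x := by simpa using hA.dotProduct_mulVec_nonneg x

theorem psd_congr {κ : Type*} [Fintype κ] {A : Matrix ι ι ℝ} (hA : A.PosSemidef)
    (B : Matrix κ ι ℝ) : (B * A * Bᵀ).PosSemidef := by
  simpa using hA.mul_mul_conjTranspose_same B

theorem pd_congr {A B : Matrix ι ι ℝ} (hA : A.PosDef) (hB : IsUnit B) :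
    (B * A * Bᵀ).PosDef := by
  simpa using hA.mul_mul_conjTranspose_same (Matrix.vecMul_injective_of_isUnit hB)

theorem dot_self_nonneg (x : ι → ℝ) : 0 ≤ x ⬝ᵥ x := by
  simpa using dotProduct_self_star_nonneg x

theorem psd_factor {A : Matrix ι ι ℝ} (hA : A.PosSemidef) :
    ∃ C : Matrix ι ι ℝ, A = Cᴴ * C := by
  open scoped MatrixOrder in
  exact CStarAlgebra.nonneg_iff_eq_star_mul_self.mp hA.nonneg

theorem trace_mul_nonneg {A B : Matrix ι ι ℝ} (hA : A.PosSemidef) (hB : B.PosSemidef) :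
    0 ≤ (A * B).trace := by
  obtain ⟨C, rfl⟩ := psd_factor hB
  rw [← Matrix.mul_assoc, Matrix.trace_mul_comm, ← Matrix.mul_assoc]
  exact (hA.mul_mul_conjTranspose_same C).trace_nonneg

/-- `A ⪯ (tr A) I` for positive semidefinite `A` (Cauchy–Schwarz on the rows of a factor `C`
with `A = Cᴴ C`). -/
theorem trace_smul_one_sub_psd {A : Matrix ι ι ℝ} (hA : A.PosSemidef) :
    (A.trace • (1 : Matrix ι ι ℝ) - A).PosSemidef := by
  refine psd_of (by simp [psd_symm hA]) fun x => ?_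
  obtain ⟨C, rfl⟩ := psd_factor hA
  have h1 : x ⬝ᵥ (Cᴴ * C) *ᵥ x = ∑ i, (∑ j, C i j * x j) ^ 2 := by
    rw [← Matrix.mulVec_mulVec, Matrix.dotProduct_mulVec, conjTranspose_eq_transpose_of_trivial,
      Matrix.vecMul_transpose]
    simp [dotProduct, mulVec, sq]
  have h2 : (Cᴴ * C).trace = ∑ i, ∑ j, C i j ^ 2 := by
    rw [Finset.sum_comm]
    simp [trace, Matrix.mul_apply, sq]
  rw [sub_mulVec, dotProduct_sub, h1, h2, smul_mulVec, one_mulVec, dotProduct_smul, sub_nonneg,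
    smul_eq_mul, Finset.sum_mul]
  refine Finset.sum_le_sum fun i _ => ?_
  have := Finset.sum_mul_sq_le_sq_mul_sq Finset.univ (fun j => C i j) x
  simpa [dotProduct, sq] using this

theorem trace_mul_le {A B : Matrix ι ι ℝ} (hA : A.PosSemidef) (hB : B.PosSemidef) :
    (A * B).trace ≤ A.trace * B.trace := by
  have := trace_mul_nonneg (trace_smul_one_sub_psd hA) hB
  simp [sub_mul] at this
  linarith

theorem pd_mul_inv {A : Matrix ι ι ℝ} (hA : A.PosDef) : A * A⁻¹ = 1 :=
  Matrix.mul_nonsing_inv _ ((Matrix.isUnit_iff_isUnit_det _).1 hA.isUnit)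

theorem pd_inv_mul {A : Matrix ι ι ℝ} (hA : A.PosDef) : A⁻¹ * A = 1 :=
  Matrix.nonsing_inv_mul _ ((Matrix.isUnit_iff_isUnit_det _).1 hA.isUnit)

/-- A bound on `tr Y⁻¹` bounds `Y` from below: `Y⁻¹ ⪯ c I` gives `c⁻¹ I ⪯ Y`. -/
theorem sub_smul_psd_of_inv_trace {Y : Matrix ι ι ℝ} (hY : Y.PosDef) {c : ℝ} (hc : 0 < c)
    (h : Y⁻¹.trace ≤ c) : (Y - c⁻¹ • (1 : Matrix ι ι ℝ)).PosSemidef := by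
  refine psd_of (by simp [pd_symm hY]) fun x => ?_
  have h1 := psd_quad (trace_smul_one_sub_psd hY.inv.posSemidef) x
  have hxx : 0 ≤ x ⬝ᵥ x := dot_self_nonneg x
  have h2 := psd_quad hY.posSemidef (x - c⁻¹ • (Y⁻¹ *ᵥ x))
  have e1 : Y *ᵥ (Y⁻¹ *ᵥ x) = x := by rw [mulVec_mulVec, pd_mul_inv hY, one_mulVec]
  have e2 : (Y⁻¹ *ᵥ x) ⬝ᵥ Y *ᵥ x = x ⬝ᵥ x := by
    rw [dotProduct_mulVec, ← mulVec_transpose, pd_symm hY, e1]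
  simp only [mulVec_sub, mulVec_smul, e1, dotProduct_sub, sub_dotProduct, smul_dotProduct,
    dotProduct_smul, e2, smul_eq_mul, sub_mulVec, smul_mulVec, one_mulVec] at h1 h2 ⊢
  rw [dotProduct_comm (Y⁻¹ *ᵥ x) x] at h2
  have h3 : x ⬝ᵥ Y⁻¹ *ᵥ x ≤ c * (x ⬝ᵥ x) := by nlinarith
  have h4 : c⁻¹ * (x ⬝ᵥ Y⁻¹ *ᵥ x) ≤ x ⬝ᵥ x := by
    rw [inv_mul_le_iff₀ hc]; exact h3
  have h5 : c⁻¹ * (c⁻¹ * (x ⬝ᵥ Y⁻¹ *ᵥ x)) ≤ c⁻¹ * (x ⬝ᵥ x) :=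
    mul_le_mul_of_nonneg_left h4 (inv_nonneg.2 hc.le)
  linarith

theorem exists_sub_smul_psd {Y : Matrix ι ι ℝ} (hY : Y.PosDef) :
    ∃ c : ℝ, 0 < c ∧ (Y - c • (1 : Matrix ι ι ℝ)).PosSemidef := by
  have h0 := hY.inv.posSemidef.trace_nonneg
  have h1 : 0 < Y⁻¹.trace + 1 := by linarith
  exact ⟨_, inv_pos.2 h1, sub_smul_psd_of_inv_trace hY h1 (by linarith)⟩

theorem le_trace_mul {Y X : Matrix ι ι ℝ} {c : ℝ} (hY : (Y - c • (1 : Matrix ι ι ℝ)).PosSemidef)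
    (hX : X.PosSemidef) : c * X.trace ≤ (Y * X).trace := by
  have := trace_mul_nonneg hY hX
  simp [sub_mul] at this
  linarith

theorem trace_mul_pos {W X : Matrix ι ι ℝ} (hW : W.PosDef) (hX : X.PosSemidef) (h0 : X ≠ 0) :
    0 < (W * X).trace := by
  obtain ⟨c, hc, h⟩ := exists_sub_smul_psd hW
  have h1 : 0 < X.trace :=
    lt_of_le_of_ne hX.trace_nonneg fun h => h0 (hX.trace_eq_zero_iff.1 h.symm)
  exact lt_of_lt_of_le (mul_pos hc h1) (le_trace_mul h hX)

theorem pd_of_sub_smul {Y : Matrix ι ι ℝ} {c : ℝ} (hc : 0 < c)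
    (h : (Y - c • (1 : Matrix ι ι ℝ)).PosSemidef) : Y.PosDef := by
  have := PosDef.posSemidef_add h ((PosDef.one (n := ι) (R := ℝ)).smul hc)
  simpa using this

/-- The positive definite cone is open among symmetric matrices, in terms of entrywise bounds. -/
theorem exists_pd_nhd {Y : Matrix ι ι ℝ} (hY : Y.PosDef) :
    ∃ δ : ℝ, 0 < δ ∧ ∀ U : Matrix ι ι ℝ, Uᵀ = U → (∀ i j, |U i j| ≤ δ) → (Y + U).PosDef := by
  obtain ⟨c, hc, h⟩ := exists_sub_smul_psd hY
  set N : ℝ := Fintype.card ι + 1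
  have hN : 0 < N := by positivity
  refine ⟨c / 2 / N, by positivity, fun U hU hb => pd_of_sub_smul (half_pos hc) ?_⟩
  refine psd_of (by simp [hU, pd_symm hY]) fun x => ?_
  have h1 := psd_quad h x
  simp only [sub_mulVec, add_mulVec, dotProduct_sub, dotProduct_add, smul_mulVec, one_mulVec,
    dotProduct_smul, smul_eq_mul] at h1 ⊢
  have h2 : -(c / 2 * (x ⬝ᵥ x)) ≤ x ⬝ᵥ U *ᵥ x := by
    have e : x ⬝ᵥ U *ᵥ x = ∑ i, ∑ j, x i * (U i j * x j) := by
      simp [dotProduct, mulVec, Finset.mul_sum]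
    have : ∀ i j, -(c / 2 / N * ((x i ^ 2 + x j ^ 2) / 2)) ≤ x i * (U i j * x j) := by
      intro i j
      have a1 : |x i * (U i j * x j)| ≤ c / 2 / N * ((x i ^ 2 + x j ^ 2) / 2) := by
        have : |x i * (U i j * x j)| = |U i j| * |x i * x j| := by
          rw [← abs_mul]; congr 1; ring
        rw [this]
        refine mul_le_mul (hb i j) ?_ (abs_nonneg _) (by positivity)
        rw [abs_le]; constructor <;> nlinarith [sq_nonneg (x i + x j), sq_nonneg (x i - x j)]
      exact (abs_le.1 a1).1
    have s : ∑ i, ∑ j, -(c / 2 / N * ((x i ^ 2 + x j ^ 2) / 2)) =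
        -(c / 2 / N * (Fintype.card ι * (x ⬝ᵥ x))) := by
      have hx : x ⬝ᵥ x = ∑ i, x i ^ 2 := by simp [dotProduct, sq]
      simp only [Finset.sum_neg_distrib, ← Finset.mul_sum, ← Finset.sum_div,
        Finset.sum_add_distrib, Finset.sum_const, Finset.card_univ, nsmul_eq_mul, hx]
      ring
    rw [e]
    refine le_trans ?_ (Finset.sum_le_sum fun i _ => Finset.sum_le_sum fun j _ => this i j)
    rw [s]
    have hxx : 0 ≤ x ⬝ᵥ x := dot_self_nonneg x
    have : c / 2 / N * (Fintype.card ι * (x ⬝ᵥ x)) ≤ c / 2 / N * (N * (x ⬝ᵥ x)) := by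
      gcongr
      simp [N]
    have e2 : c / 2 / N * (N * (x ⬝ᵥ x)) = c / 2 * (x ⬝ᵥ x) := by field_simp
    linarith
  linarith

theorem continuous_inv_of_isUnit {X : Type*} [TopologicalSpace X] {f : X → Matrix ι ι ℝ}
    (hf : Continuous f) (hu : ∀ x, IsUnit (f x)) : Continuous fun x => (f x)⁻¹ := by
  rw [continuous_iff_continuousAt]
  intro x
  refine ContinuousAt.comp (g := Inv.inv) (continuousAt_matrix_inv _ ?_) hf.continuousAt
  have : (f x).det ≠ 0 := ((Matrix.isUnit_iff_isUnit_det _).1 (hu x)).ne_zero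
  simpa using NormedRing.inverse_continuousAt (Units.mk0 _ this)

theorem isClosed_psd : IsClosed {A : Matrix ι ι ℝ | A.PosSemidef} := by
  have : {A : Matrix ι ι ℝ | A.PosSemidef} =
      {A | Aᵀ = A} ∩ ⋂ x : ι → ℝ, {A | 0 ≤ x ⬝ᵥ A *ᵥ x} := by
    ext A
    simp only [Set.mem_ofPred_eq, Set.mem_inter_iff, Set.mem_iInter]
    exact ⟨fun h => ⟨psd_symm h, psd_quad h⟩, fun h => psd_of h.1 h.2⟩
  rw [this]
  refine IsClosed.inter (isClosed_eq (by fun_prop) (by fun_prop)) (isClosed_iInter fun x => ?_)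
  exact isClosed_le (by fun_prop) (by fun_prop)

end MatrixFacts

/-! ### The potential and its gradient at a fixed time -/

section StaticAlgebra
variable {ι : Type*} [Fintype ι] [DecidableEq ι]

/-- `J = I + M (Y - E⁻¹)`. For `M = E - L(t)`, with `L` the Gramian and `E = L(1)`, this is the
closed-loop flow `Φ_Π(t,0)` in the chart `Y` up to invertible left and right factors (see
`closed_loop_factor`). -/
noncomputable def Jmat (E M Y : Matrix ι ι ℝ) : Matrix ι ι ℝ := 1 + M * (Y - E⁻¹)

/-- `J⁻¹ W J⁻ᵀ`: the contribution of a noise intensity `W` to the terminal covariance, and the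
gradient of `pot` with respect to `Y` for the trace pairing. -/
noncomputable def grd (E M W Y : Matrix ι ι ℝ) : Matrix ι ι ℝ :=
  (Jmat E M Y)⁻¹ * W * ((Jmat E M Y)⁻¹)ᵀ

/-- The concave potential `tr ((Y - E⁻¹) J⁻¹ W)` of the vector field `grd`. -/
noncomputable def pot (E M W Y : Matrix ι ι ℝ) : ℝ :=
  ((Y - E⁻¹) * (Jmat E M Y)⁻¹ * W).trace

theorem mulVec_dot {κ : Type*} [Fintype κ] (H : Matrix κ ι ℝ) (v : ι → ℝ) (w : κ → ℝ) :
    (H *ᵥ v) ⬝ᵥ w = v ⬝ᵥ Hᵀ *ᵥ w := by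
  rw [dotProduct_comm, dotProduct_mulVec, dotProduct_comm, mulVec_transpose]

/-- `M - M E⁻¹ M` is the parallel sum of `M` and `E - M`, hence positive semidefinite. -/
theorem parallel_psd {E M : Matrix ι ι ℝ} (hE : E.PosDef) (hM : M.PosSemidef)
    (hL : (E - M).PosSemidef) : (M - M * E⁻¹ * M).PosSemidef := by
  have h1 := pd_mul_inv hE
  have h2 := pd_inv_mul hE
  have hEs : E⁻¹ᵀ = E⁻¹ := pd_symm hE.inv
  have key : M - M * E⁻¹ * M =
      (M * E⁻¹) * (E - M) * (M * E⁻¹)ᵀ + ((E - M) * E⁻¹) * M * ((E - M) * E⁻¹)ᵀ := by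
    rw [transpose_mul, transpose_mul, hEs, psd_symm hM, psd_symm hL]
    have h3 : M * E⁻¹ * (E - M) = M - M * E⁻¹ * M := by
      rw [mul_sub, Matrix.mul_assoc M E⁻¹ E, h2, Matrix.mul_one]
    have h4 : (E - M) * E⁻¹ = 1 - M * E⁻¹ := by rw [sub_mul, h1]
    have h5 : E⁻¹ * (E - M) = 1 - E⁻¹ * M := by rw [mul_sub, h2]
    rw [h3, h4, h5]
    noncomm_ring
  rw [key]
  exact (psd_congr hL _).add (psd_congr hM _)

theorem mvm_decomp (E M Y : Matrix ι ι ℝ) :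
    M + M * (Y - E⁻¹) * M = (M - M * E⁻¹ * M) + M * Y * M := by
  noncomm_ring

theorem Jmat_transpose {E M Y : Matrix ι ι ℝ} (hE : E.PosDef) (hM : M.PosSemidef)
    (hY : Yᵀ = Y) : (Jmat E M Y)ᵀ = 1 + (Y - E⁻¹) * M := by
  simp [Jmat, pd_symm hE.inv, psd_symm hM, hY, Matrix.transpose_mul]

/-- If `Jᵀ v = 0`, pairing with `M v` writes `0` as the sum of the quadratic form of the parallel
sum of `M` and `E - M` and of `(M v)ᵀ Y (M v)`; so `M v = 0`, and then `v = 0`. -/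
theorem Jmat_isUnit {E M Y : Matrix ι ι ℝ} (hE : E.PosDef) (hM : M.PosSemidef)
    (hL : (E - M).PosSemidef) (hY : Y.PosDef) : IsUnit (Jmat E M Y) := by
  rw [← Matrix.isUnit_transpose, ← Matrix.mulVec_injective_iff_isUnit]
  rw [Jmat_transpose hE hM (pd_symm hY)]
  rw [← Matrix.coe_mulVecLin, ← LinearMap.ker_eq_bot, LinearMap.ker_eq_bot']
  intro v hv
  simp only [Matrix.coe_mulVecLin, add_mulVec, one_mulVec] at hv
  have h1 : (M *ᵥ v) ⬝ᵥ (v + ((Y - E⁻¹) * M) *ᵥ v) = 0 := by rw [hv]; simp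
  have h2 : v ⬝ᵥ (M + M * (Y - E⁻¹) * M) *ᵥ v = 0 := by
    rw [← h1, mulVec_dot, psd_symm hM, mulVec_add, add_mulVec, mulVec_mulVec, Matrix.mul_assoc]
  rw [mvm_decomp, add_mulVec, dotProduct_add] at h2
  have h3 := psd_quad (parallel_psd hE hM hL) v
  have h4 : v ⬝ᵥ (M * Y * M) *ᵥ v = (M *ᵥ v) ⬝ᵥ Y *ᵥ (M *ᵥ v) := by
    rw [mulVec_dot, psd_symm hM, mulVec_mulVec, mulVec_mulVec, Matrix.mul_assoc]
  have h5 : M *ᵥ v = 0 := by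
    by_contra h
    have := pd_quad hY h
    linarith
  rw [← mulVec_mulVec, h5] at hv
  simpa using hv

theorem unit_mul_inv {A : Matrix ι ι ℝ} (h : IsUnit A) : A * A⁻¹ = 1 :=
  Matrix.mul_nonsing_inv _ ((Matrix.isUnit_iff_isUnit_det _).1 h)

theorem unit_inv_mul {A : Matrix ι ι ℝ} (h : IsUnit A) : A⁻¹ * A = 1 :=
  Matrix.nonsing_inv_mul _ ((Matrix.isUnit_iff_isUnit_det _).1 h)

theorem Jinv_mul_psd {E M Y : Matrix ι ι ℝ} (hE : E.PosDef) (hM : M.PosSemidef)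
    (hL : (E - M).PosSemidef) (hY : Y.PosDef) : ((Jmat E M Y)⁻¹ * M).PosSemidef := by
  have hJ := Jmat_isUnit hE hM hL hY
  have h1 : (M + M * (Y - E⁻¹) * M).PosSemidef := by
    rw [mvm_decomp]
    have := psd_congr hY.posSemidef M
    rw [psd_symm hM] at this
    exact (parallel_psd hE hM hL).add this
  have h2 := psd_congr h1 (Jmat E M Y)⁻¹
  have h3 : M + M * (Y - E⁻¹) * M = M * (Jmat E M Y)ᵀ := by
    rw [Jmat_transpose hE hM (pd_symm hY)]; noncomm_ring
  rw [h3, Matrix.mul_assoc, Matrix.mul_assoc, ← transpose_mul, unit_inv_mul hJ] at h2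
  simpa using h2

/-- The gap between `pot` and its linearisation at `Y` in closed form. Both the concavity of `pot`
and the fact that its gradient is `grd` are read off from this identity. -/
theorem pot_identity {E M W Y Z : Matrix ι ι ℝ} (hE : E.PosDef) (hM : M.PosSemidef)
    (hL : (E - M).PosSemidef) (hY : Y.PosDef) (hZ : Z.PosDef) :
    pot E M W Y + (grd E M W Y * (Z - Y)).trace - pot E M W Z =
      (W * (((Z - Y) * (Jmat E M Y)⁻¹)ᵀ * ((Jmat E M Z)⁻¹ * M) *
        ((Z - Y) * (Jmat E M Y)⁻¹))).trace := by
  have hJY := Jmat_isUnit hE hM hL hY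
  have hJZ := Jmat_isUnit hE hM hL hZ
  have hVs : (Y - E⁻¹)ᵀ = Y - E⁻¹ := by
    rw [transpose_sub, pd_symm hY, pd_symm hE.inv]
  have hT := Jmat_transpose hE hM (pd_symm hY)
  have a1 := unit_mul_inv hJY
  have a2 := unit_inv_mul hJY
  have b1 := unit_mul_inv hJZ
  have b2 := unit_inv_mul hJZ
  have hDs : (Z - Y)ᵀ = Z - Y := by rw [transpose_sub, pd_symm hY, pd_symm hZ]
  have c1 : ((Jmat E M Y)⁻¹)ᵀ * (1 + (Y - E⁻¹) * M) = 1 := by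
    rw [← hT, ← transpose_mul, a1, transpose_one]
  have dY : Jmat E M Y = 1 + M * (Y - E⁻¹) := rfl
  have dZ : Jmat E M Z = 1 + M * (Z - E⁻¹) := rfl
  have dZY : Jmat E M Z - Jmat E M Y = M * (Z - Y) := by rw [dY, dZ]; noncomm_ring
  unfold pot grd
  generalize hj : (Jmat E M Y)⁻¹ = j at *
  generalize hk : (Jmat E M Z)⁻¹ = k at *
  generalize hV : Y - E⁻¹ = V at *
  have hZV : Z - E⁻¹ = V + (Z - Y) := by rw [← hV]; abel
  generalize hD : Z - Y = Δ at *
  generalize Jmat E M Y = J at *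
  generalize Jmat E M Z = K at *
  -- the resolvent-type identity `(V + Δ) k - V j = jᵀ Δ k`
  have e1 : (V + Δ) * k - V * j = jᵀ * Δ * k := by
    have s1 : (1 + V * M) * (V + Δ) - V * K = Δ := by rw [dZ, hZV]; noncomm_ring
    have s2 : (1 + V * M) * V = V * J := by rw [dY]; noncomm_ring
    have s3 : V * j = jᵀ * V := by
      calc V * j = jᵀ * (1 + V * M) * V * j := by rw [c1, Matrix.one_mul]
        _ = jᵀ * ((1 + V * M) * V) * j := by simp only [Matrix.mul_assoc]
        _ = jᵀ * V := by rw [s2, Matrix.mul_assoc, Matrix.mul_assoc, a1, Matrix.mul_one]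
    calc (V + Δ) * k - V * j = (jᵀ * (1 + V * M)) * (V + Δ) * k - jᵀ * V * (K * k) := by
          rw [c1, s3, b1]; simp
      _ = jᵀ * ((1 + V * M) * (V + Δ) - V * K) * k := by noncomm_ring
      _ = jᵀ * Δ * k := by rw [s1]
  have e2 : j - k = k * M * Δ * j := by
    calc j - k = k * (K - J) * j := by
          rw [mul_sub, sub_mul, b2, Matrix.mul_assoc k J j, a1]; simp
      _ = _ := by rw [dZY]; simp only [Matrix.mul_assoc]
  have e3 : jᵀ * Δ * j - ((V + Δ) * k - V * j) = (Δ * j)ᵀ * (k * M) * (Δ * j) := by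
    rw [e1, ← mul_sub, e2, transpose_mul, hDs]; simp only [Matrix.mul_assoc]
  have e4 : (j * W * jᵀ * Δ).trace = (jᵀ * Δ * j * W).trace := by
    rw [Matrix.mul_assoc, trace_mul_comm, Matrix.mul_assoc (jᵀ * Δ)]
  rw [e4, trace_mul_comm W, ← e3, hZV, sub_mul, sub_mul, trace_sub, trace_sub]
  ring

/-- Concavity of `pot`, in the form of the supergradient inequality. -/
theorem pot_le {E M W Y Z : Matrix ι ι ℝ} (hE : E.PosDef) (hM : M.PosSemidef)
    (hL : (E - M).PosSemidef) (hW : W.PosSemidef) (hY : Y.PosDef) (hZ : Z.PosDef) :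
    pot E M W Z ≤ pot E M W Y + (grd E M W Y * (Z - Y)).trace := by
  have h := pot_identity (W := W) hE hM hL hY hZ
  have h2 := psd_congr (Jinv_mul_psd hE hM hL hZ) ((Z - Y) * (Jmat E M Y)⁻¹)ᵀ
  rw [transpose_transpose] at h2
  have := trace_mul_nonneg hW h2
  linarith

theorem Jmat_self {E Y : Matrix ι ι ℝ} (hE : E.PosDef) : Jmat E E Y = E * Y := by
  rw [Jmat, mul_sub, pd_mul_inv hE]; abel

/-- Strict concavity of the potential attached to the initial covariance, for which `M = E`. -/
theorem pot_lt {E W Y Z : Matrix ι ι ℝ} (hE : E.PosDef)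
    (hW : W.PosDef) (hY : Y.PosDef) (hZ : Z.PosDef) (hne : Z ≠ Y) :
    pot E E W Z < pot E E W Y + (grd E E W Y * (Z - Y)).trace := by
  have hL : (E - E).PosSemidef := by simpa using PosSemidef.zero
  have hJ := Jmat_isUnit hE hE.posSemidef hL hY
  have h := pot_identity (W := W) hE hE.posSemidef hL hY hZ
  have hK : (Jmat E E Z)⁻¹ * E = Z⁻¹ := by
    rw [Jmat_self hE, Matrix.mul_inv_rev, Matrix.mul_assoc, pd_inv_mul hE, Matrix.mul_one]
  rw [hK] at h
  have h2 := psd_congr hZ.inv.posSemidef ((Z - Y) * (Jmat E E Y)⁻¹)ᵀ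
  rw [transpose_transpose] at h2
  have h3 : ((Z - Y) * (Jmat E E Y)⁻¹)ᵀ * Z⁻¹ * ((Z - Y) * (Jmat E E Y)⁻¹) ≠ 0 := by
    intro h0
    apply hne
    have hH : (Z - Y) * (Jmat E E Y)⁻¹ = 0 := by
      generalize (Z - Y) * (Jmat E E Y)⁻¹ = H at h0 ⊢
      rw [← Matrix.mulVec_injective.eq_iff]
      ext1 v
      by_contra hv
      have := pd_quad hZ.inv (x := H *ᵥ v) (by simpa using hv)
      have e : (H *ᵥ v) ⬝ᵥ Z⁻¹ *ᵥ (H *ᵥ v) = v ⬝ᵥ (Hᵀ * Z⁻¹ * H) *ᵥ v := by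
        rw [mulVec_dot, mulVec_mulVec, mulVec_mulVec, Matrix.mul_assoc]
      rw [e, h0] at this
      simp at this
    have : (Z - Y) * (Jmat E E Y)⁻¹ * Jmat E E Y = 0 := by rw [hH]; simp
    rw [Matrix.mul_assoc, unit_inv_mul hJ, Matrix.mul_one] at this
    exact sub_eq_zero.1 this
  have := trace_mul_pos hW h2 h3
  linarith

theorem grd_psd {E M W Y : Matrix ι ι ℝ} (hW : W.PosSemidef) : (grd E M W Y).PosSemidef :=
  psd_congr hW _

theorem grd_pd {E W Y : Matrix ι ι ℝ} (hE : E.PosDef) (hW : W.PosDef) (hY : Y.PosDef) :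
    (grd E E W Y).PosDef := by
  refine pd_congr hW ?_
  rw [Matrix.isUnit_nonsing_inv_iff]
  exact Jmat_isUnit hE hE.posSemidef (by simpa using PosSemidef.zero) hY

end StaticAlgebra

/-! ### Monotone gradient fields on the positive definite cone -/

section Monotone
variable {ι : Type*} [Fintype ι] [DecidableEq ι]

/-- A function with a continuous supergradient field is continuous. -/
theorem potential_continuousOn {F : Matrix ι ι ℝ → Matrix ι ι ℝ} {h : Matrix ι ι ℝ → ℝ}
    (hs : ∀ Y Z : Matrix ι ι ℝ, Y.PosDef → Z.PosDef → h Z ≤ h Y + (F Y * (Z - Y)).trace)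
    (hF : ContinuousOn F {Y | Y.PosDef}) : ContinuousOn h {Y | Y.PosDef} := by
  intro Y hY
  have hZ : Tendsto (fun Z : Matrix ι ι ℝ => Z) (𝓝[{Y | Y.PosDef}] Y) (𝓝 Y) :=
    tendsto_id.mono_left nhdsWithin_le_nhds
  have hD : Tendsto (fun Z : Matrix ι ι ℝ => Z - Y) (𝓝[{Y | Y.PosDef}] Y) (𝓝 0) := by
    simpa using hZ.sub_const Y
  have ct : Continuous (fun A : Matrix ι ι ℝ => A.trace) := continuous_id.matrix_trace
  have h1 : Tendsto (fun Z : Matrix ι ι ℝ => h Y + (F Y * (Z - Y)).trace)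
      (𝓝[{Y | Y.PosDef}] Y) (𝓝 (h Y)) := by
    have := (ct.tendsto _).comp (hD.const_mul (F Y))
    simpa using this.const_add (h Y)
  have h2 : Tendsto (fun Z : Matrix ι ι ℝ => h Y + (F Z * (Z - Y)).trace)
      (𝓝[{Y | Y.PosDef}] Y) (𝓝 (h Y)) := by
    have := (ct.tendsto _).comp ((hF Y hY).tendsto.mul hD)
    simpa using this.const_add (h Y)
  refine tendsto_of_tendsto_of_tendsto_of_le_of_le' h2 h1 ?_ ?_
  · filter_upwards [self_mem_nhdsWithin] with Z hZ
    have := hs Z Y hZ hY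
    have e : (F Z * (Y - Z)).trace = - (F Z * (Z - Y)).trace := by
      rw [← trace_neg, ← mul_neg, neg_sub]
    linarith
  · filter_upwards [self_mem_nhdsWithin] with Z hZ
    exact hs Y Z hY hZ

theorem eventually_pd {Y U : Matrix ι ι ℝ} (hY : Y.PosDef) (hU : Uᵀ = U) :
    ∀ᶠ ε : ℝ in 𝓝 0, (Y + ε • U).PosDef := by
  obtain ⟨δ, hδ, h⟩ := exists_pd_nhd hY
  have : ∀ᶠ ε : ℝ in 𝓝 0, ∀ i j, |(ε • U) i j| ≤ δ := by
    rw [eventually_all]; intro i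
    rw [eventually_all]; intro j
    have hc : Tendsto (fun ε : ℝ => |(ε • U) i j|) (𝓝 0) (𝓝 0) := by
      have : Continuous (fun ε : ℝ => |ε * U i j|) := by fun_prop
      simpa using this.tendsto 0
    exact (hc.eventually (gt_mem_nhds hδ)).mono fun _ h => h.le
  filter_upwards [this] with ε hε
  exact h _ (by simp [hU]) hε

/-- Surjectivity by maximisation: if `F` is the continuous supergradient field of `h` and
`h Y - tr (S Y)` is no larger outside a compact `K` than at some point of `K`, then a maximiser
of it over the cone satisfies `F Y = S`. -/
theorem exists_preimage {F : Matrix ι ι ℝ → Matrix ι ι ℝ} {h : Matrix ι ι ℝ → ℝ}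
    (hs : ∀ Y Z : Matrix ι ι ℝ, Y.PosDef → Z.PosDef → h Z ≤ h Y + (F Y * (Z - Y)).trace)
    (hsym : ∀ Y : Matrix ι ι ℝ, Y.PosDef → (F Y)ᵀ = F Y)
    (hF : ContinuousOn F {Y | Y.PosDef})
    {S : Matrix ι ι ℝ} (hS : Sᵀ = S) {K : Set (Matrix ι ι ℝ)} (hK : IsCompact K)
    (hKp : ∀ Y ∈ K, Y.PosDef) {Y₀ : Matrix ι ι ℝ} (h0 : Y₀ ∈ K)
    (hout : ∀ Y : Matrix ι ι ℝ, Y.PosDef → Y ∉ K →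
      h Y - (S * Y).trace ≤ h Y₀ - (S * Y₀).trace) :
    ∃ Y : Matrix ι ι ℝ, Y.PosDef ∧ F Y = S := by
  have hc : ContinuousOn (fun Y => h Y - (S * Y).trace) K := by
    refine ContinuousOn.sub ((potential_continuousOn hs hF).mono hKp) ?_
    exact (Continuous.matrix_trace (by fun_prop)).continuousOn
  obtain ⟨Y, hYK, hmax⟩ := hK.exists_isMaxOn ⟨Y₀, h0⟩ hc
  have hY := hKp Y hYK
  have hglob : ∀ Z : Matrix ι ι ℝ, Z.PosDef → h Z - (S * Z).trace ≤ h Y - (S * Y).trace := by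
    intro Z hZ
    by_cases hZK : Z ∈ K
    · exact hmax hZK
    · exact (hout Z hZ hZK).trans (hmax h0)
  refine ⟨Y, hY, ?_⟩
  set U := F Y - S with hUdef
  have hU : Uᵀ = U := by rw [hUdef, transpose_sub, hsym Y hY, hS]
  have hev := eventually_pd hY hU
  -- first-order condition in the direction `U`, without differentiating `h`
  have h1 : ∀ᶠ ε : ℝ in 𝓝[>] 0, (F (Y + ε • U) * U).trace ≤ (S * U).trace := by
    filter_upwards [hev.filter_mono nhdsWithin_le_nhds, self_mem_nhdsWithin] with ε hε hpos
    have a := hs _ _ hε hY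
    have b := hglob _ hε
    have e : (F (Y + ε • U) * (Y - (Y + ε • U))).trace = - (ε * (F (Y + ε • U) * U).trace) := by
      rw [sub_add_cancel_left, mul_neg, trace_neg, mul_smul_comm, trace_smul, smul_eq_mul]
    have e2 : (S * (Y + ε • U)).trace = (S * Y).trace + ε * (S * U).trace := by
      rw [mul_add, trace_add, mul_smul_comm, trace_smul, smul_eq_mul]
    rw [e] at a
    rw [e2] at b
    have : ε * (F (Y + ε • U) * U).trace ≤ ε * (S * U).trace := by linarith
    exact le_of_mul_le_mul_left this hpos
  have h2 : Tendsto (fun ε : ℝ => (F (Y + ε • U) * U).trace) (𝓝[>] 0) (𝓝 (F Y * U).trace) := by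
    have c : Tendsto (fun ε : ℝ => Y + ε • U) (𝓝[>] 0) (𝓝[{Y | Y.PosDef}] Y) := by
      refine tendsto_nhdsWithin_iff.2 ⟨?_, hev.filter_mono nhdsWithin_le_nhds⟩
      have : Continuous (fun ε : ℝ => Y + ε • U) := by fun_prop
      have := (this.tendsto 0).mono_left (nhdsWithin_le_nhds (s := Set.Ioi 0))
      simpa using this
    have ct : Continuous (fun A : Matrix ι ι ℝ => (A * U).trace) :=
      Continuous.matrix_trace (by fun_prop)
    exact (ct.tendsto _).comp ((hF Y hY).tendsto.comp c)
  have h3 : (F Y * U).trace ≤ (S * U).trace := le_of_tendsto h2 h1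
  have h4 : (Uᴴ * U).trace ≤ 0 := by
    rw [conjTranspose_eq_transpose_of_trivial, hU]
    nth_rewrite 1 [hUdef]
    rw [sub_mul, trace_sub]; linarith
  have h5 : (Uᴴ * U).trace = 0 :=
    le_antisymm h4 (posSemidef_conjTranspose_mul_self U).trace_nonneg
  exact sub_eq_zero.1 (trace_conjTranspose_mul_self_eq_zero_iff.1 h5)

attribute [local instance] Matrix.normedAddCommGroup Matrix.normedSpace

theorem trace_mul_le_norm (A U : Matrix ι ι ℝ) :
    (A * U).trace ≤ (Fintype.card ι) ^ 2 * (‖A‖ * ‖U‖) := by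
  have : (A * U).trace = ∑ i, ∑ j, A i j * U j i := by simp [trace, Matrix.mul_apply]
  rw [this]
  have : ∀ i j, A i j * U j i ≤ ‖A‖ * ‖U‖ := fun i j => by
    refine (le_abs_self _).trans ?_
    rw [abs_mul]
    exact mul_le_mul (Matrix.norm_entry_le_entrywise_sup_norm A)
      (Matrix.norm_entry_le_entrywise_sup_norm U) (abs_nonneg _) (norm_nonneg _)
  refine (Finset.sum_le_sum fun i _ => Finset.sum_le_sum fun j _ => this i j).trans ?_
  simp [sq, mul_assoc]

/-- For a continuous strictly monotone (decreasing) `F`, the values at points at distance at least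
`r₀` from `Y` stay away from `F Y`: along each ray the increment is controlled by the one on a
small sphere, which is compact. -/
theorem monotone_separation {F : Matrix ι ι ℝ → Matrix ι ι ℝ}
    (hF : ContinuousOn F {Y | Y.PosDef})
    (hm : ∀ Y Z : Matrix ι ι ℝ, Y.PosDef → Z.PosDef → Y ≠ Z →
      0 < ((F Y - F Z) * (Z - Y)).trace)
    {Y : Matrix ι ι ℝ} (hY : Y.PosDef) {r₀ : ℝ} (hr₀ : 0 < r₀) :
    ∃ η : ℝ, 0 < η ∧ ∀ Z : Matrix ι ι ℝ, Z.PosDef → r₀ ≤ ‖Z - Y‖ → η ≤ ‖F Z - F Y‖ := by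
  obtain ⟨δ, hδ, hball⟩ := exists_pd_nhd hY
  set r := min δ r₀ with hr
  have hr0 : 0 < r := lt_min hδ hr₀
  set K : Set (Matrix ι ι ℝ) := Metric.sphere 0 1 ∩ {U | Uᵀ = U} with hKdef
  have hK : IsCompact K := by
    have : ProperSpace (Matrix ι ι ℝ) := FiniteDimensional.proper ℝ _
    exact (isCompact_sphere 0 1).inter_right (isClosed_eq (by fun_prop) (by fun_prop))
  have hpd : ∀ U ∈ K, (Y + r • U).PosDef := by
    rintro U ⟨hU1, hU2⟩
    refine hball _ (by rw [transpose_smul, hU2]) fun i j => ?_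
    have h1 : ‖U‖ = 1 := by simpa using hU1
    have h2 : |U i j| ≤ 1 := h1 ▸ Matrix.norm_entry_le_entrywise_sup_norm U
    rw [Matrix.smul_apply, smul_eq_mul, abs_mul, abs_of_pos hr0]
    calc r * |U i j| ≤ r * 1 := by gcongr
      _ ≤ δ := by rw [mul_one]; exact min_le_left _ _
  have hcont : ContinuousOn (fun U => ((F Y - F (Y + r • U)) * U).trace) K := by
    have c1 : ContinuousOn (fun U => F (Y + r • U)) K :=
      hF.comp (by fun_prop) hpd
    have c2 : ContinuousOn (fun U => (F Y - F (Y + r • U)) * U) K :=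
      (continuousOn_const.sub c1).mul continuousOn_id
    have ct : Continuous (fun A : Matrix ι ι ℝ => A.trace) := continuous_id.matrix_trace
    exact ct.comp_continuousOn c2
  have hpos : ∀ U ∈ K, 0 < ((F Y - F (Y + r • U)) * U).trace := by
    intro U hU
    have hne : U ≠ 0 := by
      rintro rfl
      have := hU.1
      simp at this
    have := hm Y (Y + r • U) hY (hpd U hU) (by
      intro h
      have : r • U = 0 := by simpa using h.symm
      rcases smul_eq_zero.1 this with h | h
      · exact hr0.ne' h
      · exact hne h)
    rw [add_sub_cancel_left, mul_smul_comm, trace_smul, smul_eq_mul] at this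
    exact (mul_pos_iff_of_pos_left hr0).1 this
  obtain ⟨m, hm0, hmK⟩ := hK.exists_forall_le' hcont hpos
  set N : ℝ := (Fintype.card ι) ^ 2 + 1
  have hN : 0 < N := by positivity
  refine ⟨m / N, by positivity, fun Z hZ hle => ?_⟩
  set t := ‖Z - Y‖ with ht
  have ht0 : 0 < t := hr₀.trans_le hle
  have hrt : r ≤ t := (min_le_right _ _).trans hle
  set U := t⁻¹ • (Z - Y) with hU
  have hZU : Z = Y + t • U := by
    rw [hU, smul_smul, mul_inv_cancel₀ ht0.ne', one_smul]; abel
  have hUn : ‖U‖ = 1 := by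
    rw [hU, norm_smul, norm_inv, Real.norm_of_nonneg ht0.le, ← ht, inv_mul_cancel₀ ht0.ne']
  have hUK : U ∈ K := by
    refine ⟨by simpa using hUn, ?_⟩
    show Uᵀ = U
    rw [hU, transpose_smul, transpose_sub, pd_symm hZ, pd_symm hY]
  have h1 := hmK U hUK
  -- `τ ↦ ⟨F (Y + τ U), U⟩` is nonincreasing, so the value at `τ = r` controls that at `τ = t`
  have h2 : (F Z * U).trace ≤ (F (Y + r • U) * U).trace := by
    rcases hrt.eq_or_lt with h | h
    · rw [hZU, ← h]
    · have := hm (Y + r • U) Z (hpd U hUK) hZ (by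
        intro he
        rw [hZU] at he
        have : (t - r) • U = 0 := by
          rw [sub_smul, sub_eq_zero]; exact (add_left_cancel he).symm
        rcases smul_eq_zero.1 this with h' | h'
        · linarith
        · rw [h'] at hUn; simp at hUn)
      have e : Z - (Y + r • U) = (t - r) • U := by rw [hZU, sub_smul]; abel
      rw [e, mul_smul_comm, trace_smul, smul_eq_mul] at this
      have := (mul_pos_iff_of_pos_left (sub_pos.2 h)).1 this
      rw [sub_mul, trace_sub] at this
      linarith
  rw [sub_mul, trace_sub] at h1
  have h3 := trace_mul_le_norm (F Y - F Z) U
  rw [sub_mul, trace_sub, hUn, mul_one, norm_sub_rev] at h3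
  rw [div_le_iff₀ hN]
  have := norm_nonneg (F Z - F Y)
  simp only [N]
  nlinarith

/-- A right inverse of a continuous strictly monotone map on the cone is continuous; this plays
the part of invariance of domain. -/
theorem inverse_continuous {F : Matrix ι ι ℝ → Matrix ι ι ℝ}
    (hF : ContinuousOn F {Y | Y.PosDef})
    (hm : ∀ Y Z : Matrix ι ι ℝ, Y.PosDef → Z.PosDef → Y ≠ Z →
      0 < ((F Y - F Z) * (Z - Y)).trace)
    (g : {S : Matrix ι ι ℝ // S.PosDef} → {S : Matrix ι ι ℝ // S.PosDef})
    (hg : ∀ S, F (g S) = S) : Continuous g := by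
  rw [continuous_iff_continuousAt]
  intro S
  rw [ContinuousAt, tendsto_subtype_rng]
  refine Metric.tendsto_nhds.2 ?_
  intro r hr
  obtain ⟨η, hη, h⟩ := monotone_separation hF hm (g S).2 hr
  have h1 : Tendsto (fun T : {S : Matrix ι ι ℝ // S.PosDef} => (T : Matrix ι ι ℝ)) (𝓝 S) (𝓝 S) :=
    continuous_subtype_val.tendsto S
  filter_upwards [Metric.tendsto_nhds.1 h1 η hη] with T hT
  by_contra hcon
  have := h (g T) (g T).2 (by rw [← dist_eq_norm]; exact not_lt.1 hcon)
  rw [hg, hg, ← dist_eq_norm] at this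
  exact absurd hT (not_lt.2 this)

end Monotone

/-! ### The reduced steering map -/

section Integral
variable {ι : Type*} [Fintype ι] [DecidableEq ι]

/-- The entrywise integral over `[0,1]` of a matrix-valued function. -/
noncomputable def matInt (H : ℝ → Matrix ι ι ℝ) : Matrix ι ι ℝ :=
  Matrix.of fun i j => ∫ s in (0:ℝ)..1, H s i j

theorem cont_entry {H : ℝ → Matrix ι ι ℝ} (hH : Continuous H) (i j : ι) :
    IntervalIntegrable (fun s => H s i j) MeasureTheory.volume 0 1 :=
  (hH.matrix_elem i j).intervalIntegrable _ _

theorem trace_matInt_mul {H : ℝ → Matrix ι ι ℝ} (hH : Continuous H) (U : Matrix ι ι ℝ) :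
    (matInt H * U).trace = ∫ s in (0:ℝ)..1, (H s * U).trace := by
  simp only [trace, diag_apply, Matrix.mul_apply, matInt, of_apply]
  rw [intervalIntegral.integral_finsetSum]
  · refine Finset.sum_congr rfl fun i _ => ?_
    rw [intervalIntegral.integral_finsetSum]
    · refine Finset.sum_congr rfl fun j _ => ?_
      rw [intervalIntegral.integral_mul_const]
    · intro j _
      exact (cont_entry hH i j).mul_const _
  · intro i _
    refine Continuous.intervalIntegrable ?_ _ _
    exact continuous_finsetSum _ fun j _ => (hH.matrix_elem i j).mul continuous_const

theorem matInt_congr {H : ℝ → Matrix ι ι ℝ} (hH : Continuous H) (U V : Matrix ι ι ℝ) :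
    U * matInt H * V = matInt fun s => U * H s * V := by
  ext i j
  simp only [Matrix.mul_apply, matInt, of_apply]
  rw [intervalIntegral.integral_finsetSum]
  · refine Finset.sum_congr rfl fun k _ => ?_
    rw [intervalIntegral.integral_mul_const, intervalIntegral.integral_finsetSum]
    · congr 1
      refine Finset.sum_congr rfl fun l _ => ?_
      rw [intervalIntegral.integral_const_mul]
    · intro l _
      exact (cont_entry hH l k).const_mul _
  · intro k _
    refine Continuous.intervalIntegrable ?_ _ _
    exact (continuous_finsetSum _ fun l _ =>
      continuous_const.mul (hH.matrix_elem l k)).mul continuous_const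

theorem quad_eq_trace (A : Matrix ι ι ℝ) (x : ι → ℝ) :
    x ⬝ᵥ A *ᵥ x = (A * vecMulVec x x).trace := by
  rw [mul_vecMulVec, trace_vecMulVec, dotProduct_comm]

theorem matInt_psd {H : ℝ → Matrix ι ι ℝ} (hH : Continuous H) (hp : ∀ s, (H s).PosSemidef) :
    (matInt H).PosSemidef := by
  refine psd_of ?_ fun x => ?_
  · ext i j
    simp only [matInt, transpose_apply, of_apply]
    refine intervalIntegral.integral_congr fun s _ => ?_
    exact congrFun (congrFun (psd_symm (hp s)) i) j
  · rw [quad_eq_trace, trace_matInt_mul hH]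
    refine intervalIntegral.integral_nonneg zero_le_one fun s _ => ?_
    rw [← quad_eq_trace]; exact psd_quad (hp s) x

/-- Standing assumptions on the data of the reduced steering problem: `E` is the Gramian over
`[0,1]`, `S0` the initial covariance, `M s` the Gramian over `[s,1]` and `W s` the noise intensity
in the reference coordinates. The functions are extended to the whole line. -/
structure SteerData (E S0 : Matrix ι ι ℝ) (M W : ℝ → Matrix ι ι ℝ) : Prop where
  hE : E.PosDef
  hS : S0.PosDef
  cM : Continuous M
  cW : Continuous W
  hM : ∀ s, (M s).PosSemidef
  hL : ∀ s, (E - M s).PosSemidef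
  hW : ∀ s, (W s).PosSemidef
  hMpd : ∀ s, 0 ≤ s → s < 1 → (M s).PosDef

/-- The terminal covariance in the chart `Y`, up to congruence by a fixed invertible matrix: the
initial covariance `S0` enters with `M = E`, the noise at time `s` with `M s` and `W s`. -/
noncomputable def Fmap (E S0 : Matrix ι ι ℝ) (M W : ℝ → Matrix ι ι ℝ) (Y : Matrix ι ι ℝ) :
    Matrix ι ι ℝ :=
  grd E E S0 Y + matInt fun s => grd E (M s) (W s) Y

/-- The potential of `Fmap`. -/
noncomputable def hmap (E S0 : Matrix ι ι ℝ) (M W : ℝ → Matrix ι ι ℝ) (Y : Matrix ι ι ℝ) : ℝ :=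
  pot E E S0 Y + ∫ s in (0:ℝ)..1, pot E (M s) (W s) Y

namespace SteerData
variable {E S0 : Matrix ι ι ℝ} {M W : ℝ → Matrix ι ι ℝ}

theorem hLE (_d : SteerData E S0 M W) : (E - E).PosSemidef := by simpa using PosSemidef.zero

theorem cont_Jinv (d : SteerData E S0 M W) :
    Continuous fun x : {Y : Matrix ι ι ℝ // Y.PosDef} × ℝ => (Jmat E (M x.2) x.1)⁻¹ := by
  refine continuous_inv_of_isUnit ?_ fun x => Jmat_isUnit d.hE (d.hM _) (d.hL _) x.1.2
  have h1 : Continuous fun x : {Y : Matrix ι ι ℝ // Y.PosDef} × ℝ => M x.2 :=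
    d.cM.comp continuous_snd
  have h2 : Continuous fun x : {Y : Matrix ι ι ℝ // Y.PosDef} × ℝ => (x.1 : Matrix ι ι ℝ) :=
    continuous_subtype_val.comp continuous_fst
  exact continuous_const.add (h1.mul (h2.sub continuous_const))

theorem cont_grd (d : SteerData E S0 M W) :
    Continuous fun x : {Y : Matrix ι ι ℝ // Y.PosDef} × ℝ => grd E (M x.2) (W x.2) x.1 :=
  (d.cont_Jinv.mul (d.cW.comp continuous_snd)).mul d.cont_Jinv.matrix_transpose

theorem cont_Jinv_s (d : SteerData E S0 M W) {Y : Matrix ι ι ℝ} (hY : Y.PosDef) :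
    Continuous fun s => (Jmat E (M s) Y)⁻¹ :=
  continuous_inv_of_isUnit (continuous_const.add (d.cM.mul continuous_const))
    fun s => Jmat_isUnit d.hE (d.hM s) (d.hL s) hY

theorem cont_grd_s (d : SteerData E S0 M W) {Y : Matrix ι ι ℝ} (hY : Y.PosDef) :
    Continuous fun s => grd E (M s) (W s) Y :=
  ((d.cont_Jinv_s hY).mul d.cW).mul (d.cont_Jinv_s hY).matrix_transpose

theorem cont_pot_s (d : SteerData E S0 M W) {Y : Matrix ι ι ℝ} (hY : Y.PosDef) :
    Continuous fun s => pot E (M s) (W s) Y :=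
  Continuous.matrix_trace ((continuous_const.mul (d.cont_Jinv_s hY)).mul d.cW)

theorem Fmap_cont (d : SteerData E S0 M W) : ContinuousOn (Fmap E S0 M W) {Y | Y.PosDef} := by
  rw [continuousOn_iff_continuous_domRestrict]
  have h1 : Continuous fun Y : {Y : Matrix ι ι ℝ // Y.PosDef} => (Jmat E E (Y : Matrix ι ι ℝ))⁻¹ := by
    refine continuous_inv_of_isUnit ?_ fun Y => Jmat_isUnit d.hE d.hE.posSemidef d.hLE Y.2
    exact continuous_const.add (continuous_const.mul (continuous_subtype_val.sub continuous_const))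
  refine Continuous.add ((h1.mul continuous_const).mul h1.matrix_transpose) ?_
  refine continuous_matrix fun i j => ?_
  exact intervalIntegral.continuous_parametric_intervalIntegral_of_continuous'
    (f := fun (Y : {Y : Matrix ι ι ℝ // Y.PosDef}) s => grd E (M s) (W s) Y i j)
    (d.cont_grd.matrix_elem i j) 0 1

theorem Fmap_pd (d : SteerData E S0 M W) {Y : Matrix ι ι ℝ} (hY : Y.PosDef) :
    (Fmap E S0 M W Y).PosDef :=
  (grd_pd d.hE d.hS hY).add_posSemidef
    (matInt_psd (d.cont_grd_s hY) fun s => grd_psd (d.hW s))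

theorem int_pot_le (d : SteerData E S0 M W) {Y Z : Matrix ι ι ℝ} (hY : Y.PosDef)
    (hZ : Z.PosDef) :
    ∫ s in (0:ℝ)..1, pot E (M s) (W s) Z ≤ (∫ s in (0:ℝ)..1, pot E (M s) (W s) Y) +
      ((matInt fun s => grd E (M s) (W s) Y) * (Z - Y)).trace := by
  have c1 : Continuous fun s => (grd E (M s) (W s) Y * (Z - Y)).trace :=
    Continuous.matrix_trace ((d.cont_grd_s hY).mul continuous_const)
  rw [trace_matInt_mul (d.cont_grd_s hY), ← intervalIntegral.integral_add
    ((d.cont_pot_s hY).intervalIntegrable _ _) (c1.intervalIntegrable _ _)]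
  refine intervalIntegral.integral_mono_on zero_le_one
    ((d.cont_pot_s hZ).intervalIntegrable _ _)
    (((d.cont_pot_s hY).add c1).intervalIntegrable _ _) fun s _ => ?_
  exact pot_le d.hE (d.hM s) (d.hL s) (d.hW s) hY hZ

theorem hmap_lt (d : SteerData E S0 M W) {Y Z : Matrix ι ι ℝ} (hY : Y.PosDef)
    (hZ : Z.PosDef) (hne : Z ≠ Y) :
    hmap E S0 M W Z < hmap E S0 M W Y + (Fmap E S0 M W Y * (Z - Y)).trace := by
  have h1 := pot_lt d.hE d.hS hY hZ hne
  have h2 := d.int_pot_le hY hZ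
  rw [Fmap, hmap, hmap, add_mul, trace_add]
  linarith

theorem hmap_le (d : SteerData E S0 M W) {Y Z : Matrix ι ι ℝ} (hY : Y.PosDef)
    (hZ : Z.PosDef) :
    hmap E S0 M W Z ≤ hmap E S0 M W Y + (Fmap E S0 M W Y * (Z - Y)).trace := by
  by_cases hne : Z = Y
  · subst hne; simp
  · exact (d.hmap_lt hY hZ hne).le

theorem Fmap_mono (d : SteerData E S0 M W) (Y Z : Matrix ι ι ℝ) (hY : Y.PosDef)
    (hZ : Z.PosDef) (hne : Y ≠ Z) :
    0 < ((Fmap E S0 M W Y - Fmap E S0 M W Z) * (Z - Y)).trace := by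
  have h1 := d.hmap_lt hY hZ hne.symm
  have h2 := d.hmap_lt hZ hY hne
  rw [← neg_sub Z Y, mul_neg, trace_neg] at h2
  rw [sub_mul, trace_sub]
  linarith

/-! ### Coercivity of the potential and surjectivity -/

/-- The matrices `E⁻¹ + (k + 1) I` serve as test points at which the noise part of `Fmap` becomes
small as `k → ∞`. -/
theorem probe_pd (d : SteerData E S0 M W) (k : ℕ) :
    (E⁻¹ + ((k : ℝ) + 1) • (1 : Matrix ι ι ℝ)).PosDef :=
  d.hE.inv.add (PosDef.one.smul (by positivity))

theorem probe_J (k : ℕ) (N : Matrix ι ι ℝ) :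
    Jmat E N (E⁻¹ + ((k : ℝ) + 1) • (1 : Matrix ι ι ℝ)) = 1 + ((k : ℝ) + 1) • N := by
  simp [Jmat]

/-- If `Jᵀ J ⪰ I` then `tr (J⁻¹ V J⁻ᵀ) ≤ tr V`, up to a dimensional factor; used as a dominating
bound. -/
theorem contraction_trace {J V : Matrix ι ι ℝ} (hJ : IsUnit J)
    (hc : (Jᵀ * J - 1).PosSemidef) (hV : V.PosSemidef) :
    (J⁻¹ * V * J⁻¹ᵀ).trace ≤ (V).trace * (Fintype.card ι : ℝ) := by
  have h1 : (1 - J⁻¹ᵀ * J⁻¹).PosSemidef := by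
    have := psd_congr hc J⁻¹ᵀ
    have e : J⁻¹ᵀ * Jᵀ = 1 := by rw [← transpose_mul, unit_mul_inv hJ, transpose_one]
    rw [transpose_transpose, mul_sub, sub_mul, ← Matrix.mul_assoc, e, Matrix.one_mul,
      unit_mul_inv hJ, Matrix.mul_one] at this
    exact this
  have h2 : (J⁻¹ * V * J⁻¹ᵀ).trace = (V * (J⁻¹ᵀ * J⁻¹)).trace := by
    rw [Matrix.mul_assoc, Matrix.trace_mul_comm, Matrix.mul_assoc]
  have h3 := trace_mul_nonneg hV h1
  rw [mul_sub, trace_sub, Matrix.mul_one, ← h2] at h3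
  have h4 := hV.trace_nonneg
  by_cases hc : IsEmpty ι
  · simp [trace]
  · have : Nonempty ι := not_isEmpty_iff.1 hc
    have : (1:ℝ) ≤ Fintype.card ι := by exact_mod_cast Fintype.card_pos
    nlinarith

theorem probe_contr {N : Matrix ι ι ℝ} (hN : N.PosSemidef) (k : ℕ) :
    ((1 + ((k : ℝ) + 1) • N)ᵀ * (1 + ((k : ℝ) + 1) • N) - 1).PosSemidef := by
  set c : ℝ := (k : ℝ) + 1
  have hc : 0 ≤ c := by positivity
  clear_value c
  have e : (1 + c • N)ᵀ * (1 + c • N) - 1 = (2 * c) • N + (c • N) * 1 * (c • N)ᵀ := by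
    rw [transpose_add, transpose_one, transpose_smul, psd_symm hN, Matrix.mul_one, add_mul,
      Matrix.one_mul, mul_add, Matrix.mul_one, two_mul, add_smul]
    abel
  rw [e]
  exact (hN.smul (by positivity)).add (psd_congr PosSemidef.one _)

/-- For `s < 1` the matrix `M s` is positive definite, so `J = I + (k + 1) M s` tends to infinity
and the noise contribution at time `s` tends to zero. -/
theorem probe_tendsto (d : SteerData E S0 M W) {s : ℝ} (h0 : 0 ≤ s) (h1 : s < 1) :
    Tendsto (fun k : ℕ => (grd E (M s) (W s) (E⁻¹ + ((k : ℝ) + 1) • (1 : Matrix ι ι ℝ))).trace)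
      atTop (𝓝 0) := by
  have hpd := d.hMpd s h0 h1
  have hε : Tendsto (fun k : ℕ => ((k : ℝ) + 1)⁻¹) atTop (𝓝 0) := by
    simpa using tendsto_one_div_add_atTop_nhds_zero_nat (𝕜 := ℝ)
  have hlim : Tendsto (fun k : ℕ => ((k : ℝ) + 1)⁻¹ •
      (((k : ℝ) + 1)⁻¹ • (1 : Matrix ι ι ℝ) + M s)⁻¹) atTop (𝓝 0) := by
    have a : Tendsto (fun k : ℕ => ((k : ℝ) + 1)⁻¹ • (1 : Matrix ι ι ℝ) + M s) atTop (𝓝 (M s)) := by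
      simpa using (hε.smul_const (1 : Matrix ι ι ℝ)).add_const (M s)
    have b : Tendsto (fun k : ℕ => (((k : ℝ) + 1)⁻¹ • (1 : Matrix ι ι ℝ) + M s)⁻¹) atTop
        (𝓝 (M s)⁻¹) := by
      refine Tendsto.comp (continuousAt_matrix_inv (M s) ?_).tendsto a
      have : (M s).det ≠ 0 := hpd.det_pos.ne'
      rw [Ring.inverse_eq_inv']
      exact continuousAt_inv₀ this
    simpa using hε.smul b
  have hJ : ∀ k : ℕ, (Jmat E (M s) (E⁻¹ + ((k : ℝ) + 1) • (1 : Matrix ι ι ℝ)))⁻¹ =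
      ((k : ℝ) + 1)⁻¹ • (((k : ℝ) + 1)⁻¹ • (1 : Matrix ι ι ℝ) + M s)⁻¹ := by
    intro k
    have hk : ((k : ℝ) + 1) ≠ 0 := by positivity
    rw [probe_J]
    have hu : IsUnit (((k : ℝ) + 1)⁻¹ • (1 : Matrix ι ι ℝ) + M s) :=
      ((PosDef.one.smul (by positivity)).add hpd).isUnit
    refine Matrix.inv_eq_right_inv ?_
    have : 1 + ((k : ℝ) + 1) • M s =
        ((k : ℝ) + 1) • (((k : ℝ) + 1)⁻¹ • (1 : Matrix ι ι ℝ) + M s) := by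
      rw [smul_add, smul_smul, mul_inv_cancel₀ hk, one_smul]
    rw [this, smul_mul_smul_comm, mul_inv_cancel₀ hk, one_smul, unit_mul_inv hu]
  simp only [grd, hJ]
  have ct : Continuous (fun A : Matrix ι ι ℝ => (A * W s * Aᵀ).trace) :=
    Continuous.matrix_trace (by fun_prop)
  have := (ct.tendsto 0).comp hlim
  rw [Matrix.zero_mul, Matrix.zero_mul, trace_zero] at this
  exact this

/-- Dominated convergence for the noise part of `Fmap` along the test points. -/
theorem probe_int_tendsto (d : SteerData E S0 M W) :
    Tendsto (fun k : ℕ => (matInt fun s => grd E (M s) (W s)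
      (E⁻¹ + ((k : ℝ) + 1) • (1 : Matrix ι ι ℝ))).trace) atTop (𝓝 0) := by
  have e : ∀ k : ℕ, (matInt fun s => grd E (M s) (W s)
      (E⁻¹ + ((k : ℝ) + 1) • (1 : Matrix ι ι ℝ))).trace = ∫ s in (0:ℝ)..1, (grd E (M s) (W s)
      (E⁻¹ + ((k : ℝ) + 1) • (1 : Matrix ι ι ℝ))).trace := by
    intro k
    simpa using trace_matInt_mul (d.cont_grd_s (d.probe_pd k)) 1
  simp only [e]
  have := intervalIntegral.tendsto_integral_filter_of_dominated_convergence
    (l := atTop) (μ := MeasureTheory.volume) (a := 0) (b := 1) (f := fun _ => (0:ℝ))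
    (F := fun (k : ℕ) s => (grd E (M s) (W s)
      (E⁻¹ + ((k : ℝ) + 1) • (1 : Matrix ι ι ℝ))).trace)
    (fun s => (W s).trace * (Fintype.card ι : ℝ)) ?_ ?_ ?_ ?_
  · simpa using this
  · refine Eventually.of_forall fun k => ?_
    exact (d.cont_grd_s (d.probe_pd k)).matrix_trace.aestronglyMeasurable
  · refine Eventually.of_forall fun k => Eventually.of_forall fun s _ => ?_
    rw [Real.norm_of_nonneg (grd_psd (d.hW s)).trace_nonneg]
    refine contraction_trace (Jmat_isUnit d.hE (d.hM s) (d.hL s) (d.probe_pd k)) ?_ (d.hW s)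
    rw [probe_J]
    exact probe_contr (d.hM s) k
  · exact (d.cW.matrix_trace.mul continuous_const).intervalIntegrable _ _
  · have : ∀ᵐ s : ℝ, s ≠ 1 := by simp [MeasureTheory.ae_iff]
    filter_upwards [this] with s hs hs2
    rw [Set.uIoc_of_le zero_le_one] at hs2
    exact d.probe_tendsto hs2.1.le (lt_of_le_of_ne hs2.2 hs)

theorem pot_self (d : SteerData E S0 M W) {Y : Matrix ι ι ℝ} (hY : Y.PosDef) :
    pot E E S0 Y = (E⁻¹ * S0).trace - (E⁻¹ * S0 * E⁻¹ * Y⁻¹).trace := by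
  have h : (Y - E⁻¹) * (Y⁻¹ * E⁻¹) = E⁻¹ - E⁻¹ * (Y⁻¹ * E⁻¹) := by
    rw [sub_mul, ← Matrix.mul_assoc Y, pd_mul_inv hY, Matrix.one_mul]
  rw [pot, Jmat_self d.hE, Matrix.mul_inv_rev, h, sub_mul, trace_sub]
  congr 1
  rw [Matrix.mul_assoc, Matrix.mul_assoc, Matrix.trace_mul_comm, Matrix.trace_mul_comm _ Y⁻¹]
  simp only [Matrix.mul_assoc]

/-- Upper bound for `h Y - tr (S Y)`. The initial covariance contributes `-σ tr Y⁻¹`; the noise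
potential lies below its tangent at a test point, whose slope is at most half the least
eigenvalue bound of `S`, so that `-tr (S Y)` dominates it. -/
theorem coercive (d : SteerData E S0 M W) {S : Matrix ι ι ℝ} (hS : S.PosDef) :
    ∃ C σ τ : ℝ, 0 < σ ∧ 0 < τ ∧ ∀ Y : Matrix ι ι ℝ, Y.PosDef →
      hmap E S0 M W Y - (S * Y).trace ≤ C - σ * Y⁻¹.trace - τ * Y.trace := by
  obtain ⟨l, hl, hSl⟩ := exists_sub_smul_psd hS
  obtain ⟨σ, hσ, hσ2⟩ := exists_sub_smul_psd (Y := E⁻¹ * S0 * E⁻¹) (by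
    have := pd_congr (B := E⁻¹) d.hS d.hE.inv.isUnit
    rwa [pd_symm d.hE.inv] at this)
  obtain ⟨k, hk⟩ := ((d.probe_int_tendsto).eventually (gt_mem_nhds (half_pos hl))).exists
  set Yk := E⁻¹ + ((k : ℝ) + 1) • (1 : Matrix ι ι ℝ)
  have hYk := d.probe_pd k
  set G := matInt fun s => grd E (M s) (W s) Yk
  have hG : G.PosSemidef := matInt_psd (d.cont_grd_s hYk) fun s => grd_psd (d.hW s)
  refine ⟨(E⁻¹ * S0).trace + (∫ s in (0:ℝ)..1, pot E (M s) (W s) Yk) - (G * Yk).trace,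
    σ, l / 2, hσ, half_pos hl, fun Y hY => ?_⟩
  have h1 := d.int_pot_le hYk hY
  have h2 := le_trace_mul hσ2 hY.inv.posSemidef
  have h3 := le_trace_mul hSl hY.posSemidef
  have h4 := trace_mul_le hG hY.posSemidef
  have h5 := hY.posSemidef.trace_nonneg
  have h6 : G.trace * Y.trace ≤ l / 2 * Y.trace := by gcongr
  have h7 : (G * (Y - Yk)).trace = (G * Y).trace - (G * Yk).trace := by
    rw [mul_sub, trace_sub]
  rw [hmap, d.pot_self hY]
  change _ ≤ _ + (G * (Y - Yk)).trace at h1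
  linarith

theorem entry_le_trace {Y : Matrix ι ι ℝ} (hY : Y.PosSemidef) (i j : ι) : |Y i j| ≤ Y.trace := by
  obtain ⟨C, rfl⟩ := psd_factor hY
  have e : ∀ i j, (Cᴴ * C) i j = ∑ k, C k i * C k j := fun i j => by simp [Matrix.mul_apply]
  have dn : ∀ i, 0 ≤ (Cᴴ * C) i i := fun i => by
    rw [e]; exact Finset.sum_nonneg fun k _ => mul_self_nonneg _
  have le1 : ∀ i, (Cᴴ * C) i i ≤ (Cᴴ * C).trace := fun i =>
    Finset.single_le_sum (f := fun i => (Cᴴ * C) i i) (fun i _ => dn i) (Finset.mem_univ i)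
  have h : |(Cᴴ * C) i j| ≤ ((Cᴴ * C) i i + (Cᴴ * C) j j) / 2 := by
    rw [e, e, e, ← Finset.sum_add_distrib, Finset.sum_div]
    refine (Finset.abs_sum_le_sum_abs _ _).trans (Finset.sum_le_sum fun k _ => ?_)
    rw [abs_le]
    constructor <;> nlinarith [sq_nonneg (C k i - C k j), sq_nonneg (C k i + C k j)]
  linarith [le1 i, le1 j]

theorem isCompact_slab (R : ℝ) (hR : 0 < R) :
    IsCompact {Y : Matrix ι ι ℝ | (Y - R⁻¹ • (1 : Matrix ι ι ℝ)).PosSemidef ∧ Y.trace ≤ R} := by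
  have hc : IsCompact (Set.pi Set.univ fun _ : ι => Set.pi Set.univ fun _ : ι => Set.Icc (-R) R :
      Set (Matrix ι ι ℝ)) :=
    isCompact_univ_pi fun _ => isCompact_univ_pi fun _ => isCompact_Icc
  refine hc.of_isClosed_subset ?_ ?_
  · refine IsClosed.inter (isClosed_psd.preimage (by fun_prop)) ?_
    exact isClosed_le (continuous_id.matrix_trace) continuous_const
  · rintro Y ⟨h1, h2⟩ i _ j _
    have := entry_le_trace (pd_of_sub_smul (inv_pos.2 hR) h1).posSemidef i j
    exact abs_le.1 (this.trans h2)

theorem Fmap_surj (d : SteerData E S0 M W) {S : Matrix ι ι ℝ} (hS : S.PosDef) :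
    ∃ Y : Matrix ι ι ℝ, Y.PosDef ∧ Fmap E S0 M W Y = S := by
  obtain ⟨C, σ, τ, hσ, hτ, h⟩ := d.coercive hS
  set v := hmap E S0 M W 1 - (S * 1).trace
  set N : ℝ := (Fintype.card ι : ℝ)
  have hN : 0 ≤ N := Nat.cast_nonneg _
  set R := max (N + 1) (max ((C - v) / σ) ((C - v) / τ)) with hRdef
  have hR1 : N + 1 ≤ R := le_max_left _ _
  have hR2 : (C - v) / σ ≤ R := (le_max_left _ _).trans (le_max_right _ _)
  have hR3 : (C - v) / τ ≤ R := (le_max_right _ _).trans (le_max_right _ _)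
  have hR : 0 < R := by linarith
  refine exists_preimage (h := hmap E S0 M W) (Y₀ := 1)
    (fun Y Z hY hZ => d.hmap_le hY hZ) (fun Y hY => pd_symm (d.Fmap_pd hY))
    d.Fmap_cont (pd_symm hS) (isCompact_slab R hR)
    (fun Y hY => pd_of_sub_smul (inv_pos.2 hR) hY.1) ⟨?_, ?_⟩ ?_
  · refine sub_smul_psd_of_inv_trace PosDef.one hR ?_
    simp only [inv_one, trace_one]
    linarith
  · simp only [trace_one]
    linarith
  · intro Y hY hYK
    refine (h Y hY).trans ?_
    change _ ≤ v
    have p1 := hY.inv.posSemidef.trace_nonneg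
    have p2 := hY.posSemidef.trace_nonneg
    rw [div_le_iff₀ hσ] at hR2
    rw [div_le_iff₀ hτ] at hR3
    by_cases hc : Y⁻¹.trace ≤ R
    · have hc2 : R < Y.trace := by
        by_contra hcon
        exact hYK ⟨sub_smul_psd_of_inv_trace hY hR hc, not_lt.1 hcon⟩
      nlinarith
    · rw [not_le] at hc
      nlinarith

/-- `Fmap` is a self-homeomorphism of the cone of positive definite matrices. -/
theorem exists_homeo (d : SteerData E S0 M W) :
    ∃ h : {Y : Matrix ι ι ℝ // Y.PosDef} ≃ₜ {S : Matrix ι ι ℝ // S.PosDef},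
      ∀ Y, (h Y : Matrix ι ι ℝ) = Fmap E S0 M W Y := by
  choose g hg1 hg2 using fun S : {S : Matrix ι ι ℝ // S.PosDef} => d.Fmap_surj S.2
  have hgc : Continuous (fun S : {S : Matrix ι ι ℝ // S.PosDef} =>
      (⟨g S, hg1 S⟩ : {S : Matrix ι ι ℝ // S.PosDef})) :=
    inverse_continuous d.Fmap_cont d.Fmap_mono _ hg2
  have hinj : ∀ Y Z : Matrix ι ι ℝ, Y.PosDef → Z.PosDef →
      Fmap E S0 M W Y = Fmap E S0 M W Z → Y = Z := by
    intro Y Z hY hZ h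
    by_contra hne
    have := d.Fmap_mono Y Z hY hZ hne
    simp [h] at this
  refine ⟨⟨⟨fun Y => ⟨Fmap E S0 M W Y, d.Fmap_pd Y.2⟩, fun S => ⟨g S, hg1 S⟩, ?_, ?_⟩, ?_, hgc⟩,
    fun Y => rfl⟩
  · intro Y
    exact Subtype.ext (hinj _ _ (hg1 _) Y.2 (hg2 _))
  · intro S
    exact Subtype.ext (hg2 S)
  · exact (continuousOn_iff_continuous_domRestrict.1 d.Fmap_cont).subtype_mk _

end SteerData
end Integral

/-! ### Matrix derivatives and the Hamiltonian system -/

section MatDeriv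
variable {ι κ μ : Type*} [Fintype ι] [Fintype κ] [Fintype μ]

/-- Entrywise derivative of a matrix-valued function of a real variable. -/
def HD {ι κ : Type*} (X : ℝ → Matrix ι κ ℝ) (X' : Matrix ι κ ℝ) (t : ℝ) : Prop :=
  ∀ i j, HasDerivAt (fun τ => X τ i j) (X' i j) t

namespace HD

theorem mul {X : ℝ → Matrix ι κ ℝ} {X' : Matrix ι κ ℝ} {Y : ℝ → Matrix κ μ ℝ}
    {Y' : Matrix κ μ ℝ} {t : ℝ} (hX : HD X X' t) (hY : HD Y Y' t) :
    HD (fun τ => X τ * Y τ) (X' * Y t + X t * Y') t := by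
  intro i j
  simp only [Matrix.mul_apply, Matrix.add_apply, ← Finset.sum_add_distrib]
  exact HasDerivAt.fun_sum fun k _ => (hX i k).mul (hY k j)

theorem add {X Y : ℝ → Matrix ι κ ℝ} {X' Y' : Matrix ι κ ℝ} {t : ℝ} (hX : HD X X' t)
    (hY : HD Y Y' t) : HD (fun τ => X τ + Y τ) (X' + Y') t :=
  fun i j => (hX i j).add (hY i j)

theorem sub {X Y : ℝ → Matrix ι κ ℝ} {X' Y' : Matrix ι κ ℝ} {t : ℝ} (hX : HD X X' t)
    (hY : HD Y Y' t) : HD (fun τ => X τ - Y τ) (X' - Y') t :=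
  fun i j => (hX i j).sub (hY i j)

theorem neg {X : ℝ → Matrix ι κ ℝ} {X' : Matrix ι κ ℝ} {t : ℝ} (hX : HD X X' t) :
    HD (fun τ => -X τ) (-X') t :=
  fun i j => (hX i j).neg

theorem transpose {X : ℝ → Matrix ι κ ℝ} {X' : Matrix ι κ ℝ} {t : ℝ} (hX : HD X X' t) :
    HD (fun τ => (X τ)ᵀ) X'ᵀ t :=
  fun i j => hX j i

theorem const (K : Matrix ι κ ℝ) (t : ℝ) : HD (fun _ => K) 0 t :=
  fun i j => hasDerivAt_const t (K i j)

theorem mul_const {X : ℝ → Matrix ι κ ℝ} {X' : Matrix ι κ ℝ} {t : ℝ} (hX : HD X X' t)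
    (K : Matrix κ μ ℝ) : HD (fun τ => X τ * K) (X' * K) t := by
  simpa using hX.mul (HD.const K t)

theorem continuousAt {X : ℝ → Matrix ι κ ℝ} {X' : Matrix ι κ ℝ} {t : ℝ} (hX : HD X X' t) :
    ContinuousAt X t :=
  tendsto_pi_nhds.2 fun i => tendsto_pi_nhds.2 fun j => (hX i j).continuousAt

theorem iff_slope {X : ℝ → Matrix ι κ ℝ} {X' : Matrix ι κ ℝ} {t : ℝ} :
    HD X X' t ↔ Tendsto (fun τ => (τ - t)⁻¹ • (X τ - X t)) (𝓝[≠] t) (𝓝 X') := by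
  have : (Tendsto (fun τ => (τ - t)⁻¹ • (X τ - X t)) (𝓝[≠] t) (𝓝 X')) ↔
      ∀ i j, Tendsto (fun τ => ((τ - t)⁻¹ • (X τ - X t)) i j) (𝓝[≠] t) (𝓝 (X' i j)) :=
    tendsto_pi_nhds.trans (forall_congr' fun i => tendsto_pi_nhds)
  rw [this]
  refine forall_congr' fun i => forall_congr' fun j => ?_
  rw [hasDerivAt_iff_tendsto_slope]
  rfl

theorem inv [DecidableEq ι] {X : ℝ → Matrix ι ι ℝ} {X' : Matrix ι ι ℝ} {t : ℝ} (hX : HD X X' t)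
    (hu : IsUnit (X t)) : HD (fun τ => (X τ)⁻¹) (-((X t)⁻¹ * X' * (X t)⁻¹)) t := by
  have hdet : (X t).det ≠ 0 := ((Matrix.isUnit_iff_isUnit_det _).1 hu).ne_zero
  have hcinv : ContinuousAt (fun τ => (X τ)⁻¹) t := by
    refine ContinuousAt.comp (g := Inv.inv) (continuousAt_matrix_inv _ ?_) hX.continuousAt
    rw [Ring.inverse_eq_inv']
    exact continuousAt_inv₀ hdet
  have hev : ∀ᶠ τ in 𝓝 t, (X τ).det ≠ 0 := by
    have : ContinuousAt (fun τ => (X τ).det) t :=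
      ContinuousAt.comp (g := det) (continuous_id.matrix_det.continuousAt) hX.continuousAt
    exact this.eventually_ne hdet
  rw [iff_slope] at hX ⊢
  have h1 : Tendsto (fun τ => -((X τ)⁻¹ * ((τ - t)⁻¹ • (X τ - X t)) * (X t)⁻¹)) (𝓝[≠] t)
      (𝓝 (-((X t)⁻¹ * X' * (X t)⁻¹))) :=
    (((hcinv.tendsto.mono_left nhdsWithin_le_nhds).mul hX).mul_const _).neg
  refine h1.congr' ?_
  filter_upwards [hev.filter_mono nhdsWithin_le_nhds] with τ hτ
  have hτu : IsUnit (X τ) := (Matrix.isUnit_iff_isUnit_det _).2 (isUnit_iff_ne_zero.2 hτ)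
  rw [mul_smul_comm, smul_mul_assoc, ← smul_neg, mul_sub, sub_mul, unit_inv_mul hτu,
    Matrix.mul_assoc _ (X t), unit_mul_inv hu, Matrix.one_mul, Matrix.mul_one, neg_sub]

theorem quad {X : ℝ → Matrix ι ι ℝ} {X' : Matrix ι ι ℝ} {t : ℝ} (hX : HD X X' t) (v : ι → ℝ) :
    HasDerivAt (fun τ => v ⬝ᵥ X τ *ᵥ v) (v ⬝ᵥ X' *ᵥ v) t := by
  simp only [dotProduct, mulVec]
  exact HasDerivAt.fun_sum fun i _ => HasDerivAt.const_mul _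
    (HasDerivAt.fun_sum fun j _ => (hX i j).mul_const _)

theorem eq_zero {X : ℝ → Matrix ι κ ℝ} {X' : Matrix ι κ ℝ} {t : ℝ} (hX : HD X X' t)
    (h : ∀ᶠ τ in 𝓝 t, X τ = 0) : X' = 0 := by
  ext i j
  have h2 : (fun τ => X τ i j) =ᶠ[𝓝 t] fun _ => (0:ℝ) := by
    filter_upwards [h] with τ hτ
    rw [hτ]; rfl
  exact (hX i j).unique ((hasDerivAt_const t (0:ℝ)).congr_of_eventuallyEq h2)

theorem const_of_zero {X : ℝ → Matrix ι κ ℝ} (h : ∀ t, HD X 0 t) (s t : ℝ) : X s = X t := by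
  ext i j
  exact is_const_of_deriv_eq_zero (fun τ => (h τ i j).differentiableAt)
    (fun τ => (h τ i j).deriv) s t

theorem congr_deriv {X : ℝ → Matrix ι κ ℝ} {X' X'' : Matrix ι κ ℝ} {t : ℝ} (hX : HD X X' t)
    (h : X' = X'') : HD X X'' t := h ▸ hX

end HD
end MatDeriv

section Hamiltonian
variable {ι : Type*} [Fintype ι] [DecidableEq ι]

/-- `(X, Y)` solves the matrix Hamiltonian system `X' = A X - G Y`, `Y' = -Q X - Aᵀ Y`. -/
def HamSol (A G Q X Y : ℝ → Matrix ι ι ℝ) : Prop :=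
  (∀ t, HD X (A t * X t - G t * Y t) t) ∧ ∀ t, HD Y (-(Q t * X t) - (A t)ᵀ * Y t) t

variable {A G Q : ℝ → Matrix ι ι ℝ}

theorem HamSol.comb {X Y X₂ Y₂ : ℝ → Matrix ι ι ℝ} (h : HamSol A G Q X Y)
    (h₂ : HamSol A G Q X₂ Y₂) (K N : Matrix ι ι ℝ) :
    HamSol A G Q (fun t => X t * K + X₂ t * N) (fun t => Y t * K + Y₂ t * N) := by
  refine ⟨fun t => ?_, fun t => ?_⟩
  · refine (((h.1 t).mul_const K).add ((h₂.1 t).mul_const N)).congr_deriv ?_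
    noncomm_ring
  · refine (((h.2 t).mul_const K).add ((h₂.2 t).mul_const N)).congr_deriv ?_
    noncomm_ring

/-- The symplectic pairing of two solutions of the Hamiltonian system is constant in time. -/
theorem HamSol.wronskian (hG : ∀ t, (G t)ᵀ = G t) (hQ : ∀ t, (Q t)ᵀ = Q t)
    {X Y X₂ Y₂ : ℝ → Matrix ι ι ℝ} (h : HamSol A G Q X Y) (h₂ : HamSol A G Q X₂ Y₂) (s t : ℝ) :
    (X s)ᵀ * Y₂ s - (Y s)ᵀ * X₂ s = (X t)ᵀ * Y₂ t - (Y t)ᵀ * X₂ t := by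
  refine HD.const_of_zero (X := fun t => (X t)ᵀ * Y₂ t - (Y t)ᵀ * X₂ t) (fun τ => ?_) s t
  refine (((h.1 τ).transpose.mul (h₂.2 τ)).sub ((h.2 τ).transpose.mul (h₂.1 τ))).congr_deriv ?_
  simp only [transpose_sub, transpose_mul, transpose_neg, transpose_transpose, hG, hQ]
  noncomm_ring

/-- Integrating a Hamiltonian solution with `X = Y = 1` at time `1` backwards, `X` stays
invertible, because `Xᵀ Y` is nonincreasing in the Loewner order. -/
theorem HamSol.isUnit_of_terminal (hG : ∀ t, (G t).PosSemidef) (hQ : ∀ t, (Q t).PosSemidef)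
    {X Y : ℝ → Matrix ι ι ℝ} (h : HamSol A G Q X Y) (hX1 : X 1 = 1) (hY1 : Y 1 = 1)
    {t : ℝ} (ht : t ≤ 1) : IsUnit (X t) := by
  rw [← Matrix.mulVec_injective_iff_isUnit, ← Matrix.coe_mulVecLin, ← LinearMap.ker_eq_bot,
    LinearMap.ker_eq_bot']
  intro v hv
  rw [Matrix.coe_mulVecLin] at hv
  have hder : ∀ τ, HasDerivAt (fun τ => v ⬝ᵥ ((X τ)ᵀ * Y τ) *ᵥ v)
      (v ⬝ᵥ (-((Y τ)ᵀ * G τ * (Y τ)ᵀᵀ + (X τ)ᵀ * Q τ * (X τ)ᵀᵀ)) *ᵥ v) τ := by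
    intro τ
    refine HD.quad (((h.1 τ).transpose.mul (h.2 τ)).congr_deriv ?_) v
    simp only [transpose_sub, transpose_mul, transpose_transpose, psd_symm (hG τ)]
    noncomm_ring
  have hanti : Antitone (fun τ => v ⬝ᵥ ((X τ)ᵀ * Y τ) *ᵥ v) := by
    refine antitone_of_deriv_nonpos (fun τ => (hder τ).differentiableAt) fun τ => ?_
    rw [(hder τ).deriv, neg_mulVec, dotProduct_neg]
    exact neg_nonpos.2 (psd_quad ((psd_congr (hG τ) _).add (psd_congr (hQ τ) _)) v)
  have h1 := hanti ht
  have h2 : v ⬝ᵥ ((X t)ᵀ * Y t) *ᵥ v = 0 := by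
    rw [← mulVec_mulVec, ← mulVec_dot, hv, zero_dotProduct]
  simp only [hX1, hY1, transpose_one, Matrix.mul_one, one_mulVec, h2] at h1
  exact dotProduct_self_eq_zero.1 (le_antisymm h1 (dot_self_nonneg v))

/-- The blocks of the transition matrix of a Hamiltonian system. -/
structure HamBlocks (A G Q a b c d : ℝ → Matrix ι ι ℝ) : Prop where
  hac : HamSol A G Q a c
  hbd : HamSol A G Q b d
  a0 : a 0 = 1
  b0 : b 0 = 0
  c0 : c 0 = 0
  d0 : d 0 = 1
  hG : ∀ t, (G t).PosSemidef
  hQ : ∀ t, (Q t).PosSemidef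

namespace HamBlocks
variable {a b c d : ℝ → Matrix ι ι ℝ}

/-- The symplectic relations, i.e. the transition matrix has inverse
`[[dᵀ, -bᵀ], [-cᵀ, aᵀ]]`. -/
theorem symplectic (H : HamBlocks A G Q a b c d) (t : ℝ) :
    a t * (d t)ᵀ - b t * (c t)ᵀ = 1 ∧ a t * (b t)ᵀ = b t * (a t)ᵀ ∧
      c t * (d t)ᵀ = d t * (c t)ᵀ ∧ d t * (a t)ᵀ - c t * (b t)ᵀ = 1 := by
  have hGs := fun t => psd_symm (H.hG t)
  have hQs := fun t => psd_symm (H.hQ t)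
  have w1 := H.hac.wronskian hGs hQs H.hbd t 0
  have w2 := H.hac.wronskian hGs hQs H.hac t 0
  have w3 := H.hbd.wronskian hGs hQs H.hbd t 0
  simp only [H.a0, H.b0, H.c0, H.d0, transpose_one, transpose_zero, Matrix.mul_one,
    Matrix.mul_zero, sub_zero, sub_self] at w1 w2 w3
  have w1' : (d t)ᵀ * a t - (b t)ᵀ * c t = 1 := by
    have := congrArg Matrix.transpose w1
    simpa [transpose_mul] using this
  have key : fromBlocks (d t)ᵀ (-(b t)ᵀ) (-(c t)ᵀ) (a t)ᵀ *
      fromBlocks (a t) (b t) (c t) (d t) = 1 := by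
    rw [fromBlocks_multiply, ← fromBlocks_one]
    congr 1
    · rw [neg_mul, ← sub_eq_add_neg, w1']
    · rw [neg_mul, ← sub_eq_add_neg, ← neg_sub, w3, neg_zero]
    · rw [neg_mul, neg_add_eq_sub, w2]
    · rw [neg_mul, neg_add_eq_sub, w1]
  have key2 := mul_eq_one_comm.1 key
  rw [fromBlocks_multiply, ← fromBlocks_one, fromBlocks_inj] at key2
  obtain ⟨k1, k2, k3, k4⟩ := key2
  refine ⟨?_, ?_, ?_, ?_⟩
  · rw [← k1]; noncomm_ring
  · rw [← sub_eq_zero, ← neg_eq_zero, ← k2]; noncomm_ring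
  · rw [← sub_eq_zero, ← k3]; noncomm_ring
  · rw [← k4]; noncomm_ring

/-- A reference solution `X = a + b P` which is invertible on `(-∞, 1]`. It is a right multiple
of the solution with `X = Y = 1` at time `1`. -/
theorem exists_ref (H : HamBlocks A G Q a b c d) :
    ∃ (P : Matrix ι ι ℝ) (X Y : ℝ → Matrix ι ι ℝ), Pᵀ = P ∧ (∀ t, X t = a t + b t * P) ∧
      HamSol A G Q X Y ∧ X 0 = 1 ∧ Y 0 = P ∧ ∀ t ≤ 1, IsUnit (X t) := by
  obtain ⟨s1, s2, s3, s4⟩ := H.symplectic 1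
  set X0 := (d 1)ᵀ - (b 1)ᵀ with hX0
  set Y0 := (a 1)ᵀ - (c 1)ᵀ with hY0
  have hsol := H.hac.comb H.hbd X0 Y0
  have hX1 : a 1 * X0 + b 1 * Y0 = 1 := by
    rw [← s1, hX0, hY0, mul_sub, mul_sub, s2]; abel
  have hY1 : c 1 * X0 + d 1 * Y0 = 1 := by
    rw [← s4, hX0, hY0, mul_sub, mul_sub, s3]; abel
  have hu : ∀ t ≤ 1, IsUnit (a t * X0 + b t * Y0) := fun t ht =>
    hsol.isUnit_of_terminal H.hG H.hQ hX1 hY1 ht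
  have hX0u : IsUnit X0 := by
    have := hu 0 zero_le_one
    rwa [H.a0, H.b0, Matrix.one_mul, Matrix.zero_mul, add_zero] at this
  set P := Y0 * X0⁻¹ with hP
  have hsol2 := H.hac.comb H.hbd 1 P
  have e1 : ∀ t, a t * 1 + b t * P = (a t * X0 + b t * Y0) * X0⁻¹ := fun t => by
    rw [add_mul, Matrix.mul_assoc, unit_mul_inv hX0u, Matrix.mul_assoc]
  have e2 : ∀ t, c t * 1 + d t * P = (c t * X0 + d t * Y0) * X0⁻¹ := fun t => by
    rw [add_mul, Matrix.mul_assoc, unit_mul_inv hX0u, Matrix.mul_assoc]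
  refine ⟨P, _, _, ?_, fun t => by rw [Matrix.mul_one], hsol2, ?_, ?_, fun t ht => ?_⟩
  · have w := hsol2.wronskian (fun t => psd_symm (H.hG t)) (fun t => psd_symm (H.hQ t)) hsol2 0 1
    simp only [e1 1, e2 1, hX1, hY1, sub_self] at w
    simp only [H.a0, H.b0, H.c0, H.d0, Matrix.zero_mul, Matrix.one_mul, zero_add, add_zero,
      transpose_one, Matrix.mul_one] at w
    exact (sub_eq_zero.1 w).symm
  · simp [H.a0, H.b0]
  · simp [H.c0, H.d0]
  · rw [e1]
    exact (hu t ht).mul ((Matrix.isUnit_nonsing_inv_iff).2 hX0u)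

end HamBlocks
end Hamiltonian

/-! ### The Gramian and total controllability -/

section Gramian

/-- If `Θₙ` has full row rank then its transpose is injective. -/
theorem ctrb_injective {n p : ℕ} {Γ : ℕ → ℝ → Matrix (Fin n) (Fin p) ℝ} {t : ℝ}
    (h : (ctrbMat Γ t).rank = n) {Λ : Matrix (Fin n) Unit ℝ}
    (hΛ : ∀ k < n, (Γ k t)ᵀ * Λ = 0) : Λ = 0 := by
  have hΘ : Λᵀ * ctrbMat Γ t = 0 := by
    ext u ⟨k, j⟩
    have := congrFun (congrFun (hΛ k k.2) j) u
    simpa [Matrix.mul_apply, ctrbMat, mul_comm] using this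
  have hr := rank_add_rank_le_card_of_mul_eq_zero hΘ
  rw [h, Fintype.card_fin] at hr
  have h0 : Λᵀ.rank = 0 := by omega
  rw [Matrix.rank, Submodule.finrank_eq_zero, LinearMap.range_eq_bot, ← toLin'_apply',
    LinearEquiv.map_eq_zero_iff] at h0
  exact transpose_eq_zero.1 h0

variable {n p : ℕ} {A Q : ℝ → Matrix (Fin n) (Fin n) ℝ} {B : ℝ → Matrix (Fin n) (Fin p) ℝ}
  {a b c d X Y : ℝ → Matrix (Fin n) (Fin n) ℝ} {P : Matrix (Fin n) (Fin n) ℝ}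

/-- The adjoint equation: `V = X⁻ᵀ` satisfies `V' = -Aᵀ V + X⁻ᵀ Yᵀ G V`. -/
theorem adjoint_deriv {G : ℝ → Matrix (Fin n) (Fin n) ℝ} (hG : ∀ t, (G t)ᵀ = G t)
    (h : HamSol A G Q X Y) {t : ℝ} (hu : IsUnit (X t)) :
    HD (fun τ => ((X τ)⁻¹)ᵀ)
      (-((A t)ᵀ * ((X t)⁻¹)ᵀ) + ((X t)⁻¹)ᵀ * (Y t)ᵀ * G t * ((X t)⁻¹)ᵀ) t := by
  refine ((h.1 t).inv hu).transpose.congr_deriv ?_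
  have e : ((X t)⁻¹)ᵀ * (X t)ᵀ = 1 := by rw [← transpose_mul, unit_mul_inv hu, transpose_one]
  simp only [transpose_neg, transpose_mul, transpose_sub, hG, ← Matrix.mul_assoc, mul_sub, sub_mul,
    e, Matrix.one_mul]
  abel

/-- If `Bᵀ X⁻ᵀ V` vanishes on an interval, successive differentiation gives `Γₖᵀ X⁻ᵀ V = 0` for
all `k < n` there, and total controllability forces `V = 0`. -/
theorem adjoint_vanish (hΓs : ∃ Γ : ℕ → ℝ → Matrix (Fin n) (Fin p) ℝ,
      IsCtrbMatSeq A B Γ ∧ TotallyControllable Γ)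
    (h : HamSol A (fun t => B t * (B t)ᵀ) Q X Y) (hu : ∀ t ≤ 1, IsUnit (X t))
    {s t : ℝ} (h0 : 0 ≤ s) (hst : s < t) (h1 : t ≤ 1) {V : Matrix (Fin n) Unit ℝ}
    (hV : ∀ r ∈ Set.Ioo s t, (B r)ᵀ * (((X r)⁻¹)ᵀ * V) = 0) : V = 0 := by
  obtain ⟨Γ, ⟨hΓ0, hΓ⟩, hTC⟩ := hΓs
  have hk : ∀ k < n, ∀ r ∈ Set.Ioo s t, (Γ k r)ᵀ * (((X r)⁻¹)ᵀ * V) = 0 := by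
    intro k
    induction k with
    | zero => intro _ r hr; rw [hΓ0]; exact hV r hr
    | succ k ih =>
      intro hkn r hr
      have hk' : k < n := by omega
      have hXr := hu r (hr.2.le.trans h1)
      have d1 : HD (Γ k) (Γ (k + 1) r + A r * Γ k r) r := hΓ k hk' r
      have d2 := (adjoint_deriv (fun t => by simp) h hXr).mul_const V
      have d3 := d1.transpose.mul d2
      have hz := d3.eq_zero (by
        filter_upwards [Ioo_mem_nhds hr.1 hr.2] with τ hτ
        exact ih hk' τ hτ)
      have e1 : ((X r)⁻¹)ᵀ * (Y r)ᵀ * (B r * (B r)ᵀ) * ((X r)⁻¹)ᵀ * V = 0 := by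
        have := hV r hr
        simp only [Matrix.mul_assoc] at this ⊢
        rw [this]; simp
      rw [Matrix.add_mul (-_), e1, add_zero, transpose_add, transpose_mul, Matrix.add_mul,
        Matrix.neg_mul, Matrix.mul_neg] at hz
      simp only [Matrix.mul_assoc] at hz ⊢
      rw [add_assoc, add_neg_cancel, add_zero] at hz
      exact hz
  obtain ⟨r, hr, hrank⟩ := hTC s t h0 hst h1
  have hL := ctrb_injective hrank fun k hkn => hk k hkn r hr
  have hXr := hu r (hr.2.le.trans h1)
  have e : (X r)ᵀ * ((X r)⁻¹)ᵀ = 1 := by rw [← transpose_mul, unit_inv_mul hXr, transpose_one]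
  rw [← Matrix.one_mul V, ← e, Matrix.mul_assoc, hL, Matrix.mul_zero]

/-- The Gramian `L = -X⁻¹ b` is symmetric, since `b Xᵀ = X bᵀ` by the symplectic relations. -/
theorem gramian_symm {G : ℝ → Matrix (Fin n) (Fin n) ℝ} (H : HamBlocks A G Q a b c d)
    (hP : Pᵀ = P) (hX : ∀ t, X t = a t + b t * P) {t : ℝ} (hu : IsUnit (X t)) :
    (-((X t)⁻¹ * b t))ᵀ = -((X t)⁻¹ * b t) := by
  have e : b t * (X t)ᵀ = X t * (b t)ᵀ := by
    rw [hX, transpose_add, transpose_mul, hP, mul_add, add_mul, (H.symplectic t).2.1,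
      Matrix.mul_assoc]
  have e2 : (X t)ᵀ * ((X t)⁻¹)ᵀ = 1 := by rw [← transpose_mul, unit_inv_mul hu, transpose_one]
  rw [transpose_neg, transpose_mul]
  congr 1
  calc (b t)ᵀ * ((X t)⁻¹)ᵀ = (X t)⁻¹ * (X t * (b t)ᵀ) * ((X t)⁻¹)ᵀ := by
        rw [← Matrix.mul_assoc, unit_inv_mul hu, Matrix.one_mul]
    _ = (X t)⁻¹ * b t := by
        rw [← e, Matrix.mul_assoc, Matrix.mul_assoc, e2, Matrix.mul_one]

/-- `L = -X⁻¹ b` is a controllability Gramian: `L' = X⁻¹ G X⁻ᵀ`. -/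
theorem gramian_deriv {G : ℝ → Matrix (Fin n) (Fin n) ℝ} (H : HamBlocks A G Q a b c d)
    (h : HamSol A G Q X Y) (hX0 : X 0 = 1) (hY0 : (Y 0)ᵀ = Y 0) {t : ℝ} (hu : IsUnit (X t)) :
    HD (fun τ => -((X τ)⁻¹ * b τ)) ((X t)⁻¹ * G t * ((X t)⁻¹)ᵀ) t := by
  have hGs := fun t => psd_symm (H.hG t)
  have hQs := fun t => psd_symm (H.hQ t)
  have w1 := h.wronskian hGs hQs h t 0
  have w2 := h.wronskian hGs hQs H.hbd t 0
  simp only [hX0, H.b0, H.d0, transpose_one, Matrix.mul_one, Matrix.one_mul, Matrix.mul_zero,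
    sub_zero, hY0, sub_self] at w1 w2
  have w1 := sub_eq_zero.1 w1
  have e : ((X t)⁻¹)ᵀ * (X t)ᵀ = 1 := by rw [← transpose_mul, unit_mul_inv hu, transpose_one]
  have e1 : ((X t)⁻¹)ᵀ * (Y t)ᵀ = Y t * (X t)⁻¹ := by
    calc ((X t)⁻¹)ᵀ * (Y t)ᵀ = ((X t)⁻¹)ᵀ * ((Y t)ᵀ * X t) * (X t)⁻¹ := by
          rw [Matrix.mul_assoc, Matrix.mul_assoc, unit_mul_inv hu, Matrix.mul_one]
      _ = Y t * (X t)⁻¹ := by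
          rw [← w1, ← Matrix.mul_assoc, e, Matrix.one_mul]
  have e2 : ((X t)⁻¹)ᵀ = d t - Y t * (X t)⁻¹ * b t := by
    have := congrArg (fun U => ((X t)⁻¹)ᵀ * U) w2
    simp only [mul_sub, ← Matrix.mul_assoc, e, e1, Matrix.one_mul, Matrix.mul_one] at this
    exact this.symm
  refine (((h.1 t).inv hu).mul (H.hbd.1 t)).neg.congr_deriv ?_
  rw [e2]
  have e3 : (X t)⁻¹ * (A t * X t - G t * Y t) * (X t)⁻¹ =
      (X t)⁻¹ * A t - (X t)⁻¹ * G t * Y t * (X t)⁻¹ := by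
    rw [mul_sub, sub_mul, ← Matrix.mul_assoc, Matrix.mul_assoc _ (X t), unit_mul_inv hu,
      Matrix.mul_one, ← Matrix.mul_assoc]
  rw [e3]
  noncomm_ring

/-- Total controllability makes `L = -X⁻¹ b` strictly increasing in the Loewner order. -/
theorem gramian_strictMono (hΓs : ∃ Γ : ℕ → ℝ → Matrix (Fin n) (Fin p) ℝ,
      IsCtrbMatSeq A B Γ ∧ TotallyControllable Γ)
    (H : HamBlocks A (fun t => B t * (B t)ᵀ) Q a b c d)
    (hP : Pᵀ = P) (hX : ∀ t, X t = a t + b t * P)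
    (h : HamSol A (fun t => B t * (B t)ᵀ) Q X Y) (hX0 : X 0 = 1) (hY0 : Y 0 = P)
    (hu : ∀ t ≤ 1, IsUnit (X t)) {s t : ℝ} (h0 : 0 ≤ s) (hst : s < t) (h1 : t ≤ 1) :
    (-((X t)⁻¹ * b t) - -((X s)⁻¹ * b s)).PosDef := by
  refine pd_of ?_ fun v hv => ?_
  · rw [transpose_sub, gramian_symm H hP hX (hu t h1), gramian_symm H hP hX (hu s (hst.le.trans h1))]
  rw [sub_mulVec, dotProduct_sub, sub_pos]
  set φ : ℝ → ℝ := fun τ => v ⬝ᵥ (-((X τ)⁻¹ * b τ)) *ᵥ v with hφ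
  set V : Matrix (Fin n) Unit ℝ := replicateCol Unit v with hV
  have hsq : ∀ τ, v ⬝ᵥ ((X τ)⁻¹ * (B τ * (B τ)ᵀ) * ((X τ)⁻¹)ᵀ) *ᵥ v =
      ((B τ)ᵀ *ᵥ (((X τ)⁻¹)ᵀ *ᵥ v)) ⬝ᵥ ((B τ)ᵀ *ᵥ (((X τ)⁻¹)ᵀ *ᵥ v)) := fun τ => by
    rw [mulVec_dot, mulVec_dot]
    simp [Matrix.mul_assoc]
  have hder : ∀ τ ≤ 1, HasDerivAt φ (((B τ)ᵀ *ᵥ (((X τ)⁻¹)ᵀ *ᵥ v)) ⬝ᵥ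
      ((B τ)ᵀ *ᵥ (((X τ)⁻¹)ᵀ *ᵥ v))) τ := fun τ hτ => by
    rw [← hsq]
    exact (gramian_deriv H h hX0 (by rw [hY0, hP]) (hu τ hτ)).quad v
  have hmono : MonotoneOn φ (Set.Icc s t) := by
    refine monotoneOn_of_deriv_nonneg (convex_Icc s t)
      (fun τ hτ => (hder τ (hτ.2.trans h1)).continuousAt.continuousWithinAt)
      (fun τ hτ => ?_) (fun τ hτ => ?_) <;> rw [interior_Icc] at hτ
    · exact (hder τ (hτ.2.le.trans h1)).differentiableAt.differentiableWithinAt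
    · rw [(hder τ (hτ.2.le.trans h1)).deriv]; exact dot_self_nonneg _
  have hs' : s ∈ Set.Icc s t := ⟨le_rfl, hst.le⟩
  have ht' : t ∈ Set.Icc s t := ⟨hst.le, le_rfl⟩
  refine lt_of_le_of_ne (hmono hs' ht' hst.le) fun heq => hv ?_
  have hconst : ∀ τ ∈ Set.Ioo s t, φ τ = φ s := fun τ hτ =>
    le_antisymm ((hmono ⟨hτ.1.le, hτ.2.le⟩ ht' hτ.2.le).trans_eq heq.symm)
      (hmono hs' ⟨hτ.1.le, hτ.2.le⟩ hτ.1.le)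
  have hz : ∀ r ∈ Set.Ioo s t, (B r)ᵀ * (((X r)⁻¹)ᵀ * V) = 0 := by
    intro r hr
    have e1 : φ =ᶠ[𝓝 r] fun _ => φ s := by
      filter_upwards [Ioo_mem_nhds hr.1 hr.2] with τ hτ using hconst τ hτ
    have e2 := (hder r (hr.2.le.trans h1)).unique
      ((hasDerivAt_const r (φ s)).congr_of_eventuallyEq e1)
    have e3 := dotProduct_self_eq_zero.1 e2
    rw [hV, ← replicateCol_mulVec, ← replicateCol_mulVec, e3]
    rfl
  have := adjoint_vanish hΓs h hu h0 hst h1 hz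
  rw [hV] at this
  exact (replicateCol_eq_zero v).1 this

end Gramian

/-! ### Charts and the homeomorphism -/

section Assembly

section Charts
variable {ι : Type*} [Fintype ι] [DecidableEq ι]

/-- The chart `P ↦ E⁻¹ (K - P)⁻¹ E⁻¹` from `{P : P ≺ K}` onto the positive definite cone. -/
theorem exists_homeo_param {E K : Matrix ι ι ℝ} (hE : E.PosDef) (hK : Kᵀ = K) :
    ∃ h : {P : Matrix ι ι ℝ // Pᵀ = P ∧ (K - P).PosDef} ≃ₜ {Y : Matrix ι ι ℝ // Y.PosDef},
      ∀ P, (h P : Matrix ι ι ℝ) = E⁻¹ * (K - P)⁻¹ * E⁻¹ := by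
  have hEi : E⁻¹ᵀ = E⁻¹ := pd_symm hE.inv
  have f1 : ∀ P : {P : Matrix ι ι ℝ // Pᵀ = P ∧ (K - P).PosDef},
      (E⁻¹ * (K - P)⁻¹ * E⁻¹).PosDef := fun P => by
    have := pd_congr P.2.2.inv hE.inv.isUnit
    rwa [hEi] at this
  have f2 : ∀ Y : {Y : Matrix ι ι ℝ // Y.PosDef}, (E * Y * E).PosDef := fun Y => by
    have := pd_congr Y.2 hE.isUnit
    rwa [pd_symm hE] at this
  have f3 : ∀ Y : {Y : Matrix ι ι ℝ // Y.PosDef}, (K - (E * (Y : Matrix ι ι ℝ) * E)⁻¹)ᵀ =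
      K - (E * (Y : Matrix ι ι ℝ) * E)⁻¹ ∧
      (K - (K - (E * (Y : Matrix ι ι ℝ) * E)⁻¹)).PosDef := fun Y => by
    refine ⟨by rw [transpose_sub, hK, pd_symm (f2 Y).inv], ?_⟩
    rw [sub_sub_cancel]; exact (f2 Y).inv
  have c1 : ∀ Z : Matrix ι ι ℝ, E * (E⁻¹ * Z * E⁻¹) * E = Z := fun Z => by
    rw [Matrix.mul_assoc E⁻¹, ← Matrix.mul_assoc E, pd_mul_inv hE, Matrix.one_mul,
      Matrix.mul_assoc, pd_inv_mul hE, Matrix.mul_one]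
  have c2 : ∀ Z : Matrix ι ι ℝ, E⁻¹ * (E * Z * E) * E⁻¹ = Z := fun Z => by
    rw [Matrix.mul_assoc E, ← Matrix.mul_assoc E⁻¹, pd_inv_mul hE, Matrix.one_mul,
      Matrix.mul_assoc, pd_mul_inv hE, Matrix.mul_one]
  refine ⟨⟨⟨fun P => ⟨_, f1 P⟩, fun Y => ⟨_, f3 Y⟩, fun P => Subtype.ext ?_,
    fun Y => Subtype.ext ?_⟩, ?_, ?_⟩, fun P => rfl⟩
  · change K - (E * (E⁻¹ * (K - P)⁻¹ * E⁻¹) * E)⁻¹ = P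
    rw [c1, nonsing_inv_nonsing_inv _ ((Matrix.isUnit_iff_isUnit_det _).1 P.2.2.isUnit),
      sub_sub_cancel]
  · change E⁻¹ * (K - (K - (E * (Y : Matrix ι ι ℝ) * E)⁻¹))⁻¹ * E⁻¹ = Y
    rw [sub_sub_cancel, nonsing_inv_nonsing_inv _ ((Matrix.isUnit_iff_isUnit_det _).1
      (f2 Y).isUnit), c2]
  · refine Continuous.subtype_mk ?_ _
    have := continuous_inv_of_isUnit
      (f := fun P : {P : Matrix ι ι ℝ // Pᵀ = P ∧ (K - P).PosDef} => K - (P : Matrix ι ι ℝ))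
      (continuous_const.sub continuous_subtype_val) fun P => P.2.2.isUnit
    exact (continuous_const.mul this).mul continuous_const
  · refine Continuous.subtype_mk ?_ _
    have := continuous_inv_of_isUnit
      (f := fun Y : {Y : Matrix ι ι ℝ // Y.PosDef} => E * (Y : Matrix ι ι ℝ) * E)
      ((continuous_const.mul continuous_subtype_val).mul continuous_const) fun Y => (f2 Y).isUnit
    exact continuous_const.sub this

theorem exists_homeo_congr {X : Matrix ι ι ℝ} (hX : IsUnit X) :
    ∃ h : {Y : Matrix ι ι ℝ // Y.PosDef} ≃ₜ {Y : Matrix ι ι ℝ // Y.PosDef},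
      ∀ S, (h S : Matrix ι ι ℝ) = X * S * Xᵀ := by
  have hXi : IsUnit X⁻¹ := Matrix.isUnit_nonsing_inv_iff.2 hX
  have e1 : Xᵀ * X⁻¹ᵀ = 1 := by rw [← transpose_mul, unit_inv_mul hX, transpose_one]
  have e2 : X⁻¹ᵀ * Xᵀ = 1 := by rw [← transpose_mul, unit_mul_inv hX, transpose_one]
  refine ⟨⟨⟨fun S => ⟨X * S * Xᵀ, pd_congr S.2 hX⟩, fun S => ⟨X⁻¹ * S * X⁻¹ᵀ, pd_congr S.2 hXi⟩,
    fun S => Subtype.ext ?_, fun S => Subtype.ext ?_⟩, ?_, ?_⟩, fun S => rfl⟩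
  · change X⁻¹ * (X * S * Xᵀ) * X⁻¹ᵀ = S
    rw [Matrix.mul_assoc X, ← Matrix.mul_assoc X⁻¹, unit_inv_mul hX, Matrix.one_mul,
      Matrix.mul_assoc, e1, Matrix.mul_one]
  · change X * (X⁻¹ * S * X⁻¹ᵀ) * Xᵀ = S
    rw [Matrix.mul_assoc X⁻¹, ← Matrix.mul_assoc X, unit_mul_inv hX, Matrix.one_mul,
      Matrix.mul_assoc, e2, Matrix.mul_one]
  · exact ((continuous_const.mul continuous_subtype_val).mul continuous_const).subtype_mk _
  · exact ((continuous_const.mul continuous_subtype_val).mul continuous_const).subtype_mk _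

/-- Factorisation of `1 - L (E⁻¹ - S)` through `Jmat` in the chart `Y = E⁻¹ S⁻¹ E⁻¹`. -/
theorem closed_loop_factor {E S : Matrix ι ι ℝ} (hE : E.PosDef) (hS : S.PosDef)
    (L : Matrix ι ι ℝ) :
    1 - L * (E⁻¹ - S) = Jmat E (E - L) (E⁻¹ * S⁻¹ * E⁻¹) * (E * S) := by
  have k1 : (E⁻¹ * S⁻¹ * E⁻¹) * (E * S) = E⁻¹ := by
    rw [Matrix.mul_assoc (E⁻¹ * S⁻¹), ← Matrix.mul_assoc E⁻¹ E, pd_inv_mul hE, Matrix.one_mul,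
      Matrix.mul_assoc, pd_inv_mul hS, Matrix.mul_one]
  have k2 : E⁻¹ * (E * S) = S := by rw [← Matrix.mul_assoc, pd_inv_mul hE, Matrix.one_mul]
  rw [Jmat, add_mul, Matrix.one_mul, Matrix.mul_assoc, sub_mul (E⁻¹ * S⁻¹ * E⁻¹), k1, k2, sub_mul,
    mul_sub E, pd_mul_inv hE]
  abel

/-- The initial-covariance term in the chart: here `J = (E S)⁻¹`. -/
theorem grd_self_chart {E S S0 : Matrix ι ι ℝ} (hE : E.PosDef) (hS : S.PosDef) :
    grd E E S0 (E⁻¹ * S⁻¹ * E⁻¹) = (E * S) * S0 * (E * S)ᵀ := by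
  have : (Jmat E E (E⁻¹ * S⁻¹ * E⁻¹))⁻¹ = E * S := by
    rw [Jmat_self hE, Matrix.mul_assoc E⁻¹, ← Matrix.mul_assoc, pd_mul_inv hE, Matrix.one_mul,
      ← Matrix.mul_inv_rev, nonsing_inv_nonsing_inv]
    exact (Matrix.isUnit_iff_isUnit_det _).1 (hE.isUnit.mul hS.isUnit)
  rw [grd, this]

end Charts

variable {n p q : ℕ} {A Q : ℝ → Matrix (Fin n) (Fin n) ℝ} {B : ℝ → Matrix (Fin n) (Fin p) ℝ}

theorem hamBlocks_of_isSTM {Φ : ℝ → ℝ → Matrix (Fin n ⊕ Fin n) (Fin n ⊕ Fin n) ℝ}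
    (hQ : ∀ t, (Q t).PosSemidef)
    (hΦ : IsSTM (fun t => fromBlocks (A t) (-(B t * (B t)ᵀ)) (-(Q t)) (-(A t)ᵀ)) Φ) :
    HamBlocks A (fun t => B t * (B t)ᵀ) Q (fun t => (Φ t 0).toBlocks₁₁)
      (fun t => (Φ t 0).toBlocks₁₂) (fun t => (Φ t 0).toBlocks₂₁)
      (fun t => (Φ t 0).toBlocks₂₂) := by
  have e : ∀ t, fromBlocks (A t) (-(B t * (B t)ᵀ)) (-(Q t)) (-(A t)ᵀ) * Φ t 0 =
      fromBlocks (A t * (Φ t 0).toBlocks₁₁ - B t * (B t)ᵀ * (Φ t 0).toBlocks₂₁)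
        (A t * (Φ t 0).toBlocks₁₂ - B t * (B t)ᵀ * (Φ t 0).toBlocks₂₂)
        (-(Q t * (Φ t 0).toBlocks₁₁) - (A t)ᵀ * (Φ t 0).toBlocks₂₁)
        (-(Q t * (Φ t 0).toBlocks₁₂) - (A t)ᵀ * (Φ t 0).toBlocks₂₂) := fun t => by
    conv_lhs => rw [← fromBlocks_toBlocks (Φ t 0)]
    rw [fromBlocks_multiply]
    simp only [Matrix.neg_mul, ← sub_eq_add_neg]
  have h2 := hΦ.2 0
  simp only [e] at h2
  have h0 : fromBlocks (Φ 0 0).toBlocks₁₁ (Φ 0 0).toBlocks₁₂ (Φ 0 0).toBlocks₂₁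
      (Φ 0 0).toBlocks₂₂ = fromBlocks 1 0 0 1 := by
    rw [fromBlocks_toBlocks, hΦ.1 0, fromBlocks_one]
  rw [fromBlocks_inj] at h0
  exact
    { hac := ⟨fun t i j => h2 t (Sum.inl i) (Sum.inl j), fun t i j => h2 t (Sum.inr i) (Sum.inl j)⟩
      hbd := ⟨fun t i j => h2 t (Sum.inl i) (Sum.inr j), fun t i j => h2 t (Sum.inr i) (Sum.inr j)⟩
      a0 := h0.1
      b0 := h0.2.1
      c0 := h0.2.2.1
      d0 := h0.2.2.2
      hG := fun t => by simpa using posSemidef_self_mul_conjTranspose (B t)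
      hQ := hQ }

/-- Projection of the real line onto `[0,1]`. -/
noncomputable def clamp (s : ℝ) : ℝ := max 0 (min s 1)

theorem clamp_mem (s : ℝ) : clamp s ∈ Set.Icc (0:ℝ) 1 :=
  ⟨le_max_left _ _, max_le zero_le_one (min_le_right _ _)⟩

theorem clamp_eq {s : ℝ} (h : s ∈ Set.Icc (0:ℝ) 1) : clamp s = s := by
  rw [clamp, min_eq_left h.2, max_eq_right h.1]

theorem continuous_clamp : Continuous clamp := by unfold clamp; fun_prop

end Assembly

theorem stmt_11 {n p q : ℕ} (hn : 1 ≤ n) (hp : 1 ≤ p) (hq : 1 ≤ q)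
    (A Q : ℝ → Matrix (Fin n) (Fin n) ℝ) (B : ℝ → Matrix (Fin n) (Fin p) ℝ)
    (C : ℝ → Matrix (Fin n) (Fin q) ℝ) (D : ℝ → Matrix (Fin q) (Fin q) ℝ)
    (hA : Continuous A) (hB : Continuous B) (hQ : Continuous Q)
    (hC : Continuous C) (hD : Continuous D)
    (hQpsd : ∀ t, (Q t).PosSemidef) (hDpsd : ∀ t, (D t).PosSemidef)
    (hAsm : ∀ i j, ContDiff ℝ (n - 1 : ℕ) fun t => A t i j)
    (hBsm : ∀ i j, ContDiff ℝ (n : ℕ) fun t => B t i j)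
    (Γ : ℕ → ℝ → Matrix (Fin n) (Fin p) ℝ)
    (hΓ : IsCtrbMatSeq A B Γ)
    (hTC : TotallyControllable Γ)
    (Φ : ℝ → ℝ → Matrix (Fin n ⊕ Fin n) (Fin n ⊕ Fin n) ℝ)
    (hΦ : IsSTM (fun t => fromBlocks (A t) (-(B t * (B t)ᵀ)) (-(Q t)) (-(A t)ᵀ)) Φ)
    (Sig0 : Matrix (Fin n) (Fin n) ℝ) (hSig0 : Sig0.PosDef) :
    (∀ P : Matrix (Fin n) (Fin n) ℝ,
      Pᵀ = P → (-(((Φ 1 0).toBlocks₁₂)⁻¹ * (Φ 1 0).toBlocks₁₁) - P).PosDef →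
      ∀ t ∈ Set.Icc (0:ℝ) 1, IsUnit ((Φ t 0).toBlocks₁₁ + (Φ t 0).toBlocks₁₂ * P)) ∧
    ∃ h : {P : Matrix (Fin n) (Fin n) ℝ //
            Pᵀ = P ∧ (-(((Φ 1 0).toBlocks₁₂)⁻¹ * (Φ 1 0).toBlocks₁₁) - P).PosDef} ≃ₜ
          {S : Matrix (Fin n) (Fin n) ℝ // S.PosDef},
      ∀ P, (h P : Matrix (Fin n) (Fin n) ℝ) = steerMap Φ C D Sig0 (P : Matrix (Fin n) (Fin n) ℝ) := by
  have H := hamBlocks_of_isSTM hQpsd hΦ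
  obtain ⟨P0, X, Y, hP0, hX, hsol, hX0, hY0, hu⟩ := H.exists_ref
  have hΓs : ∃ Γ : ℕ → ℝ → Matrix (Fin n) (Fin p) ℝ, IsCtrbMatSeq A B Γ ∧ TotallyControllable Γ :=
    ⟨Γ, hΓ, hTC⟩
  have hb0 := H.b0
  set L : ℝ → Matrix (Fin n) (Fin n) ℝ := fun t => -((X t)⁻¹ * (Φ t 0).toBlocks₁₂) with hL
  have hLdiff : ∀ s t, 0 ≤ s → s < t → t ≤ 1 → (L t - L s).PosDef := fun s t h0 hst h1 =>
    gramian_strictMono hΓs H hP0 hX hsol hX0 hY0 hu h0 hst h1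
  have hL0 : L 0 = 0 := by
    have : (Φ 0 0).toBlocks₁₂ = 0 := hb0
    simp [hL, this]
  have hLpsd : ∀ s ∈ Set.Icc (0:ℝ) 1, (L s).PosSemidef := fun s hs => by
    rcases hs.1.eq_or_lt with h | h
    · rw [← h, hL0]; exact PosSemidef.zero
    · simpa [hL0] using (hLdiff 0 s le_rfl h hs.2).posSemidef
  have hE : (L 1).PosDef := by simpa [hL0] using hLdiff 0 1 le_rfl zero_lt_one le_rfl
  set E := L 1 with hEdef
  have hMpsd : ∀ s ∈ Set.Icc (0:ℝ) 1, (E - L s).PosSemidef := fun s hs => by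
    rcases hs.2.eq_or_lt with h | h
    · rw [h, sub_self]; exact PosSemidef.zero
    · exact (hLdiff s 1 hs.1 h le_rfl).posSemidef
  have hXc : ContinuousOn (fun t => (X t)⁻¹) (Set.Icc 0 1) := fun t ht =>
    ((hsol.1 t).inv (hu t ht.2)).continuousAt.continuousWithinAt
  have hLc : ContinuousOn L (Set.Icc 0 1) := fun t ht =>
    (gramian_deriv H hsol hX0 (by rw [hY0, hP0]) (hu t ht.2)).continuousAt.continuousWithinAt
  -- clamping the time makes the data continuous on all of `ℝ` without changing them on `[0,1]`
  set M : ℝ → Matrix (Fin n) (Fin n) ℝ := fun s => E - L (clamp s) with hM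
  set W : ℝ → Matrix (Fin n) (Fin n) ℝ := fun s =>
    (X (clamp s))⁻¹ * (C (clamp s) * D (clamp s) * (C (clamp s))ᵀ) * ((X (clamp s))⁻¹)ᵀ with hW
  have dat : SteerData E Sig0 M W :=
    { hE := hE
      hS := hSig0
      cM := continuous_const.sub (hLc.comp_continuous continuous_clamp clamp_mem)
      cW := by
        have c1 := hXc.comp_continuous continuous_clamp clamp_mem
        have c2 := hC.comp continuous_clamp
        have c3 := hD.comp continuous_clamp
        exact (c1.mul ((c2.matrix_mul c3).matrix_mul c2.matrix_transpose)).mul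
          c1.matrix_transpose
      hM := fun s => hMpsd _ (clamp_mem s)
      hL := fun s => by
        rw [hM, sub_sub_cancel]; exact hLpsd _ (clamp_mem s)
      hW := fun s => psd_congr (psd_congr (hDpsd _) _) _
      hMpd := fun s h0 h1 => by
        rw [hM]
        simp only [clamp_eq ⟨h0, h1.le⟩]
        exact hLdiff s 1 h0 h1 le_rfl }
  have hX1 := hu 1 le_rfl
  have hbL : ∀ t ≤ 1, (Φ t 0).toBlocks₁₂ = -(X t * L t) := fun t ht => by
    rw [hL, mul_neg, neg_neg, ← Matrix.mul_assoc, unit_mul_inv (hu t ht), Matrix.one_mul]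
  set K := -(((Φ 1 0).toBlocks₁₂)⁻¹ * (Φ 1 0).toBlocks₁₁) with hKdef
  have hK : K = E⁻¹ + P0 := by
    have hbu : IsUnit (Φ 1 0).toBlocks₁₂ := by
      rw [hbL 1 le_rfl]; exact (hX1.mul hE.isUnit).neg
    have h1 : (Φ 1 0).toBlocks₁₁ = -((Φ 1 0).toBlocks₁₂ * (E⁻¹ + P0)) := by
      have h2 : (Φ 1 0).toBlocks₁₂ * E⁻¹ = -X 1 := by
        rw [hbL 1 le_rfl, neg_mul, Matrix.mul_assoc, pd_mul_inv hE, Matrix.mul_one]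
      have h3 : X 1 = (Φ 1 0).toBlocks₁₁ + (Φ 1 0).toBlocks₁₂ * P0 := hX 1
      rw [mul_add, h2, h3]; abel
    rw [hKdef, h1, mul_neg, neg_neg, ← Matrix.mul_assoc, unit_inv_mul hbu, Matrix.one_mul]
  have hKs : Kᵀ = K := by rw [hK, transpose_add, pd_symm hE.inv, hP0]
  -- with `S = K - P` one has `a + b P = X (1 - L (E⁻¹ - S))`, which factors through `Jmat`
  have hfac : ∀ P : Matrix (Fin n) (Fin n) ℝ, (K - P).PosDef → ∀ t ≤ 1,
      (Φ t 0).toBlocks₁₁ + (Φ t 0).toBlocks₁₂ * P =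
        X t * Jmat E (E - L t) (E⁻¹ * (K - P)⁻¹ * E⁻¹) * (E * (K - P)) := by
    intro P hP t ht
    rw [Matrix.mul_assoc, ← closed_loop_factor hE hP (L t)]
    have h3 : X t = (Φ t 0).toBlocks₁₁ + (Φ t 0).toBlocks₁₂ * P0 := hX t
    have h4 : E⁻¹ - (K - P) = P - P0 := by rw [hK]; abel
    rw [h4, mul_sub, Matrix.mul_one, ← Matrix.mul_assoc, ← neg_neg (X t * L t), ← hbL t ht, h3]
    noncomm_ring
  have hYpd : ∀ P : Matrix (Fin n) (Fin n) ℝ, (K - P).PosDef →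
      (E⁻¹ * (K - P)⁻¹ * E⁻¹).PosDef := fun P hP => by
    have := pd_congr hP.inv hE.inv.isUnit
    rwa [pd_symm hE.inv] at this
  have hJu : ∀ P : Matrix (Fin n) (Fin n) ℝ, (K - P).PosDef → ∀ t ∈ Set.Icc (0:ℝ) 1,
      IsUnit (Jmat E (E - L t) (E⁻¹ * (K - P)⁻¹ * E⁻¹)) := fun P hP t ht =>
    Jmat_isUnit hE (hMpsd t ht) (by rw [sub_sub_cancel]; exact hLpsd t ht) (hYpd P hP)
  refine ⟨fun P _ hP t ht => ?_, ?_⟩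
  · rw [hfac P hP t ht.2]
    exact ((hu t ht.2).mul (hJu P hP t ht)).mul (hE.isUnit.mul hP.isUnit)
  obtain ⟨h1, hh1⟩ := exists_homeo_param hE hKs
  obtain ⟨h2, hh2⟩ := dat.exists_homeo
  obtain ⟨h3, hh3⟩ := exists_homeo_congr hX1
  refine ⟨(h1.trans h2).trans h3, fun P => ?_⟩
  have hP := P.2.2
  have hES : IsUnit (E * (K - (P : Matrix (Fin n) (Fin n) ℝ))) := hE.isUnit.mul hP.isUnit
  simp only [Homeomorph.trans_apply, hh3, hh2, hh1]
  set Yp := E⁻¹ * (K - (P : Matrix (Fin n) (Fin n) ℝ))⁻¹ * E⁻¹ with hYp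
  set T := E * (K - (P : Matrix (Fin n) (Fin n) ℝ)) with hT
  have hΦ1 : (Φ 1 0).toBlocks₁₁ + (Φ 1 0).toBlocks₁₂ * (P : Matrix (Fin n) (Fin n) ℝ) =
      X 1 * T := by
    rw [hfac P hP 1 le_rfl, ← hEdef, sub_self, Jmat, Matrix.zero_mul, add_zero, Matrix.mul_one]
  have hIntegral : (Matrix.of fun i j => ∫ s in (0:ℝ)..1,
      ((((Φ s 0).toBlocks₁₁ + (Φ s 0).toBlocks₁₂ * (P : Matrix (Fin n) (Fin n) ℝ))⁻¹ *
        (C s * D s * (C s)ᵀ) * ((((Φ s 0).toBlocks₁₁ +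
          (Φ s 0).toBlocks₁₂ * (P : Matrix (Fin n) (Fin n) ℝ))⁻¹)ᵀ)) i j)) =
      T⁻¹ * (matInt fun s => grd E (M s) (W s) Yp) * (T⁻¹)ᵀ := by
    rw [matInt_congr (dat.cont_grd_s (hYpd P hP))]
    ext i j
    simp only [of_apply, matInt]
    refine intervalIntegral.integral_congr fun s hs => ?_
    rw [Set.uIcc_of_le zero_le_one] at hs
    simp only [hfac P hP s hs.2, hM, hW, clamp_eq hs, grd, Matrix.mul_inv_rev, transpose_mul,
      Matrix.mul_assoc, ← hYp, ← hT]
  rw [steerMap, hIntegral, hΦ1, Fmap, hYp, grd_self_chart hE hP, ← hYp, ← hT]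
  have e1 : (T⁻¹)ᵀ * Tᵀ = 1 := by rw [← transpose_mul, unit_mul_inv hES, transpose_one]
  set G := matInt fun s => grd E (M s) (W s) Yp
  have e2 : T * (T⁻¹ * G * (T⁻¹)ᵀ) * Tᵀ = G := by
    rw [Matrix.mul_assoc T⁻¹, ← Matrix.mul_assoc T, unit_mul_inv hES, Matrix.one_mul,
      Matrix.mul_assoc, e1, Matrix.mul_one]
  calc X 1 * (T * Sig0 * Tᵀ + G) * (X 1)ᵀ
      = X 1 * (T * Sig0 * Tᵀ + T * (T⁻¹ * G * (T⁻¹)ᵀ) * Tᵀ) * (X 1)ᵀ := by rw [e2]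
    _ = X 1 * T * (Sig0 + T⁻¹ * G * (T⁻¹)ᵀ) * (X 1 * T)ᵀ := by
        clear_value T G
        rw [transpose_mul (X 1) T]
        simp only [mul_add, add_mul, Matrix.mul_assoc]
end

section
/- Let Σ and W be symmetric n×n matrices with Σ positive definite and W negative definite, and let P, V : [0,1] → ℝ^{n×n} be continuous with P(s) symmetric positive semidefinite and V(s) symmetric negative semidefinite for every s ∈ [0,1]. Then the n²×n² matrix S = Σ⊗W + W⊗Σ + ∫₀¹ (P(s)⊗V(s) + V(s)⊗P(s)) ds is symmetric and negative definite, where ⊗ denotes the Kronecker product. -/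
/-!
Kronecker products of positive (semi)definite matrices are positive (semi)definite, so
`-S = Σ ⊗ (-W) + (-W) ⊗ Σ + ∫₀¹ (P ⊗ (-V) + (-V) ⊗ P)` is the sum of a positive definite matrix
and an integral of positive semidefinite ones. Such an integral is positive semidefinite
(`posSemidef_integral`), because its quadratic form at a vector `x` is the integral of the
nonnegative quadratic forms of the integrand at `x`.
-/

open Matrix Kronecker

/-- Continuity provides the integrability of the entries that is needed to exchange the integral
with the finite sums of the quadratic form. -/
theorem posSemidef_integral {m : Type*} [Fintype m] (K : ℝ → Matrix m m ℝ)
    (hc : ContinuousOn K (Set.Icc 0 1)) (hK : ∀ s ∈ Set.Icc (0:ℝ) 1, (K s).PosSemidef) :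
    (Matrix.of fun i j => ∫ s in (0:ℝ)..1, K s i j).PosSemidef := by
  have hent : ∀ i j, ContinuousOn (fun s => K s i j) (Set.uIcc (0:ℝ) 1) := by
    intro i j
    rw [Set.uIcc_of_le zero_le_one]
    exact continuousOn_pi.1 (continuousOn_pi.1 hc i) j
  refine PosSemidef.of_dotProduct_mulVec_nonneg ?_ fun x => ?_
  · ext i j
    simp only [conjTranspose_apply, of_apply, star_trivial]
    refine intervalIntegral.integral_congr fun s hs => ?_
    rw [Set.uIcc_of_le zero_le_one] at hs
    simpa using (hK s hs).isHermitian.apply i j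
  · have key : star x ⬝ᵥ ((Matrix.of fun i j => ∫ s in (0:ℝ)..1, K s i j) *ᵥ x)
        = ∫ s in (0:ℝ)..1, star x ⬝ᵥ (K s *ᵥ x) := by
      simp only [dotProduct, mulVec, of_apply]
      rw [intervalIntegral.integral_finsetSum]
      · refine Finset.sum_congr rfl fun i _ => ?_
        rw [intervalIntegral.integral_const_mul, intervalIntegral.integral_finsetSum]
        · simp only [intervalIntegral.integral_mul_const]
        · exact fun j _ => ((hent i j).mul continuousOn_const).intervalIntegrable
      · exact fun i _ => (continuousOn_const.mul (continuousOn_finsetSum _ fun j _ =>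
          (hent i j).mul continuousOn_const)).intervalIntegrable
    rw [key]
    exact intervalIntegral.integral_nonneg zero_le_one fun s hs =>
      (hK s hs).dotProduct_mulVec_nonneg x

theorem stmt_12 {n : ℕ} (hn : 1 ≤ n)
    (Sig W : Matrix (Fin n) (Fin n) ℝ)
    (hSig : Sig.PosDef) (hW : (-W).PosDef)
    (P V : ℝ → Matrix (Fin n) (Fin n) ℝ)
    (hPc : ContinuousOn P (Set.Icc 0 1)) (hVc : ContinuousOn V (Set.Icc 0 1))
    (hP : ∀ s ∈ Set.Icc (0:ℝ) 1, (P s).PosSemidef)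
    (hV : ∀ s ∈ Set.Icc (0:ℝ) 1, (-(V s)).PosSemidef)
    (S : Matrix (Fin n × Fin n) (Fin n × Fin n) ℝ)
    (hS : S = Sig ⊗ₖ W + W ⊗ₖ Sig +
      Matrix.of fun i j => ∫ s in (0:ℝ)..1, ((P s ⊗ₖ V s) + (V s ⊗ₖ P s)) i j) :
    Sᵀ = S ∧ (-S).PosDef := by
  have hPe : ∀ i j, ContinuousOn (fun s => P s i j) (Set.Icc 0 1) :=
    fun i j => continuousOn_pi.1 (continuousOn_pi.1 hPc i) j
  have hVe : ∀ i j, ContinuousOn (fun s => V s i j) (Set.Icc 0 1) :=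
    fun i j => continuousOn_pi.1 (continuousOn_pi.1 hVc i) j
  have hint := posSemidef_integral (fun s => P s ⊗ₖ (-V s) + (-V s) ⊗ₖ P s)
    (continuousOn_pi.2 fun i => continuousOn_pi.2 fun j =>
      ((hPe _ _).mul (hVe _ _).neg).add ((hVe _ _).neg.mul (hPe _ _)))
    fun s hs => ((hP s hs).kronecker (hV s hs)).add ((hV s hs).kronecker (hP s hs))
  have hneg : -S = Sig ⊗ₖ (-W) + (-W) ⊗ₖ Sig +
      Matrix.of fun i j => ∫ s in (0:ℝ)..1, (P s ⊗ₖ (-V s) + (-V s) ⊗ₖ P s) i j := by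
    rw [hS]
    ext i j
    simp only [Matrix.neg_apply, Matrix.add_apply, of_apply, kroneckerMap_apply, mul_neg, neg_mul,
      ← neg_add, intervalIntegral.integral_neg]
  have hpos : (-S).PosDef := by
    rw [hneg]
    exact ((hSig.kronecker hW).add (hW.kronecker hSig)).add_posSemidef hint
  refine ⟨?_, hpos⟩
  have h := hpos.isHermitian.neg
  rw [neg_neg] at h
  simpa [IsHermitian, conjTranspose_eq_transpose_of_trivial] using h
end

section
/- Assume (A(t), B(t)) is totally controllable on [0,1], that Φ₁₂(1,0) is invertible, and that C(t)D(t)C(t)ᵀ = B(t)B(t)ᵀ for all t ∈ [0,1]. Let Σ₀ and Σ₁ be symmetric positive definite. Then the unique symmetric matrix Π₀ ≺ −Φ₁₂(1,0)⁻¹Φ₁₁(1,0) with f(Π₀) = Σ₁ is Π₀ = −Φ₁₂(1,0)⁻¹Φ₁₁(1,0) + (1/2)Σ₀⁻¹ − Σ₀^{−1/2}((1/4)Iₙ + Σ₀^{1/2}Φ₁₂(1,0)⁻¹Σ₁Φ₁₂(1,0)⁻ᵀΣ₀^{1/2})^{1/2}Σ₀^{−1/2}, where X^{1/2} denotes the unique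 positive semidefinite square root of a positive semidefinite matrix X. -/
/-!
Write `F = Φ₁₂(1,0)`, `L = -F⁻¹ Φ₁₁(1,0)` and `X(t) = Φ₁₁(t,0) + Φ₁₂(t,0) P`. The proof reduces
`f(P) = Σ₁` to a quadratic matrix equation for `G = L - P`.

Two facts about the Hamiltonian system `X' = A X - R Y`, `Y' = -Q X - Aᵀ Y` with `R = B Bᵀ ⪰ 0` and
`Q ⪰ 0` are used: the Wronskian `X₁ᵀ Y₂ - Y₁ᵀ X₂` of two solutions is constant
(`HamSol.wronskian`), and `⟨x, y⟩` decreases along solutions (`HamSol.antitone`).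
The Wronskian shows that `L` is symmetric. Both together show that `X(t)` is invertible
on `[0,1]` when `P ≺ L` (`HamSol.isUnit_left`).

Since `C D Cᵀ = R`, the integrand in `f` is `X⁻¹ R X⁻ᵀ = -(X⁻¹ Φ₁₂)'` (`HamSol.integral_eq`), so
the integral equals `-X(1)⁻¹ F`. With `X(1) = -F G` this gives `f(P) = F (G Σ₀ G + G) Fᵀ`.
Completing the square with `H = Σ₀^{1/2} G Σ₀^{1/2}` turns `f(P) = Σ₁` into
`(H + 1/2)² = 1/4 + Σ₀^{1/2} F⁻¹ Σ₁ F⁻ᵀ Σ₀^{1/2}` (`riccati_iff`). Uniqueness of positive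
semidefinite square roots forces `H = K - 1/2`, which is positive definite (`posDef_sub_half`).
-/

open Matrix

/-! ### Positive semidefinite square roots -/

section Algebra

/-- Positive semidefinite square roots are unique. -/
theorem posSemidef_eq_of_mul_self_eq {n : ℕ} {H K : Matrix (Fin n) (Fin n) ℝ}
    (hH : H.PosSemidef) (hK : K.PosSemidef) (h : H * H = K * K) : H = K := by
  open scoped MatrixOrder Matrix.Norms.L2Operator in
  exact (CFC.mul_self_eq_mul_self_iff H K hH.nonneg hK.nonneg).1 h

/-- If `K ⪰ 0` and `K² = 1/4 + T` with `T ≻ 0`, then `K ≻ 1/2`: an eigenvalue `μ` of `K - 1/2`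
satisfies `μ + 1/2 ≥ 0`, and `μ (μ + 1)` is a positive eigenvalue of `T`. -/
theorem posDef_sub_half {n : ℕ} {K T : Matrix (Fin n) (Fin n) ℝ}
    (hK : K.PosSemidef) (hT : T.PosDef)
    (h : K * K = (1/4 : ℝ) • (1 : Matrix (Fin n) (Fin n) ℝ) + T) :
    (K - (1/2 : ℝ) • (1 : Matrix (Fin n) (Fin n) ℝ)).PosDef := by
  have hherm : (K - (1/2 : ℝ) • (1 : Matrix (Fin n) (Fin n) ℝ)).IsHermitian := by
    refine hK.1.sub ?_
    simp [Matrix.IsHermitian]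
  rw [hherm.posDef_iff_eigenvalues_pos]
  intro i
  set μ := hherm.eigenvalues i
  set v : Fin n → ℝ := ⇑(hherm.eigenvectorBasis i) with hv
  have hv0 : v ≠ 0 := by
    intro h0
    apply hherm.eigenvectorBasis.toBasis.ne_zero i
    ext j
    simpa [hv] using congrFun h0 j
  have hHv : (K - (1/2 : ℝ) • (1 : Matrix (Fin n) (Fin n) ℝ)) *ᵥ v = μ • v :=
    hherm.mulVec_eigenvectorBasis i
  have hKv : K *ᵥ v = (μ + 1/2) • v := by
    rw [sub_mulVec, smul_mulVec, one_mulVec, sub_eq_iff_eq_add] at hHv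
    rw [hHv, add_smul]
  have hTv : T *ᵥ v = (μ * (μ + 1)) • v := by
    have h1 : (K * K) *ᵥ v = ((μ + 1/2) * (μ + 1/2)) • v := by
      rw [← mulVec_mulVec, hKv, mulVec_smul, hKv, smul_smul]
    rw [h, add_mulVec, smul_mulVec, one_mulVec] at h1
    rw [eq_sub_of_add_eq' h1, ← sub_smul]
    congr 1
    ring
  have hpos : 0 < v ⬝ᵥ v := by
    simpa using Matrix.dotProduct_star_self_pos_iff.2 hv0
  have e1 := hK.dotProduct_mulVec_nonneg v
  have e2 := hT.dotProduct_mulVec_pos hv0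
  rw [hKv, dotProduct_smul, star_trivial, smul_eq_mul] at e1
  rw [hTv, dotProduct_smul, star_trivial, smul_eq_mul] at e2
  have e3 : 0 ≤ μ + 1/2 := nonneg_of_mul_nonneg_left e1 hpos
  have e4 : 0 < μ * (μ + 1) := pos_of_mul_pos_left e2 hpos.le
  exact pos_of_mul_pos_left e4 (by linarith)

end Algebra

/-! ### The matrix Hamiltonian system -/

section Hamiltonian

open scoped Matrix.Norms.Operator

variable {n : ℕ}

/-- A matrix-valued curve is differentiable as soon as its entries are. -/
theorem hasDerivAt_of_entries {X : ℝ → Matrix (Fin n) (Fin n) ℝ} {X' : Matrix (Fin n) (Fin n) ℝ}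
    {t : ℝ} (h : ∀ i j, HasDerivAt (fun s => X s i j) (X' i j) t) : HasDerivAt X X' t := by
  have h1 : HasDerivAt (fun s => ∑ i, ∑ j, X s i j • Matrix.single i j (1 : ℝ))
      (∑ i, ∑ j, X' i j • Matrix.single i j (1 : ℝ)) t :=
    HasDerivAt.fun_sum fun i _ => HasDerivAt.fun_sum fun j _ => (h i j).smul_const _
  have h2 : ∀ M : Matrix (Fin n) (Fin n) ℝ, ∑ i, ∑ j, M i j • Matrix.single i j (1 : ℝ) = M := by
    intro M
    conv_rhs => rw [Matrix.matrix_eq_sum_single M]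
    simp [Matrix.smul_single]
  simpa only [h2] using h1

theorem HasDerivAt.mat_linear {X : ℝ → Matrix (Fin n) (Fin n) ℝ} {X' : Matrix (Fin n) (Fin n) ℝ}
    {t : ℝ} (h : HasDerivAt X X' t) {F : Type*} [NormedAddCommGroup F] [NormedSpace ℝ F]
    (L : Matrix (Fin n) (Fin n) ℝ →ₗ[ℝ] F) : HasDerivAt (fun s => L (X s)) (L X') t :=
  (LinearMap.toContinuousLinearMap L).hasFDerivAt.comp_hasDerivAt t h

theorem HasDerivAt.mat_entry {X : ℝ → Matrix (Fin n) (Fin n) ℝ} {X' : Matrix (Fin n) (Fin n) ℝ}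
    {t : ℝ} (h : HasDerivAt X X' t) (i j : Fin n) :
    HasDerivAt (fun s => X s i j) (X' i j) t :=
  h.mat_linear (Matrix.entryLinearMap ℝ ℝ i j)

theorem HasDerivAt.mat_transpose {X : ℝ → Matrix (Fin n) (Fin n) ℝ}
    {X' : Matrix (Fin n) (Fin n) ℝ} {t : ℝ} (h : HasDerivAt X X' t) :
    HasDerivAt (fun s => (X s)ᵀ) X'ᵀ t :=
  hasDerivAt_of_entries fun i j => h.mat_entry j i

theorem HasDerivAt.mat_inv {X : ℝ → Matrix (Fin n) (Fin n) ℝ}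
    {X' : Matrix (Fin n) (Fin n) ℝ} {t : ℝ} (h : HasDerivAt X X' t) (hu : IsUnit (X t)) :
    HasDerivAt (fun s => (X s)⁻¹) (-((X t)⁻¹ * X' * (X t)⁻¹)) t := by
  obtain ⟨u, hu⟩ := hu
  have h1 := hasFDerivAt_ringInverse (𝕜 := ℝ) u
  rw [hu] at h1
  have h2 := h1.comp_hasDerivAt t h
  simp only [Matrix.nonsing_inv_eq_ringInverse]
  rw [← hu, Ring.inverse_unit]
  refine HasDerivAt.congr_deriv (f' := _) h2 ?_
  simp

/-- `(X, Y)` solves the matrix Hamiltonian system `X' = A X - R Y`, `Y' = -Q X - Aᵀ Y`. -/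
structure HamSol_s13 (A R Q X Y : ℝ → Matrix (Fin n) (Fin n) ℝ) : Prop where
  left : ∀ t, HasDerivAt X (A t * X t - R t * Y t) t
  right : ∀ t, HasDerivAt Y (-(Q t * X t) - (A t)ᵀ * Y t) t

variable {A R Q X Y X₁ Y₁ X₂ Y₂ : ℝ → Matrix (Fin n) (Fin n) ℝ}

theorem HamSol_s13.sub (h₁ : HamSol_s13 A R Q X₁ Y₁) (h₂ : HamSol_s13 A R Q X₂ Y₂) :
    HamSol_s13 A R Q (fun t => X₁ t - X₂ t) (fun t => Y₁ t - Y₂ t) where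
  left t := by
    refine ((h₁.left t).fun_sub (h₂.left t)).congr_deriv ?_
    noncomm_ring
  right t := by
    refine ((h₁.right t).fun_sub (h₂.right t)).congr_deriv ?_
    noncomm_ring

theorem HamSol_s13.add_mul (h₁ : HamSol_s13 A R Q X₁ Y₁) (h₂ : HamSol_s13 A R Q X₂ Y₂)
    (P : Matrix (Fin n) (Fin n) ℝ) :
    HamSol_s13 A R Q (fun t => X₁ t + X₂ t * P) (fun t => Y₁ t + Y₂ t * P) where
  left t := by
    refine ((h₁.left t).fun_add ((h₂.left t).mul_const P)).congr_deriv ?_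
    noncomm_ring
  right t := by
    refine ((h₁.right t).fun_add ((h₂.right t).mul_const P)).congr_deriv ?_
    noncomm_ring

/-- The Wronskian `X₁ᵀ Y₂ - Y₁ᵀ X₂` of two solutions is constant. -/
theorem HamSol_s13.wronskian (hR : ∀ t, (R t)ᵀ = R t) (hQ : ∀ t, (Q t)ᵀ = Q t)
    (h₁ : HamSol_s13 A R Q X₁ Y₁) (h₂ : HamSol_s13 A R Q X₂ Y₂) (s t : ℝ) :
    (X₁ s)ᵀ * Y₂ s - (Y₁ s)ᵀ * X₂ s = (X₁ t)ᵀ * Y₂ t - (Y₁ t)ᵀ * X₂ t := by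
  have hd : ∀ t, HasDerivAt (fun t => (X₁ t)ᵀ * Y₂ t - (Y₁ t)ᵀ * X₂ t) 0 t := by
    intro t
    refine (((h₁.left t).mat_transpose.fun_mul (h₂.right t)).fun_sub
      ((h₁.right t).mat_transpose.fun_mul (h₂.left t))).congr_deriv ?_
    simp only [transpose_sub, transpose_neg, transpose_mul, transpose_transpose, hR, hQ]
    noncomm_ring
  exact is_const_of_deriv_eq_zero (fun t => (hd t).differentiableAt) (fun t => (hd t).deriv) s t

/-- The pairing `⟨x, y⟩` of state and costate decreases along solutions: its derivative is
`-⟨y, R y⟩ - ⟨x, Q x⟩`. -/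
theorem HamSol_s13.antitone (hR : ∀ t, (R t).PosSemidef) (hQ : ∀ t, (Q t).PosSemidef)
    (h : HamSol_s13 A R Q X Y) (v : Fin n → ℝ) :
    Antitone fun t => v ⬝ᵥ ((X t)ᵀ * Y t) *ᵥ v := by
  let L : Matrix (Fin n) (Fin n) ℝ →ₗ[ℝ] ℝ :=
    { toFun := fun M => v ⬝ᵥ M *ᵥ v
      map_add' := fun M N => by rw [add_mulVec, dotProduct_add]
      map_smul' := fun c M => by rw [smul_mulVec, dotProduct_smul]; rfl }
  have hd : ∀ t, HasDerivAt (fun t => v ⬝ᵥ ((X t)ᵀ * Y t) *ᵥ v)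
      (v ⬝ᵥ (-((Y t)ᵀ * R t * Y t + (X t)ᵀ * Q t * X t)) *ᵥ v) t := by
    intro t
    refine (((h.left t).mat_transpose.fun_mul (h.right t)).mat_linear L).congr_deriv ?_
    have hRt : (R t)ᵀ = R t := (hR t).1
    simp only [L, LinearMap.coe_mk, AddHom.coe_mk, transpose_sub, transpose_mul, hRt]
    congr 2
    noncomm_ring
  refine antitone_of_deriv_nonpos (fun t => (hd t).differentiableAt) fun t => ?_
  rw [(hd t).deriv, neg_mulVec, dotProduct_neg, neg_nonpos]
  have := (((hR t).conjTranspose_mul_mul_same (Y t)).add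
    ((hQ t).conjTranspose_mul_mul_same (X t))).dotProduct_mulVec_nonneg v
  simpa using this

/-- Absence of conjugate points. Let `(X₀, Y₀)` be the solution with `X₀(0) = 1`, `Y₀(0) = L`
that is steered to `X₀(1) = 0`, and `(X, Y)` the one with `X(0) = 1`, `Y(0) = P`, `P ≺ L`. If
`X(t) v = 0`, the monotonicity of `⟨x, y⟩` on `[0, t]` (for the difference of the solutions) and
on `[t, 1]` (for `(X₀, Y₀)`) gives `⟨X₀(t) v, Y(t) v⟩ ≥ 0`, while by constancy of the Wronskian
this number is `-⟨v, (L - P) v⟩ < 0`. -/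
theorem HamSol_s13.isUnit_left (hR : ∀ t, (R t).PosSemidef) (hQ : ∀ t, (Q t).PosSemidef)
    {X₀ Y₀ : ℝ → Matrix (Fin n) (Fin n) ℝ} {L P : Matrix (Fin n) (Fin n) ℝ}
    (h₀ : HamSol_s13 A R Q X₀ Y₀) (h : HamSol_s13 A R Q X Y)
    (hX₀ : X₀ 0 = 1) (hY₀ : Y₀ 0 = L) (hX₁ : X₀ 1 = 0) (hX : X 0 = 1) (hY : Y 0 = P)
    (hLt : Lᵀ = L) (hLP : (L - P).PosDef) {t : ℝ} (ht : t ∈ Set.Icc (0 : ℝ) 1) :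
    IsUnit (X t) := by
  rw [Matrix.isUnit_iff_isUnit_det, isUnit_iff_ne_zero]
  intro hdet
  obtain ⟨v, hv0, hv⟩ := Matrix.exists_mulVec_eq_zero_iff.2 hdet
  have hvT : v ᵥ* (X t)ᵀ = 0 := by rw [vecMul_transpose, hv]
  have m₁ := (h.sub h₀).antitone hR hQ v ht.1
  have m₂ := h₀.antitone hR hQ v ht.2
  have hW := HamSol_s13.wronskian (fun t => (hR t).1) (fun t => (hQ t).1) h₀ h t 0
  rw [hX₀, hY₀, hX, hY, hLt, transpose_one, one_mul, mul_one] at hW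
  have hWv := congrArg (fun M => v ⬝ᵥ M *ᵥ v) hW
  have hpos := hLP.dotProduct_mulVec_pos hv0
  simp only [star_trivial, hX₀, hX, hX₁, sub_self, transpose_zero, zero_mul, zero_mulVec,
    dotProduct_zero, transpose_sub, sub_mul, mul_sub, sub_mulVec, dotProduct_sub,
    ← mulVec_mulVec, hv, mulVec_zero, sub_zero] at m₁ m₂ hWv hpos
  simp only [dotProduct_mulVec v (X t)ᵀ, hvT, zero_dotProduct] at m₁
  linarith

/-- The weighted Gramian in closed form: with `(Z, V)` the solution with `Z(0) = 0`, `V(0) = 1`,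
one has `(X⁻¹ Z)' = -X⁻¹ R X⁻ᵀ`, because `Xᵀ Y` is symmetric and `Xᵀ V - Yᵀ Z = 1`. -/
theorem HamSol_s13.integral_eq (hR : ∀ t, (R t)ᵀ = R t) (hQ : ∀ t, (Q t)ᵀ = Q t)
    (hRc : Continuous R)
    {Z V : ℝ → Matrix (Fin n) (Fin n) ℝ} {P : Matrix (Fin n) (Fin n) ℝ}
    (h : HamSol_s13 A R Q X Y) (hZ : HamSol_s13 A R Q Z V)
    (hX : X 0 = 1) (hY : Y 0 = P) (hZ0 : Z 0 = 0) (hV0 : V 0 = 1) (hP : Pᵀ = P)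
    (hu : ∀ t ∈ Set.Icc (0 : ℝ) 1, IsUnit (X t)) (i j : Fin n) :
    ∫ s in (0 : ℝ)..1, ((X s)⁻¹ * R s * ((X s)⁻¹)ᵀ) i j = -((X 1)⁻¹ * Z 1) i j := by
  have hd : ∀ t ∈ Set.Icc (0 : ℝ) 1,
      HasDerivAt (fun s => -((X s)⁻¹ * Z s)) ((X t)⁻¹ * R t * ((X t)⁻¹)ᵀ) t := by
    intro t ht
    refine ((((h.left t).mat_inv (hu t ht)).fun_mul (hZ.left t)).fun_neg).congr_deriv ?_
    have hdet := (Matrix.isUnit_iff_isUnit_det _).1 (hu t ht)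
    have e1 : (X t)⁻¹ * X t = 1 := Matrix.nonsing_inv_mul _ hdet
    have e2 : X t * (X t)⁻¹ = 1 := Matrix.mul_nonsing_inv _ hdet
    have e3 : ((X t)⁻¹)ᵀ * (X t)ᵀ = 1 := by rw [← transpose_mul, e2, transpose_one]
    have w1 := HamSol_s13.wronskian hR hQ h h t 0
    have w2 := HamSol_s13.wronskian hR hQ h hZ t 0
    rw [hX, hY, transpose_one, one_mul, mul_one, hP, sub_self, sub_eq_zero] at w1
    rw [hX, hY, hZ0, hV0, transpose_one, one_mul, mul_zero, sub_zero] at w2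
    have s1 : Y t * (X t)⁻¹ = ((X t)⁻¹)ᵀ * (Y t)ᵀ := by
      calc Y t * (X t)⁻¹ = ((X t)⁻¹)ᵀ * ((X t)ᵀ * Y t) * (X t)⁻¹ := by
            rw [← mul_assoc, e3, one_mul]
        _ = ((X t)⁻¹)ᵀ * (Y t)ᵀ * (X t * (X t)⁻¹) := by rw [w1]; simp only [mul_assoc]
        _ = _ := by rw [e2, mul_one]
    have s2 : V t - Y t * (X t)⁻¹ * Z t = ((X t)⁻¹)ᵀ := by
      rw [s1]
      calc V t - ((X t)⁻¹)ᵀ * (Y t)ᵀ * Z t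
          = ((X t)⁻¹)ᵀ * (X t)ᵀ * V t - ((X t)⁻¹)ᵀ * (Y t)ᵀ * Z t := by rw [e3, one_mul]
        _ = ((X t)⁻¹)ᵀ * ((X t)ᵀ * V t - (Y t)ᵀ * Z t) := by noncomm_ring
        _ = _ := by rw [w2, mul_one]
    calc -(-((X t)⁻¹ * (A t * X t - R t * Y t) * (X t)⁻¹) * Z t
            + (X t)⁻¹ * (A t * Z t - R t * V t))
        = (X t)⁻¹ * A t * (X t * (X t)⁻¹) * Z t - (X t)⁻¹ * A t * Z t
            + (X t)⁻¹ * R t * (V t - Y t * (X t)⁻¹ * Z t) := by noncomm_ring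
      _ = _ := by rw [e2, s2]; noncomm_ring
  have hc : ContinuousOn (fun s => (X s)⁻¹ * R s * ((X s)⁻¹)ᵀ) (Set.Icc 0 1) := by
    have hXi : ContinuousOn (fun s => (X s)⁻¹) (Set.Icc 0 1) := fun t ht =>
      (((h.left t).mat_inv (hu t ht)).continuousAt).continuousWithinAt
    have hXt : ContinuousOn (fun s => ((X s)⁻¹)ᵀ) (Set.Icc 0 1) := fun t ht =>
      (((h.left t).mat_inv (hu t ht)).mat_transpose.continuousAt).continuousWithinAt
    exact (hXi.mul hRc.continuousOn).mul hXt
  have hcij : ContinuousOn (fun s => ((X s)⁻¹ * R s * ((X s)⁻¹)ᵀ) i j) (Set.Icc 0 1) :=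
    (LinearMap.toContinuousLinearMap
      (Matrix.entryLinearMap ℝ ℝ i j)).continuous.comp_continuousOn hc
  rw [← Set.uIcc_of_le zero_le_one] at hd hcij
  rw [intervalIntegral.integral_eq_sub_of_hasDerivAt
    (fun t ht => (hd t ht).mat_entry i j) hcij.intervalIntegrable]
  simp [hZ0]

/-- `HamSol` from entrywise derivatives, which do not refer to a matrix norm. -/
theorem hamSol_of_entries
    (hX : ∀ t i j, HasDerivAt (fun s => X s i j) ((A t * X t - R t * Y t) i j) t)
    (hY : ∀ t i j, HasDerivAt (fun s => Y s i j) ((-(Q t * X t) - (A t)ᵀ * Y t) i j) t) :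
    HamSol_s13 A R Q X Y :=
  ⟨fun t => hasDerivAt_of_entries (hX t), fun t => hasDerivAt_of_entries (hY t)⟩

end Hamiltonian

/-- The block columns of the state transition matrix solve the Hamiltonian system. -/
theorem IsSTM.hamSol {n : ℕ} {A R Q : ℝ → Matrix (Fin n) (Fin n) ℝ}
    {Φ : ℝ → ℝ → Matrix (Fin n ⊕ Fin n) (Fin n ⊕ Fin n) ℝ}
    (hΦ : IsSTM (fun t => fromBlocks (A t) (-(R t)) (-(Q t)) (-(A t)ᵀ)) Φ) :
    HamSol_s13 A R Q (fun t => (Φ t 0).toBlocks₁₁) (fun t => (Φ t 0).toBlocks₂₁) ∧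
    HamSol_s13 A R Q (fun t => (Φ t 0).toBlocks₁₂) (fun t => (Φ t 0).toBlocks₂₂) := by
  have key : ∀ t, fromBlocks (A t) (-(R t)) (-(Q t)) (-(A t)ᵀ) * Φ t 0 =
      fromBlocks (A t * (Φ t 0).toBlocks₁₁ - R t * (Φ t 0).toBlocks₂₁)
        (A t * (Φ t 0).toBlocks₁₂ - R t * (Φ t 0).toBlocks₂₂)
        (-(Q t * (Φ t 0).toBlocks₁₁) - (A t)ᵀ * (Φ t 0).toBlocks₂₁)
        (-(Q t * (Φ t 0).toBlocks₁₂) - (A t)ᵀ * (Φ t 0).toBlocks₂₂) := by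
    intro t
    conv_lhs => rw [← fromBlocks_toBlocks (Φ t 0), fromBlocks_multiply]
    simp only [neg_mul, sub_eq_add_neg]
  have hd := hΦ.2 0
  simp only [key] at hd
  exact ⟨hamSol_of_entries (fun t i j => hd t (.inl i) (.inl j)) fun t i j => hd t (.inr i) (.inl j),
    hamSol_of_entries (fun t i j => hd t (.inl i) (.inr j)) fun t i j => hd t (.inr i) (.inr j)⟩

/-! ### The quadratic equation for `G` -/

section Riccati

variable {n : ℕ} {F Sig0 Sig1 S K G : Matrix (Fin n) (Fin n) ℝ}

/-- Completing the square: with `H = S G S`, the equation `F (G Σ₀ G + G) Fᵀ = Σ₁` reads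
`(H + 1/2)² = 1/4 + S F⁻¹ Σ₁ F⁻ᵀ S`. -/
theorem riccati_iff (hF : IsUnit F) (hS : IsUnit S) (hSsq : S * S = Sig0) :
    F * (G * Sig0 * G + G) * Fᵀ = Sig1 ↔
      (S * G * S + (1/2 : ℝ) • (1 : Matrix (Fin n) (Fin n) ℝ)) *
        (S * G * S + (1/2 : ℝ) • (1 : Matrix (Fin n) (Fin n) ℝ)) =
      (1/4 : ℝ) • (1 : Matrix (Fin n) (Fin n) ℝ) + S * F⁻¹ * Sig1 * (F⁻¹)ᵀ * S := by
  have hFd := (Matrix.isUnit_iff_isUnit_det _).1 hF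
  have f1 : F⁻¹ * F = 1 := Matrix.nonsing_inv_mul _ hFd
  have f2 : F * F⁻¹ = 1 := Matrix.mul_nonsing_inv _ hFd
  have f3 : Fᵀ * (F⁻¹)ᵀ = 1 := by rw [← transpose_mul, f1, transpose_one]
  have f4 : (F⁻¹)ᵀ * Fᵀ = 1 := by rw [← transpose_mul, f2, transpose_one]
  have hsq : (S * G * S + (1/2 : ℝ) • (1 : Matrix (Fin n) (Fin n) ℝ)) *
        (S * G * S + (1/2 : ℝ) • (1 : Matrix (Fin n) (Fin n) ℝ)) =
      (1/4 : ℝ) • (1 : Matrix (Fin n) (Fin n) ℝ) + S * (G * Sig0 * G + G) * S := by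
    rw [← hSsq]
    simp only [add_mul, mul_add, smul_mul_assoc, mul_smul_comm, one_mul, mul_one, mul_assoc]
    module
  rw [hsq, add_right_inj]
  constructor
  · rintro rfl
    calc S * (G * Sig0 * G + G) * S
        = S * ((F⁻¹ * F) * (G * Sig0 * G + G) * (Fᵀ * (F⁻¹)ᵀ)) * S := by
          rw [f1, f3, one_mul, mul_one]
      _ = _ := by simp only [mul_assoc]
  · intro h
    have h' : S * (G * Sig0 * G + G) * S = S * (F⁻¹ * Sig1 * (F⁻¹)ᵀ) * S := by
      rw [h]; simp only [mul_assoc]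
    rw [hS.mul_left_cancel (hS.mul_right_cancel h')]
    calc F * (F⁻¹ * Sig1 * (F⁻¹)ᵀ) * Fᵀ = (F * F⁻¹) * Sig1 * ((F⁻¹)ᵀ * Fᵀ) := by
          simp only [mul_assoc]
      _ = Sig1 := by rw [f2, f4, one_mul, mul_one]

end Riccati

/-! ### The steering problem -/

theorem stmt_13 {n p q : ℕ} (hn : 1 ≤ n) (hp : 1 ≤ p) (hq : 1 ≤ q)
    (A Q : ℝ → Matrix (Fin n) (Fin n) ℝ) (B : ℝ → Matrix (Fin n) (Fin p) ℝ)
    (C : ℝ → Matrix (Fin n) (Fin q) ℝ) (D : ℝ → Matrix (Fin q) (Fin q) ℝ)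
    (hA : Continuous A) (hB : Continuous B) (hQ : Continuous Q)
    (hC : Continuous C) (hD : Continuous D)
    (hQpsd : ∀ t, (Q t).PosSemidef) (hDpsd : ∀ t, (D t).PosSemidef)
    (hAsm : ∀ i j, ContDiff ℝ (n - 1 : ℕ) fun t => A t i j)
    (hBsm : ∀ i j, ContDiff ℝ (n : ℕ) fun t => B t i j)
    (Γ : ℕ → ℝ → Matrix (Fin n) (Fin p) ℝ)
    (hΓ : IsCtrbMatSeq A B Γ)
    (hTC : TotallyControllable Γ)
    (Φ : ℝ → ℝ → Matrix (Fin n ⊕ Fin n) (Fin n ⊕ Fin n) ℝ)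
    (hΦ : IsSTM (fun t => fromBlocks (A t) (-(B t * (B t)ᵀ)) (-(Q t)) (-(A t)ᵀ)) Φ)
    (hΦ12 : IsUnit ((Φ 1 0).toBlocks₁₂))
    (hCD : ∀ t ∈ Set.Icc (0:ℝ) 1, C t * D t * (C t)ᵀ = B t * (B t)ᵀ)
    (Sig0 Sig1 : Matrix (Fin n) (Fin n) ℝ) (hSig0 : Sig0.PosDef) (hSig1 : Sig1.PosDef)
    -- `S` is the positive semidefinite square root of `Σ₀` and `K` that of
    -- `(1/4)Iₙ + Σ₀^{1/2} Φ₁₂(1,0)⁻¹ Σ₁ Φ₁₂(1,0)⁻ᵀ Σ₀^{1/2}`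
    (S K : Matrix (Fin n) (Fin n) ℝ)
    (hSpsd : S.PosSemidef) (hSsq : S * S = Sig0)
    (hKpsd : K.PosSemidef)
    (hKsq : K * K = (1/4 : ℝ) • (1 : Matrix (Fin n) (Fin n) ℝ) +
      S * ((Φ 1 0).toBlocks₁₂)⁻¹ * Sig1 * (((Φ 1 0).toBlocks₁₂)⁻¹)ᵀ * S)
    (P₀ : Matrix (Fin n) (Fin n) ℝ)
    (hP₀ : P₀ = -(((Φ 1 0).toBlocks₁₂)⁻¹ * (Φ 1 0).toBlocks₁₁) +
      (1/2 : ℝ) • Sig0⁻¹ - S⁻¹ * K * S⁻¹) :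
    P₀ᵀ = P₀ ∧
    (-(((Φ 1 0).toBlocks₁₂)⁻¹ * (Φ 1 0).toBlocks₁₁) - P₀).PosDef ∧
    steerMap Φ C D Sig0 P₀ = Sig1 ∧
    ∀ P' : Matrix (Fin n) (Fin n) ℝ, P'ᵀ = P' →
      (-(((Φ 1 0).toBlocks₁₂)⁻¹ * (Φ 1 0).toBlocks₁₁) - P').PosDef →
      steerMap Φ C D Sig0 P' = Sig1 → P' = P₀ := by
  set E := (Φ 1 0).toBlocks₁₁ with hE
  set F := (Φ 1 0).toBlocks₁₂ with hF
  set L := -(F⁻¹ * E) with hL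
  have hFd := (Matrix.isUnit_iff_isUnit_det _).1 hΦ12
  have f1 : F⁻¹ * F = 1 := Matrix.nonsing_inv_mul _ hFd
  have f2 : F * F⁻¹ = 1 := Matrix.mul_nonsing_inv _ hFd
  have hFL : E + F * L = 0 := by
    rw [hL, mul_neg, ← mul_assoc, f2, one_mul, add_neg_cancel]
  have hR : ∀ t, (B t * (B t)ᵀ).PosSemidef := fun t => by
    simpa using posSemidef_self_mul_conjTranspose (B t)
  obtain ⟨h₁, h₂⟩ := IsSTM.hamSol (R := fun t => B t * (B t)ᵀ) hΦ
  have z11 : (Φ 0 0).toBlocks₁₁ = 1 := by rw [hΦ.1, ← fromBlocks_one, toBlocks_fromBlocks₁₁]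
  have z12 : (Φ 0 0).toBlocks₁₂ = 0 := by rw [hΦ.1, ← fromBlocks_one, toBlocks_fromBlocks₁₂]
  have z21 : (Φ 0 0).toBlocks₂₁ = 0 := by rw [hΦ.1, ← fromBlocks_one, toBlocks_fromBlocks₂₁]
  have z22 : (Φ 0 0).toBlocks₂₂ = 1 := by rw [hΦ.1, ← fromBlocks_one, toBlocks_fromBlocks₂₂]
  have hLs := h₁.add_mul h₂ L
  have hLt : Lᵀ = L := by
    -- the Wronskian of the solution with `X(0) = 1`, `Y(0) = L`, `X(1) = 0` with itself
    have hW := HamSol_s13.wronskian (fun t => (hR t).1) (fun t => (hQpsd t).1) hLs hLs 1 0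
    simp only [z11, z12, z21, z22, ← hE, ← hF, hFL, zero_mul, mul_zero, add_zero, zero_add,
      transpose_zero, transpose_one, one_mul, mul_one, sub_self] at hW
    exact (sub_eq_zero.1 hW.symm).symm
  have steer : ∀ P : Matrix (Fin n) (Fin n) ℝ, Pᵀ = P → (L - P).PosDef →
      steerMap Φ C D Sig0 P = F * ((L - P) * Sig0 * (L - P) + (L - P)) * Fᵀ := by
    intro P hP hG
    have hs := h₁.add_mul h₂ P
    have hu : ∀ t ∈ Set.Icc (0 : ℝ) 1, IsUnit ((Φ t 0).toBlocks₁₁ + (Φ t 0).toBlocks₁₂ * P) :=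
      fun t ht => HamSol_s13.isUnit_left hR hQpsd hLs hs (by simp [z11, z12]) (by simp [z21, z22])
        hFL (by simp [z11, z12]) (by simp [z21, z22]) hLt hG ht
    have hint : (Matrix.of fun i j => ∫ s in (0:ℝ)..1,
        ((((Φ s 0).toBlocks₁₁ + (Φ s 0).toBlocks₁₂ * P)⁻¹ * (C s * D s * (C s)ᵀ) *
          ((((Φ s 0).toBlocks₁₁ + (Φ s 0).toBlocks₁₂ * P)⁻¹)ᵀ)) i j)) =
        -((E + F * P)⁻¹ * F) := by
      ext i j
      rw [of_apply, neg_apply, ← HamSol_s13.integral_eq (R := fun t => B t * (B t)ᵀ) (fun t => (hR t).1)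
        (fun t => (hQpsd t).1) (hB.matrix_mul hB.matrix_transpose) hs h₂ (by simp [z11, z12]) (P := P)
        (by simp [z21, z22]) z12 z22 hP hu i j]
      refine intervalIntegral.integral_congr fun s hs => ?_
      rw [Set.uIcc_of_le zero_le_one] at hs
      simp only [hCD s hs]
    have hX : E + F * P = -(F * (L - P)) := by
      rw [mul_sub, eq_neg_of_add_eq_zero_right hFL]
      abel
    have hXd := (Matrix.isUnit_iff_isUnit_det _).1 (hu 1 (by simp))
    have x1 : (E + F * P) * (E + F * P)⁻¹ = 1 := Matrix.mul_nonsing_inv _ hXd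
    have hGt : (L - P)ᵀ = L - P := hG.1
    unfold steerMap
    rw [hint, ← hE, ← hF]
    calc (E + F * P) * (Sig0 + -((E + F * P)⁻¹ * F)) * (E + F * P)ᵀ
        = (E + F * P) * Sig0 * (E + F * P)ᵀ
            - ((E + F * P) * (E + F * P)⁻¹) * F * (E + F * P)ᵀ := by noncomm_ring
      _ = _ := by
        rw [x1, hX, transpose_neg, transpose_mul, hGt]
        noncomm_ring
  have hSt : Sᵀ = S := hSpsd.1
  have hS : IsUnit S := by
    have := hSig0.isUnit
    rw [← hSsq] at this
    exact isUnit_of_mul_isUnit_left this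
  have hSd := (Matrix.isUnit_iff_isUnit_det _).1 hS
  have s1 : S⁻¹ * S = 1 := Matrix.nonsing_inv_mul _ hSd
  have s2 : S * S⁻¹ = 1 := Matrix.mul_nonsing_inv _ hSd
  have hSit : (S⁻¹)ᵀ = S⁻¹ := by rw [transpose_nonsing_inv, hSt]
  have hSi : IsUnit S⁻¹ := (Matrix.isUnit_nonsing_inv_iff).2 hS
  have hG₀ : L - P₀ = S⁻¹ * (K - (1/2 : ℝ) • (1 : Matrix (Fin n) (Fin n) ℝ)) * S⁻¹ := by
    rw [hP₀, ← hSsq, Matrix.mul_inv_rev, mul_sub, sub_mul, mul_smul_comm, smul_mul_assoc, mul_one]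
    abel
  have hSGS : S * (L - P₀) * S + (1/2 : ℝ) • (1 : Matrix (Fin n) (Fin n) ℝ) = K := by
    rw [hG₀]
    calc S * (S⁻¹ * (K - (1/2 : ℝ) • (1 : Matrix (Fin n) (Fin n) ℝ)) * S⁻¹) * S
          + (1/2 : ℝ) • (1 : Matrix (Fin n) (Fin n) ℝ)
        = (S * S⁻¹) * (K - (1/2 : ℝ) • (1 : Matrix (Fin n) (Fin n) ℝ)) * (S⁻¹ * S)
          + (1/2 : ℝ) • (1 : Matrix (Fin n) (Fin n) ℝ) := by simp only [mul_assoc]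
      _ = K := by rw [s1, s2, one_mul, mul_one, sub_add_cancel]
  have hT : (S * F⁻¹ * Sig1 * (F⁻¹)ᵀ * S).PosDef := by
    have hu : IsUnit (S * F⁻¹) := hS.mul ((Matrix.isUnit_nonsing_inv_iff).2 hΦ12)
    have := hSig1.mul_mul_conjTranspose_same (B := S * F⁻¹)
      (Matrix.vecMul_injective_iff_isUnit.2 hu)
    rwa [conjTranspose_eq_transpose_of_trivial, transpose_mul, hSt, ← mul_assoc] at this
  have hGpd : (L - P₀).PosDef := by
    have := (posDef_sub_half hKpsd hT hKsq).mul_mul_conjTranspose_same (B := S⁻¹)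
      (Matrix.vecMul_injective_iff_isUnit.2 hSi)
    rwa [conjTranspose_eq_transpose_of_trivial, hSit, ← hG₀] at this
  have hP₀t : P₀ᵀ = P₀ := by
    have h : (L - P₀)ᵀ = L - P₀ := hGpd.1
    rw [transpose_sub, hLt] at h
    exact sub_right_injective h
  refine ⟨hP₀t, hGpd, ?_, fun P' hP't hG' hst => ?_⟩
  · rw [steer P₀ hP₀t hGpd, riccati_iff hΦ12 hS hSsq, hSGS, hKsq]
  · rw [steer P' hP't hG', riccati_iff hΦ12 hS hSsq, ← hKsq] at hst
    have hpsd : (S * (L - P') * S + (1/2 : ℝ) • (1 : Matrix (Fin n) (Fin n) ℝ)).PosSemidef := by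
      have h1 := hG'.posSemidef.mul_mul_conjTranspose_same S
      rw [conjTranspose_eq_transpose_of_trivial, hSt] at h1
      exact h1.add (PosSemidef.one.smul (by norm_num))
    have h := (posSemidef_eq_of_mul_self_eq hpsd hKpsd hst).trans hSGS.symm
    exact sub_right_injective (hS.mul_left_cancel (hS.mul_right_cancel (add_right_cancel h)))
end
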